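/- arXiv:1205.6727 — 12 statements merged into one kernel-verified Lean document; each statement's English description precedes it below -/
import Mathlib

section
/- The ideal HOTS map f is continuously differentiable on ℝⁿ and its Jacobian matrix at any point p ∈ ℝⁿ is the matrix P(p) with entries P(p)_{ij} = (1/2)·(A_{ji} e^{p_j} / Σ_{l} A_{li} e^{p_l} + A_{ij} e^{−p_j} / Σ_{l} A_{il} e^{−p_l}); moreover P(p) is a row-stochastic nonnegative matrix (each row sums to 1). -/
open BigOperators Matrix

/-- The ideal HOTS map. -/
noncomputable def hotsMap {n : ℕ} (A : Matrix (Fin n) (Fin n) ℝ) (x : Fin n → ℝ) : Fin n → ℝ :=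
  fun i => (1 / 2) * (Real.log (∑ j, A j i * Real.exp (x j))
    - Real.log (∑ j, A i j * Real.exp (-(x j))))

/-- The Jacobian matrix `P(p)` of the ideal HOTS map at `p`. -/
noncomputable def hotsJac {n : ℕ} (A : Matrix (Fin n) (Fin n) ℝ) (p : Fin n → ℝ) :
    Matrix (Fin n) (Fin n) ℝ :=
  fun i j => (1 / 2) * (A j i * Real.exp (p j) / (∑ l, A l i * Real.exp (p l))
    + A i j * Real.exp (-(p j)) / (∑ l, A i l * Real.exp (-(p l))))

/-- The ideal HOTS map is continuously differentiable, its Jacobian at `p` is `P(p)`,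
and `P(p)` is a row-stochastic nonnegative matrix. -/
theorem hotsMap_contDiff_jacobian {n : ℕ} (A : Matrix (Fin n) (Fin n) ℝ)
    (hA : ∀ i j, 0 ≤ A i j)
    (hrow : ∀ i, ∃ j, 0 < A i j) (hcol : ∀ j, ∃ i, 0 < A i j) :
    ContDiff ℝ 1 (hotsMap A) ∧
    (∀ p : Fin n → ℝ, ∀ f' : (Fin n → ℝ) →L[ℝ] (Fin n → ℝ),
      HasFDerivAt (hotsMap A) f' p → ∀ x, f' x = (hotsJac A p).mulVec x) ∧
    (∀ p : Fin n → ℝ, DifferentiableAt ℝ (hotsMap A) p) ∧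
    (∀ p : Fin n → ℝ, (∀ i j, 0 ≤ hotsJac A p i j) ∧ ∀ i, ∑ j, hotsJac A p i j = 1) := by
  have hc : ∀ (x : Fin n → ℝ) i, 0 < ∑ j, A j i * Real.exp (x j) := by
    intro x i
    obtain ⟨k, hk⟩ := hcol i
    exact Finset.sum_pos' (fun j _ => mul_nonneg (hA j i) (Real.exp_pos _).le)
      ⟨k, Finset.mem_univ k, mul_pos hk (Real.exp_pos _)⟩
  have hr : ∀ (x : Fin n → ℝ) i, 0 < ∑ j, A i j * Real.exp (-(x j)) := by
    intro x i
    obtain ⟨k, hk⟩ := hrow i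
    exact Finset.sum_pos' (fun j _ => mul_nonneg (hA i j) (Real.exp_pos _).le)
      ⟨k, Finset.mem_univ k, mul_pos hk (Real.exp_pos _)⟩
  have hcd : ContDiff ℝ 1 (hotsMap A) := by
    rw [contDiff_pi]
    intro i
    unfold hotsMap
    refine contDiff_const.mul (ContDiff.sub (ContDiff.log ?_ fun x => (hc x i).ne')
      (ContDiff.log ?_ fun x => (hr x i).ne'))
    · fun_prop
    · fun_prop
  refine ⟨hcd, ?_, fun p => (hcd.differentiable one_ne_zero) p, ?_⟩
  · intro p f' hf x
    funext i
    have hl : ∀ j, HasDerivAt (fun t : ℝ => p j + t * x j) (x j) 0 := by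
      intro j
      simpa using ((hasDerivAt_id (0 : ℝ)).mul_const (x j)).const_add (p j)
    have hline : HasDerivAt (fun t : ℝ => (fun j => p j + t * x j : Fin n → ℝ)) x 0 :=
      hasDerivAt_pi.2 hl
    have hp : (fun j => p j + (0 : ℝ) * x j : Fin n → ℝ) = p := by simp
    have h1 : HasDerivAt (fun t : ℝ => hotsMap A (fun j => p j + t * x j)) (f' x) 0 := by
      refine HasFDerivAt.comp_hasDerivAt (0 : ℝ) (l := hotsMap A) ?_ hline
      rw [hp]; exact hf
    have h2 := hasDerivAt_pi.1 h1 i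
    have e1 : HasDerivAt (fun t : ℝ => ∑ j, A j i * Real.exp (p j + t * x j))
        (∑ j, A j i * (Real.exp (p j + 0 * x j) * x j)) 0 :=
      HasDerivAt.fun_sum fun j _ => ((hl j).exp).const_mul (A j i)
    have e2 : HasDerivAt (fun t : ℝ => ∑ j, A i j * Real.exp (-(p j + t * x j)))
        (∑ j, A i j * (Real.exp (-(p j + 0 * x j)) * -x j)) 0 :=
      HasDerivAt.fun_sum fun j _ => ((hl j).fun_neg.exp).const_mul (A i j)
    have h3 := ((e1.log (hc (fun j => p j + 0 * x j) i).ne').fun_sub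
      (e2.log (hr (fun j => p j + 0 * x j) i).ne')).const_mul (1 / 2 : ℝ)
    rw [h2.unique h3]
    simp only [zero_mul, add_zero, Matrix.mulVec, dotProduct, hotsJac, Finset.sum_div]
    rw [← Finset.sum_sub_distrib, Finset.mul_sum]
    refine Finset.sum_congr rfl fun j _ => ?_
    ring
  · intro p
    refine ⟨fun i j => ?_, fun i => ?_⟩
    · unfold hotsJac
      have := (hc p i).le
      have := (hr p i).le
      have := hA i j
      have := hA j i
      positivity
    · unfold hotsJac
      rw [← Finset.mul_sum, Finset.sum_add_distrib, ← Finset.sum_div, ← Finset.sum_div,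
        div_self (hc p i).ne', div_self (hr p i).ne']
      norm_num
end

section
/- Let α, β ≥ 0 with α + β = 1 and let g : (0,∞)ⁿ → (0,∞)ⁿ be defined by g_i(x) = (Σ_j A_{ji} x_j)^α / (Σ_k A_{ik} x_k^{−1})^β. If A is irreducible (for all i, j there exists k ≥ 1 with (A^k)_{ij} > 0) and αA + βAᵀ is primitive (some power of αA + βAᵀ has all entries positive), then for any norm ‖·‖ on ℝⁿ and any initial point d⁰ with all entries positive, the sequence d^{k+1} = g(d^k)/‖g(d^k)‖ converges to a vector d* with all entries positive satisfying g(d*) = ‖g(d*)‖·d*, and the convergence is linear: limsup_{k→∞} ‖d^k − d*‖^{1/k} < 1. -/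
open BigOperators Filter Matrix

/-- The deformed HOTS map `g_i(x) = (Σ_j A_{ji} x_j)^α / (Σ_k A_{ik} x_k⁻¹)^β`. -/
noncomputable def deformedHots {n : ℕ} (A : Matrix (Fin n) (Fin n) ℝ) (α β : ℝ)
    (x : Fin n → ℝ) : Fin n → ℝ :=
  fun i => (∑ j, A j i * x j) ^ α / (∑ k, A i k * (x k)⁻¹) ^ β

namespace HotsAux

/-- weighted log-sum-exp -/
noncomputable def L {n : ℕ} (a u : Fin n → ℝ) : ℝ := Real.log (∑ j, a j * Real.exp (u j))

/-- the map in logarithmic coordinates -/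
noncomputable def G {n : ℕ} (A : Matrix (Fin n) (Fin n) ℝ) (α β : ℝ) (u : Fin n → ℝ) :
    Fin n → ℝ :=
  fun i => α * L (fun j => A j i) u - β * L (fun k => A i k) (-u)

lemma sum_pos' {n : ℕ} {a : Fin n → ℝ} (ha : ∀ j, 0 ≤ a j) (hp : ∃ j, 0 < a j) (u : Fin n → ℝ) :
    0 < ∑ j, a j * Real.exp (u j) := by
  obtain ⟨j, hj⟩ := hp
  exact Finset.sum_pos' (fun i _ => mul_nonneg (ha i) (Real.exp_pos _).le)
    ⟨j, Finset.mem_univ _, mul_pos hj (Real.exp_pos _)⟩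

lemma L_jensen {n : ℕ} {a : Fin n → ℝ} (ha : ∀ j, 0 ≤ a j) (hp : ∃ j, 0 < a j)
    (u v : Fin n → ℝ) (R S m : ℝ) (hS : ∑ j, a j ≤ S) (hS0 : 0 < S)
    (hR : ∀ i j, v i - v j ≤ R) (hm : ∀ j, m ≤ u j - v j) :
    (Real.exp (-R) / S) * ∑ j, a j * (u j - v j - m) ≤ L a u - L a v - m := by
  have hu := sum_pos' ha hp u
  have hv := sum_pos' ha hp v
  set V := ∑ j, a j * Real.exp (v j) with hV
  set w : ℝ := ∑ j, (a j * Real.exp (v j) / V) * (u j - v j) with hw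
  have hp1 : ∑ j, (a j * Real.exp (v j) / V) = 1 := by
    rw [← Finset.sum_div]; exact div_self hv.ne'
  have h1 : w ≤ L a u - L a v := by
    have : Real.exp w * V ≤ ∑ j, a j * Real.exp (u j) := by
      have e : Real.exp w * V = ∑ j, Real.exp w * (a j * Real.exp (v j)) * (1 + (u j - v j - w)) := by
        have e1 : ∀ j, Real.exp w * (a j * Real.exp (v j)) * (1 + (u j - v j - w))
            = Real.exp w * V * ((a j * Real.exp (v j) / V) * (u j - v j))
              + Real.exp w * V * (1 - w) * (a j * Real.exp (v j) / V) := by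
          intro j; field_simp; ring
        rw [Finset.sum_congr rfl (fun j _ => e1 j), Finset.sum_add_distrib, ← Finset.mul_sum,
          ← Finset.mul_sum, hp1, ← hw]; ring
      rw [e]
      refine Finset.sum_le_sum fun j _ => ?_
      have h := Real.add_one_le_exp (u j - v j - w)
      have e2 : Real.exp (u j) = Real.exp w * Real.exp (v j) * Real.exp (u j - v j - w) := by
        rw [← Real.exp_add, ← Real.exp_add]; congr 1; ring
      rw [e2]
      have h0 : 0 ≤ Real.exp w * (a j * Real.exp (v j)) :=
        mul_nonneg (Real.exp_pos _).le (mul_nonneg (ha j) (Real.exp_pos _).le)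
      nlinarith
    have h2 := Real.log_le_log (mul_pos (Real.exp_pos w) hv) this
    rw [Real.log_mul (Real.exp_pos w).ne' hv.ne', Real.log_exp] at h2
    unfold L; linarith
  have h2 : w - m = ∑ j, (a j * Real.exp (v j) / V) * (u j - v j - m) := by
    have : ∀ j, (a j * Real.exp (v j) / V) * (u j - v j - m) =
      (a j * Real.exp (v j) / V) * (u j - v j) - (a j * Real.exp (v j) / V) * m := fun j => by ring
    rw [Finset.sum_congr rfl (fun j _ => this j), Finset.sum_sub_distrib, ← Finset.sum_mul, hp1]
    ring
  have h3 : (Real.exp (-R) / S) * ∑ j, a j * (u j - v j - m) ≤ w - m := by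
    rw [h2, Finset.mul_sum]
    refine Finset.sum_le_sum fun j _ => ?_
    have h4 : Real.exp (-R) / S ≤ Real.exp (v j) / V := by
      rw [div_le_div_iff₀ hS0 hv]
      calc Real.exp (-R) * V = ∑ i, a i * Real.exp (v i - R) := by
            rw [hV, Finset.mul_sum]
            refine Finset.sum_congr rfl fun i _ => ?_
            rw [sub_eq_add_neg, Real.exp_add]; ring
        _ ≤ ∑ i, a i * Real.exp (v j) := by
            refine Finset.sum_le_sum fun i _ => mul_le_mul_of_nonneg_left ?_ (ha i)
            exact Real.exp_le_exp.2 (by linarith [hR i j])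
        _ = Real.exp (v j) * ∑ i, a i := by rw [← Finset.sum_mul]; ring
        _ ≤ _ := mul_le_mul_of_nonneg_left hS (Real.exp_pos _).le
    calc _ = (Real.exp (-R) / S) * (a j * (u j - v j - m)) := by ring
      _ ≤ (Real.exp (v j) / V) * (a j * (u j - v j - m)) :=
          mul_le_mul_of_nonneg_right h4 (mul_nonneg (ha j) (by linarith [hm j]))
      _ = _ := by ring
  linarith

lemma L_add {n : ℕ} {a : Fin n → ℝ} (ha : ∀ j, 0 ≤ a j) (hp : ∃ j, 0 < a j)
    (u : Fin n → ℝ) (c : ℝ) : L a (fun j => u j + c) = L a u + c := by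
  have hu := sum_pos' ha hp u
  unfold L
  have : ∑ j, a j * Real.exp (u j + c) = (∑ j, a j * Real.exp (u j)) * Real.exp c := by
    rw [Finset.sum_mul]
    exact Finset.sum_congr rfl fun j _ => by rw [Real.exp_add]; ring
  rw [this, Real.log_mul hu.ne' (Real.exp_pos c).ne', Real.log_exp]

lemma L_lower {n : ℕ} {a : Fin n → ℝ} (ha : ∀ j, 0 ≤ a j) (u : Fin n → ℝ) (j : Fin n)
    (hj : 0 < a j) : Real.log (a j) + u j ≤ L a u := by
  have : Real.log (a j * Real.exp (u j)) = Real.log (a j) + u j := by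
    rw [Real.log_mul hj.ne' (Real.exp_pos _).ne', Real.log_exp]
  rw [← this]
  refine Real.log_le_log (mul_pos hj (Real.exp_pos _)) ?_
  exact Finset.single_le_sum (f := fun j => a j * Real.exp (u j))
    (fun i _ => mul_nonneg (ha i) (Real.exp_pos _).le) (Finset.mem_univ j)

lemma L_upper {n : ℕ} {a : Fin n → ℝ} (ha : ∀ j, 0 ≤ a j) (hp : ∃ j, 0 < a j)
    (u : Fin n → ℝ) (M : ℝ) (hM : ∀ j, u j ≤ M) : L a u ≤ Real.log (∑ j, a j) + M := by
  have h0 : 0 < ∑ j, a j := by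
    obtain ⟨j, hj⟩ := hp
    exact Finset.sum_pos' (fun i _ => ha i) ⟨j, Finset.mem_univ _, hj⟩
  have : Real.log ((∑ j, a j) * Real.exp M) = Real.log (∑ j, a j) + M := by
    rw [Real.log_mul h0.ne' (Real.exp_pos _).ne', Real.log_exp]
  rw [← this]
  refine Real.log_le_log (sum_pos' ha hp u) ?_
  rw [Finset.sum_mul]
  exact Finset.sum_le_sum fun i _ => mul_le_mul_of_nonneg_left (Real.exp_le_exp.2 (hM i)) (ha i)

lemma L_cont {n : ℕ} {a : Fin n → ℝ} (ha : ∀ j, 0 ≤ a j) (hp : ∃ j, 0 < a j) :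
    Continuous (L a) := by
  unfold L
  exact Continuous.log (by fun_prop) (fun u => (sum_pos' ha hp u).ne')

lemma exists_S {n : ℕ} (A : Matrix (Fin n) (Fin n) ℝ) (hA : ∀ i j, 0 ≤ A i j) :
    ∃ S : ℝ, 0 < S ∧ (∀ i, ∑ j, A i j ≤ S) ∧ (∀ i, ∑ j, A j i ≤ S) := by
  refine ⟨1 + ∑ i, ∑ j, A i j, ?_, ?_, ?_⟩
  · have : 0 ≤ ∑ i, ∑ j, A i j := Finset.sum_nonneg fun i _ => Finset.sum_nonneg fun j _ => hA i j
    linarith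
  · intro i
    have := Finset.single_le_sum (f := fun i => ∑ j, A i j)
      (fun i _ => Finset.sum_nonneg fun j _ => hA i j) (Finset.mem_univ i)
    linarith
  · intro i
    have := Finset.single_le_sum (f := fun i => ∑ j, A j i)
      (fun i _ => Finset.sum_nonneg fun j _ => hA j i) (Finset.mem_univ i)
    have e : ∑ i, ∑ j, A i j = ∑ i, ∑ j, A j i := Finset.sum_comm
    linarith

section
variable {n : ℕ} {A : Matrix (Fin n) (Fin n) ℝ} {α β : ℝ}

lemma G_key (hA : ∀ i j, 0 ≤ A i j)
    (hrow : ∀ i, ∃ j, 0 < A i j) (hcol : ∀ j, ∃ i, 0 < A i j)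
    (hα : 0 ≤ α) (hβ : 0 ≤ β) (hαβ : α + β = 1) {S R : ℝ} (hS0 : 0 < S)
    (hS1 : ∀ i, ∑ j, A i j ≤ S) (hS2 : ∀ i, ∑ j, A j i ≤ S)
    (u v : Fin n → ℝ) (m : ℝ)
    (hRu : ∀ i j, u i - u j ≤ R) (hRv : ∀ i j, v i - v j ≤ R) (hm : ∀ j, m ≤ u j - v j)
    (i : Fin n) :
    (Real.exp (-R) / S) * ((α • Aᵀ + β • A) *ᵥ (fun j => u j - v j - m)) i
      ≤ G A α β u i - G A α β v i - m := by
  have h1 := L_jensen (a := fun j => A j i) (fun j => hA j i) (hcol i) u v R S m (hS2 i) hS0 hRv hm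
  have h2 := L_jensen (a := fun j => A i j) (fun j => hA i j) (hrow i) (-v) (-u) R S m (hS1 i) hS0
    (fun i j => by have := hRu j i; simp only [Pi.neg_apply]; linarith)
    (fun j => by have := hm j; simp only [Pi.neg_apply]; linarith)
  have e : ((α • Aᵀ + β • A) *ᵥ (fun j => u j - v j - m)) i
      = α * ∑ j, A j i * (u j - v j - m) + β * ∑ j, A i j * ((-v) j - (-u) j - m) := by
    simp only [Matrix.mulVec, dotProduct, Matrix.add_apply, Matrix.smul_apply,
      Matrix.transpose_apply, smul_eq_mul, Finset.mul_sum, ← Finset.sum_add_distrib, Pi.neg_apply]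
    exact Finset.sum_congr rfl fun j _ => by ring
  rw [e]
  have h1' := mul_le_mul_of_nonneg_left h1 hα
  have h2' := mul_le_mul_of_nonneg_left h2 hβ
  have e2 : m = α * m + β * m := by rw [← add_mul, hαβ, one_mul]
  simp only [G]
  nlinarith

lemma G_mono (hA : ∀ i j, 0 ≤ A i j)
    (hrow : ∀ i, ∃ j, 0 < A i j) (hcol : ∀ j, ∃ i, 0 < A i j)
    (hα : 0 ≤ α) (hβ : 0 ≤ β) (hαβ : α + β = 1)
    (u v : Fin n → ℝ) (m : ℝ) (hm : ∀ j, m ≤ u j - v j) (i : Fin n) :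
    m ≤ G A α β u i - G A α β v i := by
  obtain ⟨S, hS0, hS1, hS2⟩ := exists_S A hA
  have hb : ∀ u : Fin n → ℝ, ∃ R, ∀ i j, u i - u j ≤ R := by
    intro u
    refine ⟨2 * ‖u‖, fun i j => ?_⟩
    have h1 := abs_le.1 (norm_le_pi_norm u i)
    have h2 := abs_le.1 (norm_le_pi_norm u j)
    linarith [h1.2, h2.1]
  obtain ⟨R1, h1⟩ := hb u
  obtain ⟨R2, h2⟩ := hb v
  have := G_key hA hrow hcol hα hβ hαβ hS0 hS1 hS2 (R := max R1 R2) u v m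
    (fun i j => (h1 i j).trans (le_max_left _ _)) (fun i j => (h2 i j).trans (le_max_right _ _)) hm i
  have h0 : 0 ≤ ((α • Aᵀ + β • A) *ᵥ (fun j => u j - v j - m)) i := by
    simp only [Matrix.mulVec, dotProduct, Matrix.add_apply, Matrix.smul_apply,
      Matrix.transpose_apply, smul_eq_mul]
    refine Finset.sum_nonneg fun j _ => mul_nonneg ?_ (by linarith [hm j])
    exact add_nonneg (mul_nonneg hα (hA _ _)) (mul_nonneg hβ (hA _ _))
  have := mul_nonneg (div_pos (Real.exp_pos (-max R1 R2)) hS0).le h0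
  linarith

lemma G_add (hA : ∀ i j, 0 ≤ A i j)
    (hrow : ∀ i, ∃ j, 0 < A i j) (hcol : ∀ j, ∃ i, 0 < A i j) (hαβ : α + β = 1)
    (u : Fin n → ℝ) (c : ℝ) :
    G A α β (fun j => u j + c) = fun j => G A α β u j + c := by
  funext i
  have h1 := L_add (a := fun j => A j i) (fun j => hA j i) (hcol i) u c
  have h2 := L_add (a := fun j => A i j) (fun j => hA i j) (hrow i) (-u) (-c)
  have e : (-(fun j => u j + c) : Fin n → ℝ) = fun j => (-u) j + -c := by
    funext j; simp only [Pi.neg_apply]; ring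
  simp only [G]
  rw [h1, e, h2]
  linear_combination c * hαβ

lemma G_cont (hA : ∀ i j, 0 ≤ A i j)
    (hrow : ∀ i, ∃ j, 0 < A i j) (hcol : ∀ j, ∃ i, 0 < A i j) : Continuous (G A α β) := by
  unfold G
  refine continuous_pi fun i => ?_
  have h1 := L_cont (a := fun j => A j i) (fun j => hA j i) (hcol i)
  have h2 := (L_cont (a := fun j => A i j) (fun j => hA i j) (hrow i)).comp
    (continuous_neg (G := Fin n → ℝ))
  exact (continuous_const.mul h1).sub (continuous_const.mul h2)

lemma g_exp (hA : ∀ i j, 0 ≤ A i j)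
    (hrow : ∀ i, ∃ j, 0 < A i j) (hcol : ∀ j, ∃ i, 0 < A i j) (u : Fin n → ℝ) :
    deformedHots A α β (fun i => Real.exp (u i)) = fun i => Real.exp (G A α β u i) := by
  funext i
  have h1 := sum_pos' (a := fun j => A j i) (fun j => hA j i) (hcol i) u
  have h2 := sum_pos' (a := fun j => A i j) (fun j => hA i j) (hrow i) (-u)
  simp only [Pi.neg_apply] at h2
  simp only [deformedHots, G, L, Pi.neg_apply]
  simp only [← Real.exp_neg]
  rw [Real.rpow_def_of_pos h1, Real.rpow_def_of_pos h2, ← Real.exp_sub]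
  congr 1; ring

lemma G_dual (u : Fin n → ℝ) : G Aᵀ β α (-u) = -G A α β u := by
  funext i
  simp only [G, Matrix.transpose_apply, neg_neg, Pi.neg_apply]
  ring

lemma path_bdd (hA : ∀ i j, 0 ≤ A i j)
    (hirr : ∀ i j, ∃ k : ℕ, 1 ≤ k ∧ 0 < (A ^ k) i j) (hα : 0 < α) (K : ℝ) :
    ∃ R : ℝ, ∀ t : Fin n → ℝ, (∀ i, 0 ≤ t i) → (∃ i, t i = 0) →
      (∀ i j, 0 < A j i → α * t j ≤ t i + K) → ∀ i, t i ≤ R := by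
  choose k hk1 hk using hirr
  let f : ℝ → ℝ := fun T => (T + |K|) / α
  have hf : Monotone f := fun a b h => by
    simp only [f]; gcongr
  have hf0 : ∀ s, 0 ≤ f^[s] 0 := by
    intro s
    induction s with
    | zero => simp
    | succ s ih => rw [Function.iterate_succ_apply']; simp only [f] at ih ⊢; positivity
  refine ⟨∑ i, ∑ j, f^[k i j] 0, fun t ht0 ⟨i0, hi0⟩ hedge j => ?_⟩
  have hAk : ∀ s i j, 0 ≤ (A ^ s) i j := by
    intro s
    induction s with
    | zero => intro i j; rw [pow_zero, Matrix.one_apply]; split_ifs <;> norm_num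
    | succ s ih =>
      intro i j
      rw [pow_succ, Matrix.mul_apply]
      exact Finset.sum_nonneg fun l _ => mul_nonneg (ih _ _) (hA _ _)
  have main : ∀ s i j, 0 < (A ^ s) j i → t j ≤ f^[s] (t i) := by
    intro s
    induction s with
    | zero =>
      intro i j h
      rw [pow_zero, Matrix.one_apply] at h
      split_ifs at h with h'
      · subst h'; simp
      · exact absurd h (lt_irrefl _)
    | succ s ih =>
      intro i j h
      rw [pow_succ', Matrix.mul_apply] at h
      obtain ⟨l, -, hl⟩ := Finset.exists_lt_of_sum_lt (f := fun _ => (0:ℝ)) (by simpa using h)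
      have hjl : 0 < A j l := lt_of_le_of_ne (hA _ _) (by rintro h; rw [← h] at hl; simp at hl)
      have hli : 0 < (A ^ s) l i := lt_of_le_of_ne (hAk _ _ _) (by
        rintro h; rw [← h] at hl; simp at hl)
      have h1 := hedge l j hjl
      rw [Function.iterate_succ_apply']
      refine le_trans ?_ (hf (ih i l hli))
      simp only [f]
      rw [le_div_iff₀ hα]
      linarith [le_abs_self K]
  have h1 := main _ i0 j (hk j i0)
  rw [hi0] at h1
  refine h1.trans ?_
  refine le_trans ?_ (Finset.single_le_sum (f := fun i => ∑ j, f^[k i j] 0)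
    (fun i _ => Finset.sum_nonneg fun l _ => hf0 _) (Finset.mem_univ j))
  exact (Finset.single_le_sum (f := fun l => f^[k j l] 0) (fun l _ => hf0 _) (Finset.mem_univ i0))

lemma orbit_bdd_pos (hA : ∀ i j, 0 ≤ A i j)
    (hrow : ∀ i, ∃ j, 0 < A i j) (hcol : ∀ j, ∃ i, 0 < A i j)
    (hα : 0 < α) (hβ : 0 ≤ β) (hαβ : α + β = 1)
    (hirr : ∀ i j, ∃ k : ℕ, 1 ≤ k ∧ 0 < (A ^ k) i j)
    (v : ℕ → Fin n → ℝ) (hv : ∀ k, v (k + 1) = G A α β (v k)) :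
    ∃ R : ℝ, ∀ k i j, v k i - v k j ≤ R := by
  set c : ℝ := ‖v 1 - v 0‖ with hc
  have hsup : ∀ k i, v (k + 1) i ≤ v k i + c := by
    intro k
    induction k with
    | zero =>
      intro i
      have := (abs_le.1 (norm_le_pi_norm (v 1 - v 0) i)).2
      simp only [Pi.sub_apply] at this
      simp only [zero_add]
      linarith
    | succ k ih =>
      intro i
      have := G_mono hA hrow hcol hα.le hβ hαβ (v k) (v (k + 1)) (-c)
        (fun j => by linarith [ih j]) i
      rw [← hv, ← hv] at this
      linarith
  -- constants
  obtain ⟨K, hK⟩ : ∃ K : ℝ, ∀ i j, c - α * Real.log (A j i) + β * Real.log (∑ l, A i l) ≤ K := by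
    refine ⟨∑ i, ∑ j, |c - α * Real.log (A j i) + β * Real.log (∑ l, A i l)|, fun i j => ?_⟩
    refine (le_abs_self _).trans ?_
    refine le_trans ?_ (Finset.single_le_sum
      (f := fun i => ∑ j, |c - α * Real.log (A j i) + β * Real.log (∑ l, A i l)|)
      (fun i _ => Finset.sum_nonneg fun l _ => abs_nonneg _) (Finset.mem_univ i))
    exact (Finset.single_le_sum
      (f := fun j => |c - α * Real.log (A j i) + β * Real.log (∑ l, A i l)|)
      (fun l _ => abs_nonneg _) (Finset.mem_univ j))
  obtain ⟨R, hR⟩ := path_bdd hA hirr hα K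
  refine ⟨R, fun k i j => ?_⟩
  have : Nonempty (Fin n) := ⟨i⟩
  obtain ⟨i0, hi0⟩ := Finite.exists_min (v k)
  have := hR (fun i => v k i - v k i0) (fun i => by simpa using hi0 i) ⟨i0, by simp⟩ ?_ i
  · linarith [hi0 j]
  · intro i j hji
    have h1 := hsup k i
    rw [hv] at h1
    have h2 := L_lower (a := fun j => A j i) (fun j => hA j i) (v k) j hji
    have h3 := L_upper (a := fun j => A i j) (fun j => hA i j) (hrow i) (-(v k)) (- v k i0)
      (fun j => by simpa using hi0 j)
    have h2' := mul_le_mul_of_nonneg_left h2 hα.le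
    have h3' := mul_le_mul_of_nonneg_left h3 hβ
    have h4 := hK i j
    simp only [G] at h1
    have e : v k i0 = α * v k i0 + β * v k i0 := by rw [← add_mul, hαβ, one_mul]
    nlinarith

lemma orbit_bdd (hA : ∀ i j, 0 ≤ A i j)
    (hrow : ∀ i, ∃ j, 0 < A i j) (hcol : ∀ j, ∃ i, 0 < A i j)
    (hα : 0 ≤ α) (hβ : 0 ≤ β) (hαβ : α + β = 1)
    (hirr : ∀ i j, ∃ k : ℕ, 1 ≤ k ∧ 0 < (A ^ k) i j)
    (v : ℕ → Fin n → ℝ) (hv : ∀ k, v (k + 1) = G A α β (v k)) :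
    ∃ R : ℝ, ∀ k i j, v k i - v k j ≤ R := by
  rcases hα.lt_or_eq with h | h
  · exact orbit_bdd_pos hA hrow hcol h hβ hαβ hirr v hv
  · have hβ' : 0 < β := by linarith
    obtain ⟨R, hR⟩ := orbit_bdd_pos (A := Aᵀ) (α := β) (β := α) (fun i j => hA j i)
      hcol hrow hβ' hα (by linarith)
      (fun i j => by
        obtain ⟨k, h1, h2⟩ := hirr j i
        exact ⟨k, h1, by rw [← Matrix.transpose_pow]; exact h2⟩)
      (fun k => - v k) (fun k => by rw [G_dual, hv])
    refine ⟨R, fun k i j => ?_⟩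
    have := hR k j i
    simp only [Pi.neg_apply] at this
    linarith

lemma mulVec_mono {B : Matrix (Fin n) (Fin n) ℝ} (hB : ∀ i j, 0 ≤ B i j) {x y : Fin n → ℝ}
    (h : ∀ i, x i ≤ y i) (i : Fin n) : (B *ᵥ x) i ≤ (B *ᵥ y) i := by
  simp only [Matrix.mulVec, dotProduct]
  exact Finset.sum_le_sum fun j _ => mul_le_mul_of_nonneg_left (h j) (hB i j)

lemma orbit_contr (hA : ∀ i j, 0 ≤ A i j)
    (hrow : ∀ i, ∃ j, 0 < A i j) (hcol : ∀ j, ∃ i, 0 < A i j)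
    (hα : 0 ≤ α) (hβ : 0 ≤ β) (hαβ : α + β = 1)
    (hirr : ∀ i j, ∃ k : ℕ, 1 ≤ k ∧ 0 < (A ^ k) i j)
    (hprim : ∃ k : ℕ, 1 ≤ k ∧ ∀ i j, 0 < ((α • A + β • Aᵀ) ^ k) i j)
    (v : ℕ → Fin n → ℝ) (hv : ∀ k, v (k + 1) = G A α β (v k)) :
    ∃ (p : ℕ) (ε : ℝ), 1 ≤ p ∧ 0 < ε ∧ ∀ k m, (∀ i, m ≤ v (k + 1) i - v k i) → ∀ i j,
      m + ε * (v (k + 1) j - v k j - m) ≤ v (k + p + 1) i - v (k + p) i := by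
  obtain ⟨R, hR⟩ := orbit_bdd hA hrow hcol hα hβ hαβ hirr v hv
  obtain ⟨S, hS0, hS1, hS2⟩ := exists_S A hA
  obtain ⟨p, hp1, hp⟩ := hprim
  set B := α • Aᵀ + β • A with hBdef
  have hB : ∀ i j, 0 ≤ B i j := fun i j => by
    simp only [hBdef, Matrix.add_apply, Matrix.smul_apply, Matrix.transpose_apply, smul_eq_mul]
    exact add_nonneg (mul_nonneg hα (hA _ _)) (mul_nonneg hβ (hA _ _))
  have hBp : ∀ i j, 0 < (B ^ p) i j := fun i j => by
    have e : α • A + β • Aᵀ = Bᵀ := by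
      simp [hBdef]
    have := hp j i
    rw [e, ← Matrix.transpose_pow] at this
    exact this
  obtain ⟨b, hb0, hb⟩ : ∃ b : ℝ, 0 < b ∧ ∀ i j, b ≤ (B ^ p) i j := by
    rcases isEmpty_or_nonempty (Fin n) with h | h
    · exact ⟨1, one_pos, fun i => isEmptyElim i⟩
    · obtain ⟨q, hq⟩ := Finite.exists_min (fun q : Fin n × Fin n => (B ^ p) q.1 q.2)
      exact ⟨_, hBp q.1 q.2, fun i j => hq (i, j)⟩
  set δ := Real.exp (-R) / S with hδ
  have hδ0 : 0 < δ := div_pos (Real.exp_pos _) hS0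
  refine ⟨p, δ ^ p * b, hp1, by positivity, fun k m hm i j => ?_⟩
  have hmono : ∀ s i, m ≤ v (k + s + 1) i - v (k + s) i := by
    intro s
    induction s with
    | zero => exact hm
    | succ s ih =>
      intro i
      have := G_mono hA hrow hcol hα hβ hαβ _ _ m ih i
      rw [← hv, ← hv] at this
      exact this
  have hit : ∀ s i, δ ^ s * ((B ^ s) *ᵥ (fun j => v (k + 1) j - v k j - m)) i
      ≤ v (k + s + 1) i - v (k + s) i - m := by
    intro s
    induction s with
    | zero => intro i; simp
    | succ s ih =>
      intro i
      have h1 := G_key hA hrow hcol hα hβ hαβ hS0 hS1 hS2 (R := R) (v (k + s + 1)) (v (k + s)) m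
        (hR _) (hR _) (hmono s) i
      rw [← hv, ← hv, ← hδ, ← hBdef] at h1
      refine le_trans ?_ h1
      have h2 := mulVec_mono hB (x := δ ^ s • ((B ^ s) *ᵥ (fun j => v (k + 1) j - v k j - m)))
        (y := fun j => v (k + s + 1) j - v (k + s) j - m) ih i
      rw [Matrix.mulVec_smul, Matrix.mulVec_mulVec, ← pow_succ'] at h2
      simp only [Pi.smul_apply, smul_eq_mul] at h2
      calc _ = δ * (δ ^ s * ((B ^ (s+1)) *ᵥ (fun j => v (k + 1) j - v k j - m)) i) := by ring
        _ ≤ _ := mul_le_mul_of_nonneg_left h2 hδ0.le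
  have h1 := hit p i
  have h2 : b * (v (k + 1) j - v k j - m) ≤ ((B ^ p) *ᵥ (fun j => v (k + 1) j - v k j - m)) i := by
    refine le_trans (mul_le_mul_of_nonneg_right (hb i j) (by linarith [hm j])) ?_
    exact Finset.single_le_sum (f := fun j => (B ^ p) i j * (v (k + 1) j - v k j - m))
      (fun l _ => mul_nonneg (hBp i l).le (by linarith [hm l])) (Finset.mem_univ j)
  have h3 := mul_le_mul_of_nonneg_left h2 (pow_nonneg hδ0.le p)
  linarith

end

lemma geom_decay (D : ℕ → ℝ) (hD0 : ∀ k, 0 ≤ D k) (hanti : ∀ k, D (k + 1) ≤ D k) (p : ℕ)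
    (hp : 1 ≤ p) (q : ℝ) (hq0 : 0 < q) (hq1 : q < 1) (hD : ∀ k, D (k + p) ≤ q * D k) :
    ∃ C r : ℝ, 0 < r ∧ r < 1 ∧ ∀ k, D k ≤ C * r ^ k := by
  have hp0 : (0:ℝ) < p := by exact_mod_cast hp
  set r : ℝ := q ^ (1 / (p:ℝ)) with hr
  have hr0 : 0 < r := Real.rpow_pos_of_pos hq0 _
  have hr1 : r < 1 := Real.rpow_lt_one hq0.le hq1 (by positivity)
  have hrp : r ^ p = q := by
    rw [hr, ← Real.rpow_natCast, ← Real.rpow_mul hq0.le, one_div, inv_mul_cancel₀ hp0.ne',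
      Real.rpow_one]
  refine ⟨D 0 / q, r, hr0, hr1, fun k => ?_⟩
  have hA : Antitone D := antitone_nat_of_succ_le hanti
  induction k using Nat.strong_induction_on with
  | _ k ih =>
    by_cases hk : k < p
    · have h1 : q ≤ r ^ k := by
        rw [← hrp]; exact pow_le_pow_of_le_one hr0.le hr1.le hk.le
      have h2 : D k ≤ D 0 := hA (Nat.zero_le _)
      rw [div_mul_eq_mul_div, le_div_iff₀ hq0]
      exact mul_le_mul h2 h1 hq0.le (hD0 0)
    · obtain ⟨l, rfl⟩ : ∃ l, k = l + p := ⟨k - p, by omega⟩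
      have := ih l (by omega)
      calc D (l + p) ≤ q * D l := hD l
        _ ≤ q * (D 0 / q * r ^ l) := mul_le_mul_of_nonneg_left this hq0.le
        _ = _ := by rw [pow_add, hrp]; ring

lemma osc_conv {ι : Type*} [Fintype ι] [Nonempty ι] (w : ℕ → ι → ℝ)
    (h1 : ∀ k m, (∀ i, m ≤ w k i) → ∀ i, m ≤ w (k + 1) i)
    (h2 : ∀ k m, (∀ i, w k i ≤ m) → ∀ i, w (k + 1) i ≤ m)
    (p : ℕ) (hp : 1 ≤ p) (ε : ℝ) (hε : 0 < ε)
    (h3 : ∀ k m, (∀ i, m ≤ w k i) → ∀ i j, m + ε * (w k j - m) ≤ w (k + p) i) :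
    ∃ l C r : ℝ, 0 < r ∧ r < 1 ∧ ∀ k i, |w k i - l| ≤ C * r ^ k := by
  choose a ha using fun k => Finite.exists_min (w k)
  choose b hb using fun k => Finite.exists_max (w k)
  have hmA : Monotone (fun k => w k (a k)) :=
    monotone_nat_of_le_succ fun k => h1 k _ (ha k) _
  have hMA : Antitone (fun k => w k (b k)) :=
    antitone_nat_of_succ_le fun k => h2 k _ (hb k) _
  have hmM : ∀ k l, w k (a k) ≤ w l (b l) := fun k l =>
    (hmA (le_max_left k l)).trans ((ha _ _).trans (hMA (le_max_right k l)))
  have hbd : BddAbove (Set.range fun k => w k (a k)) := by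
    refine ⟨w 0 (b 0), ?_⟩
    rintro _ ⟨k, rfl⟩
    exact hmM k 0
  obtain ⟨C, r, hr0, hr1, hC⟩ := geom_decay (fun k => w k (b k) - w k (a k))
    (fun k => sub_nonneg.2 (ha k _))
    (fun k => by
      have e1 := hmA (Nat.le_succ k)
      have e2 := hMA (Nat.le_succ k)
      simp only [Nat.succ_eq_add_one] at e1 e2
      linarith) p hp (max (1 - ε) (1 / 2)) (lt_max_of_lt_right (by norm_num))
      (max_lt (by linarith) (by norm_num))
    (fun k => by
      have e1 := h3 k _ (ha k) (a (k + p)) (b k)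
      have e2 := hMA (Nat.le_add_right k p)
      simp only at e2
      have e3 : 0 ≤ w k (b k) - w k (a k) := sub_nonneg.2 (ha k _)
      have e4 := mul_le_mul_of_nonneg_right (le_max_left (1 - ε) (1 / 2)) e3
      linarith)
  refine ⟨⨆ k, w k (a k), C, r, hr0, hr1, fun k i => ?_⟩
  have l1 : w k (a k) ≤ ⨆ k, w k (a k) := le_ciSup hbd k
  have l2 : ⨆ k, w k (a k) ≤ w k (b k) := ciSup_le fun l => hmM l k
  have := hC k
  refine le_trans ?_ this
  rw [abs_le]
  constructor <;> linarith [ha k i, hb k i]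

lemma log_orbit {n : ℕ} [Nonempty (Fin n)] {A : Matrix (Fin n) (Fin n) ℝ} {α β : ℝ}
    (hA : ∀ i j, 0 ≤ A i j)
    (hrow : ∀ i, ∃ j, 0 < A i j) (hcol : ∀ j, ∃ i, 0 < A i j)
    (hα : 0 ≤ α) (hβ : 0 ≤ β) (hαβ : α + β = 1)
    (hirr : ∀ i j, ∃ k : ℕ, 1 ≤ k ∧ 0 < (A ^ k) i j)
    (hprim : ∃ k : ℕ, 1 ≤ k ∧ ∀ i j, 0 < ((α • A + β • Aᵀ) ^ k) i j)
    (v : ℕ → Fin n → ℝ) (hv : ∀ k, v (k + 1) = G A α β (v k)) :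
    ∃ (l C r : ℝ) (y : Fin n → ℝ), 0 < r ∧ r < 1 ∧ (G A α β y = fun i => y i + l) ∧
      ∀ k, ‖(fun i => v k i - k * l) - y‖ ≤ C * r ^ k := by
  obtain ⟨p, ε, hp, hε, hc⟩ := orbit_contr hA hrow hcol hα hβ hαβ hirr hprim v hv
  obtain ⟨l, C, r, hr0, hr1, hw⟩ := osc_conv (fun k i => v (k + 1) i - v k i)
    (fun k m h i => by
      have := G_mono hA hrow hcol hα hβ hαβ _ _ m h i
      rwa [← hv, ← hv] at this)
    (fun k m h i => by
      have := G_mono hA hrow hcol hα hβ hαβ (v k) (v (k + 1)) (-m)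
        (fun j => by linarith [h j]) i
      rw [← hv, ← hv] at this
      linarith)
    p hp ε hε hc
  set Y : ℕ → Fin n → ℝ := fun k i => v k i - k * l with hY
  have hstep : ∀ k, dist (Y k) (Y (k + 1)) ≤ C * r ^ k := by
    intro k
    have h0 : 0 ≤ C * r ^ k := (abs_nonneg _).trans (hw k (Classical.arbitrary _))
    rw [dist_pi_le_iff h0]
    intro i
    rw [dist_comm, Real.dist_eq]
    refine le_of_eq_of_le ?_ (hw k i)
    congr 1
    simp only [hY]; push_cast; ring
  have hcau := cauchySeq_of_le_geometric r C hr1 hstep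
  obtain ⟨y, hy⟩ := cauchySeq_tendsto_of_complete hcau
  refine ⟨l, C / (1 - r), r, y, hr0, hr1, ?_, ?_⟩
  · have hG : ∀ k, G A α β (Y k) = fun i => Y (k + 1) i + l := by
      intro k
      have := G_add hA hrow hcol hαβ (v k) (-(k * l))
      have e : Y k = fun j => v k j + -(k * l) := by funext j; simp only [hY]; ring
      rw [e, this, ← hv]
      funext j; simp only [hY]; push_cast; ring
    have t1 : Tendsto (fun k => G A α β (Y k)) atTop (nhds (G A α β y)) :=
      ((G_cont hA hrow hcol).tendsto y).comp hy
    have t2 : Tendsto (fun k => (fun i => Y (k + 1) i + l : Fin n → ℝ)) atTop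
        (nhds (fun i => y i + l)) := by
      rw [tendsto_pi_nhds]
      intro i
      exact (((tendsto_pi_nhds.1 hy i).comp (tendsto_add_atTop_nat 1)).add_const l)
    simp only [hG] at t1
    exact tendsto_nhds_unique t1 t2
  · intro k
    have := dist_le_of_le_geometric_of_tendsto r C hr1 hstep hy k
    rw [← dist_eq_norm]
    refine this.trans (le_of_eq ?_)
    ring

lemma limsup_lt {a : ℕ → ℝ} (ha : ∀ k, 0 ≤ a k) {C r : ℝ} (hr0 : 0 < r) (hr1 : r < 1)
    (h : ∀ᶠ k in atTop, a k ≤ C * r ^ k) :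
    limsup (fun k : ℕ => a k ^ (1 / (k : ℝ))) atTop < 1 := by
  set s := (r + 1) / 2 with hs
  have hs0 : 0 < s := by positivity
  have hrs : r < s := by rw [hs]; linarith
  have hs1 : s < 1 := by rw [hs]; linarith
  have ht : Tendsto (fun k : ℕ => C * (r / s) ^ k) atTop (nhds 0) := by
    have := (tendsto_pow_atTop_nhds_zero_of_lt_one (div_nonneg hr0.le hs0.le)
      ((div_lt_one hs0).2 hrs)).const_mul C
    simpa using this
  refine lt_of_le_of_lt ?_ hs1
  refine limsup_le_of_le ?_ ?_
  · exact isCoboundedUnder_le_of_le atTop (x := 0) (fun k => Real.rpow_nonneg (ha k) _)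
  · filter_upwards [h, ht.eventually_lt_const one_pos, eventually_ge_atTop 1] with k h1 h2 h3
    have hk : (0:ℝ) < k := by exact_mod_cast h3
    have h4 : a k ≤ s ^ k := by
      rw [div_pow, ← mul_div_assoc, div_lt_one (by positivity)] at h2
      linarith
    calc a k ^ (1 / (k:ℝ)) ≤ (s ^ k) ^ (1 / (k:ℝ)) :=
          Real.rpow_le_rpow (ha k) h4 (by positivity)
      _ = s := by
          rw [← Real.rpow_natCast, ← Real.rpow_mul hs0.le, mul_one_div_cancel hk.ne',
            Real.rpow_one]

end HotsAux

open HotsAux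

/-- Convergence of the deformed HOTS algorithm: if `A` is irreducible and `αA + βAᵀ`
is primitive, the normalized iteration converges linearly to a positive vector. -/
theorem deformedHots_converges {n : ℕ} (A : Matrix (Fin n) (Fin n) ℝ)
    (hA : ∀ i j, 0 ≤ A i j)
    (hrow : ∀ i, ∃ j, 0 < A i j) (hcol : ∀ j, ∃ i, 0 < A i j)
    (α β : ℝ) (hα : 0 ≤ α) (hβ : 0 ≤ β) (hαβ : α + β = 1)
    (hirr : ∀ i j, ∃ k : ℕ, 1 ≤ k ∧ 0 < (A ^ k) i j)
    (hprim : ∃ k : ℕ, 1 ≤ k ∧ ∀ i j, 0 < ((α • A + β • Aᵀ) ^ k) i j)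
    -- an arbitrary norm `N` on `ℝⁿ`
    (N : (Fin n → ℝ) → ℝ)
    (hN0 : ∀ x, N x = 0 ↔ x = 0)
    (hNsmul : ∀ (a : ℝ) (x : Fin n → ℝ), N (a • x) = |a| * N x)
    (hNadd : ∀ x y, N (x + y) ≤ N x + N y)
    -- the normalized iteration started at a positive vector `d⁰`
    (d : ℕ → (Fin n → ℝ)) (hd0 : ∀ i, 0 < d 0 i)
    (hiter : ∀ k, d (k + 1) = (N (deformedHots A α β (d k)))⁻¹ • deformedHots A α β (d k)) :
    ∃ dstar : Fin n → ℝ, (∀ i, 0 < dstar i) ∧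
      deformedHots A α β dstar = N (deformedHots A α β dstar) • dstar ∧
      Tendsto d atTop (nhds dstar) ∧
      limsup (fun k : ℕ => N (d k - dstar) ^ (1 / (k : ℝ))) atTop < 1 := by
  have hNn : ∀ x, 0 ≤ N x := by
    intro x
    have h1 := hNadd x ((-1 : ℝ) • x)
    rw [hNsmul] at h1
    have e : x + (-1 : ℝ) • x = 0 := by simp
    rw [e, (hN0 0).2 rfl] at h1
    simp at h1
    linarith
  rcases isEmpty_or_nonempty (Fin n) with hn | hn
  · refine ⟨0, fun i => isEmptyElim i, Subsingleton.elim _ _, ?_, ?_⟩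
    · have : d = fun _ => 0 := Subsingleton.elim _ _
      rw [this]; exact tendsto_const_nhds
    · refine limsup_lt (C := 1) (r := 1 / 2) (fun k => hNn _) (by norm_num) (by norm_num) ?_
      refine Eventually.of_forall fun k => ?_
      rw [Subsingleton.elim (d k - 0) 0, (hN0 0).2 rfl]
      positivity
  have hNpos : ∀ u : Fin n → ℝ, 0 < N (fun i => Real.exp (u i)) := by
    intro u
    refine lt_of_le_of_ne (hNn _) fun h => ?_
    have := congrFun ((hN0 _).1 h.symm) (Classical.arbitrary _)
    exact (Real.exp_pos _).ne' this
  have hNneg : ∀ x, N (-x) = N x := by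
    intro x
    have := hNsmul (-1) x
    simpa using this
  have hNsub : ∀ x y, |N x - N y| ≤ N (x - y) := by
    intro x y
    rw [abs_le]
    have h1 := hNadd (x - y) y
    have h2 := hNadd (-(x - y)) x
    rw [hNneg] at h2
    simp only [sub_add_cancel, neg_sub] at h1 h2
    constructor <;> linarith
  obtain ⟨K, hK0, hK⟩ : ∃ K : ℝ, 0 ≤ K ∧ ∀ x, N x ≤ K * ‖x‖ := by
    refine ⟨∑ i, N (Pi.single i 1), Finset.sum_nonneg fun i _ => hNn _, fun x => ?_⟩
    have hsum : ∀ s : Finset (Fin n), ∀ f : Fin n → Fin n → ℝ,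
        N (∑ i ∈ s, f i) ≤ ∑ i ∈ s, N (f i) := by
      intro s f
      induction s using Finset.induction_on with
      | empty => simp [(hN0 0).2 rfl]
      | insert a s ha ih =>
        rw [Finset.sum_insert ha, Finset.sum_insert ha]
        exact (hNadd _ _).trans (by linarith)
    have e : x = ∑ i, x i • (Pi.single i 1 : Fin n → ℝ) := by
      funext j
      simp [Finset.sum_apply, Pi.single_apply]
    calc N x = N (∑ i, x i • (Pi.single i 1 : Fin n → ℝ)) := by rw [← e]
      _ ≤ ∑ i, N (x i • (Pi.single i 1 : Fin n → ℝ)) := hsum _ _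
      _ ≤ ∑ i, N (Pi.single i 1) * ‖x‖ := by
          refine Finset.sum_le_sum fun i _ => ?_
          rw [hNsmul, mul_comm]
          exact mul_le_mul_of_nonneg_left (norm_le_pi_norm x i) (hNn _)
      _ = _ := by rw [Finset.sum_mul]
  have hNcont : Continuous N := by
    refine (LipschitzWith.of_dist_le_mul (K := ⟨K, hK0⟩) fun x y => ?_).continuous
    rw [Real.dist_eq, dist_eq_norm]
    exact (hNsub x y).trans (hK _)
  -- the orbit in logarithmic coordinates
  let v : ℕ → Fin n → ℝ := fun k => (G A α β)^[k] (fun i => Real.log (d 0 i))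
  have hv : ∀ k, v (k + 1) = G A α β (v k) := fun k => Function.iterate_succ_apply' _ _ _
  obtain ⟨l, C, r, y, hr0, hr1, hfix, hconv⟩ :=
    log_orbit hA hrow hcol hα hβ hαβ hirr hprim v hv
  let E : (Fin n → ℝ) → (Fin n → ℝ) := fun u i => Real.exp (u i)
  have hEc : ∀ u (c : ℝ), E (fun i => u i + c) = Real.exp c • E u := by
    intro u c; funext i; simp only [E, Pi.smul_apply, smul_eq_mul, Real.exp_add]; ring
  have hnorm : ∀ u (c : ℝ), (N (Real.exp c • E u))⁻¹ • (Real.exp c • E u) = (N (E u))⁻¹ • E u := by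
    intro u c
    rw [hNsmul, abs_of_pos (Real.exp_pos c), smul_smul]
    congr 1
    have := (Real.exp_pos c).ne'
    have := (hNpos u).ne'
    field_simp
  let Y : ℕ → Fin n → ℝ := fun k i => v k i - k * l
  have hdv : ∀ k, ∃ c, d k = E (fun i => v k i + c) := by
    intro k
    induction k with
    | zero =>
      refine ⟨0, ?_⟩
      funext i
      simp only [E, v, Function.iterate_zero, id, add_zero]
      exact (Real.exp_log (hd0 i)).symm
    | succ k ih =>
      obtain ⟨c, hc⟩ := ih
      refine ⟨- Real.log (N (E (v (k + 1)))), ?_⟩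
      rw [hiter, hc]
      simp only [E]
      rw [g_exp hA hrow hcol, G_add hA hrow hcol hαβ, ← hv]
      have := hEc (v (k + 1)) c
      simp only [E] at this
      rw [this]
      have := hnorm (v (k + 1)) c
      simp only [E] at this
      rw [this]
      have := hEc (v (k + 1)) (- Real.log (N (E (v (k + 1)))))
      simp only [E] at this
      rw [this, Real.exp_neg, Real.exp_log (hNpos _)]
  have hd : ∀ k, 1 ≤ k → d k = (N (E (Y k)))⁻¹ • E (Y k) := by
    intro k hk
    obtain ⟨k, rfl⟩ : ∃ j, k = j + 1 := ⟨k - 1, by omega⟩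
    obtain ⟨c, hc⟩ := hdv k
    have e : deformedHots A α β (d k) = Real.exp (c + (k + 1 : ℕ) * l) • E (Y (k + 1)) := by
      rw [hc]
      simp only [E]
      rw [g_exp hA hrow hcol, G_add hA hrow hcol hαβ, ← hv]
      funext i
      simp only [Pi.smul_apply, smul_eq_mul, ← Real.exp_add, Y]
      congr 1; ring
    rw [hiter, e, hnorm]
  have hYt : Tendsto Y atTop (nhds y) := by
    rw [tendsto_iff_norm_sub_tendsto_zero]
    refine squeeze_zero (fun k => norm_nonneg _) hconv ?_
    simpa using (tendsto_pow_atTop_nhds_zero_of_lt_one hr0.le hr1).const_mul C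
  have hEcont : Continuous E := by
    refine continuous_pi fun i => ?_
    exact Real.continuous_exp.comp (continuous_apply i)
  have hEt : Tendsto (fun k => E (Y k)) atTop (nhds (E y)) := (hEcont.tendsto y).comp hYt
  have hN1 : 0 < N (E y) := hNpos y
  refine ⟨(N (E y))⁻¹ • E y, ?_, ?_, ?_, ?_⟩
  · intro i
    simp only [Pi.smul_apply, smul_eq_mul]
    exact mul_pos (inv_pos.2 hN1) (Real.exp_pos _)
  · have e0 : (N (E y))⁻¹ • E y = E (fun i => y i + - Real.log (N (E y))) := by
      rw [hEc, Real.exp_neg, Real.exp_log hN1]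
    have e1 : deformedHots A α β ((N (E y))⁻¹ • E y) = Real.exp l • ((N (E y))⁻¹ • E y) := by
      rw [e0, ← hEc]
      simp only [E]
      rw [g_exp hA hrow hcol, G_add hA hrow hcol hαβ, hfix]
      funext i
      congr 1; ring
    rw [e1]
    congr 1
    rw [hNsmul, hNsmul, abs_of_pos (Real.exp_pos _), abs_of_pos (inv_pos.2 hN1),
      inv_mul_cancel₀ hN1.ne', mul_one]
  · have : Tendsto (fun k => (N (E (Y k)))⁻¹ • E (Y k)) atTop (nhds ((N (E y))⁻¹ • E y)) :=
      (((hNcont.tendsto _).comp hEt).inv₀ hN1.ne').smul hEt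
    refine this.congr' ?_
    filter_upwards [eventually_ge_atTop 1] with k hk
    exact (hd k hk).symm
  · refine limsup_lt (C := 2 / N (E y) * (K * (‖E y‖ * 2 * C))) (fun k => hNn _) hr0 hr1 ?_
    have hsm : ∀ᶠ k in atTop, ‖Y k - y‖ < 1 :=
      (tendsto_iff_norm_sub_tendsto_zero.1 hYt).eventually_lt_const one_pos
    filter_upwards [eventually_ge_atTop 1, hsm] with k hk hs
    rw [hd k hk]
    have hNk : 0 < N (E (Y k)) := hNpos _
    set X := E (Y k) with hX
    set Z := E y with hZ
    have h1 : N ((N X)⁻¹ • X - (N Z)⁻¹ • Z) ≤ 2 / N Z * N (X - Z) := by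
      have e : (N X)⁻¹ • X - (N Z)⁻¹ • Z = (N Z)⁻¹ • (X - Z) + ((N X)⁻¹ - (N Z)⁻¹) • X := by
        module
      rw [e]
      refine (hNadd _ _).trans ?_
      rw [hNsmul, hNsmul, abs_of_pos (inv_pos.2 hN1)]
      have e2 : |(N X)⁻¹ - (N Z)⁻¹| * N X = |N X - N Z| / N Z := by
        rw [inv_sub_inv hNk.ne' hN1.ne', abs_div, abs_of_pos (mul_pos hNk hN1), abs_sub_comm]
        field_simp
      rw [e2]
      have := div_le_div_of_nonneg_right (hNsub X Z) hN1.le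
      calc _ ≤ (N Z)⁻¹ * N (X - Z) + N (X - Z) / N Z := by linarith
        _ = _ := by ring
    have h2 : ‖X - Z‖ ≤ ‖Z‖ * 2 * ‖Y k - y‖ := by
      rw [pi_norm_le_iff_of_nonneg (by positivity)]
      intro i
      have hi := norm_le_pi_norm (Y k - y) i
      have e : (X - Z) i = Z i * (Real.exp ((Y k - y) i) - 1) := by
        simp only [hX, hZ, E, Pi.sub_apply]
        rw [mul_sub, ← Real.exp_add, mul_one]
        congr 2; ring
      rw [e, norm_mul, mul_assoc]
      refine mul_le_mul (norm_le_pi_norm Z i) ?_ (norm_nonneg _) (norm_nonneg _)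
      have := Real.abs_exp_sub_one_le (x := (Y k - y) i) (hi.trans hs.le)
      rw [Real.norm_eq_abs] at hi ⊢
      linarith
    have h3 := hconv k
    calc _ ≤ 2 / N Z * N (X - Z) := h1
      _ ≤ 2 / N Z * (K * (‖Z‖ * 2 * (C * r ^ k))) := by
        refine mul_le_mul_of_nonneg_left ?_ (by positivity)
        refine (hK _).trans (mul_le_mul_of_nonneg_left ?_ hK0)
        exact h2.trans (mul_le_mul_of_nonneg_left h3 (by positivity))
      _ = _ := by ring
end

section
/- Let g : (0,∞)ⁿ → (0,∞)ⁿ be defined by g_i(x) = ((Σ_j A_{ji} x_j)/(Σ_k A_{ik} x_k^{−1}))^{1/2} (the multiplicative form of the ideal HOTS map). Then for all positive vectors x, y ∈ (0,∞)ⁿ, d(g(x), g(y)) ≤ ((k(Aᵀ) + k(A))/2)·d(x, y), where d is Hilbert's projective metric and k(M) denotes the Birkhoff contraction factor of a nonnegative matrix M with no zero row, k(M) = sup{ d(Mx, My)/d(x, y) : x, y ∈ (0,∞)ⁿ, d(x, y) > 0 }. -/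
open BigOperators Matrix

/-- Hilbert's projective metric `d(x, y) = log(max_{i,j} (x_i y_j)/(y_i x_j))`. -/
noncomputable def hilbertDist {n : ℕ} (x y : Fin n → ℝ) : ℝ :=
  Real.log (⨆ i : Fin n, ⨆ j : Fin n, x i * y j / (y i * x j))

/-- The Birkhoff contraction factor of a nonnegative matrix `M`:
`k(M) = sup{ d(Mx, My)/d(x, y) : x, y positive, d(x, y) > 0 }`. -/
noncomputable def birkhoffFactor {n : ℕ} (M : Matrix (Fin n) (Fin n) ℝ) : ℝ :=
  sSup {r : ℝ | ∃ x y : Fin n → ℝ, (∀ i, 0 < x i) ∧ (∀ i, 0 < y i) ∧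
    0 < hilbertDist x y ∧ r = hilbertDist (M.mulVec x) (M.mulVec y) / hilbertDist x y}

/-- The multiplicative form of the ideal HOTS map. -/
noncomputable def hotsMapMul {n : ℕ} (A : Matrix (Fin n) (Fin n) ℝ) (x : Fin n → ℝ) :
    Fin n → ℝ :=
  fun i => Real.sqrt ((∑ j, A j i * x j) / (∑ k, A i k * (x k)⁻¹))


lemma hd_le_iff {n : ℕ} (hn : 0 < n) {x y : Fin n → ℝ} (hx : ∀ i, 0 < x i) (hy : ∀ i, 0 < y i)
    (c : ℝ) : hilbertDist x y ≤ c ↔ ∀ i j, x i * y j ≤ Real.exp c * (y i * x j) := by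
  haveI : Nonempty (Fin n) := ⟨⟨0, hn⟩⟩
  have hb : ∀ i, BddAbove (Set.range fun j => x i * y j / (y i * x j)) :=
    fun i => Set.Finite.bddAbove (Set.finite_range _)
  have hb2 : BddAbove (Set.range fun i => ⨆ j, x i * y j / (y i * x j)) :=
    Set.Finite.bddAbove (Set.finite_range _)
  have hpos : 0 < ⨆ i : Fin n, ⨆ j : Fin n, x i * y j / (y i * x j) := by
    have h1 := le_ciSup (hb ⟨0, hn⟩) ⟨0, hn⟩
    have h2 := le_ciSup hb2 ⟨0, hn⟩
    have h3 : 0 < x ⟨0, hn⟩ * y ⟨0, hn⟩ / (y ⟨0, hn⟩ * x ⟨0, hn⟩) :=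
      div_pos (mul_pos (hx _) (hy _)) (mul_pos (hy _) (hx _))
    exact lt_of_lt_of_le h3 (le_trans h1 h2)
  unfold hilbertDist
  rw [Real.log_le_iff_le_exp hpos]
  rw [ciSup_le_iff hb2]
  refine forall_congr' fun i => ?_
  rw [ciSup_le_iff (hb i)]
  refine forall_congr' fun j => ?_
  rw [div_le_iff₀ (mul_pos (hy _) (hx _))]

lemma hd_nonneg {n : ℕ} (hn : 0 < n) {x y : Fin n → ℝ} (hx : ∀ i, 0 < x i) (hy : ∀ i, 0 < y i) :
    0 ≤ hilbertDist x y := by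
  have h := (hd_le_iff hn hx hy _).1 le_rfl ⟨0, hn⟩ ⟨0, hn⟩
  have hp := mul_pos (hy ⟨0, hn⟩) (hx ⟨0, hn⟩)
  rw [mul_comm (x _)] at h
  have : 1 ≤ Real.exp (hilbertDist x y) := by
    by_contra! hc
    nlinarith
  exact Real.one_le_exp_iff.1 this

lemma mulVec_pos' {n : ℕ} {M : Matrix (Fin n) (Fin n) ℝ} (hM : ∀ i j, 0 ≤ M i j)
    (hrow : ∀ i, ∃ j, 0 < M i j) {x : Fin n → ℝ} (hx : ∀ i, 0 < x i) (i : Fin n) :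
    0 < (M.mulVec x) i := by
  obtain ⟨j, hj⟩ := hrow i
  exact Finset.sum_pos' (fun k _ => mul_nonneg (hM i k) (hx k).le)
    ⟨j, Finset.mem_univ _, mul_pos hj (hx j)⟩

lemma hd_mulVec_le {n : ℕ} (hn : 0 < n) {M : Matrix (Fin n) (Fin n) ℝ} (hM : ∀ i j, 0 ≤ M i j)
    (hrow : ∀ i, ∃ j, 0 < M i j) {x y : Fin n → ℝ} (hx : ∀ i, 0 < x i) (hy : ∀ i, 0 < y i) :
    hilbertDist (M.mulVec x) (M.mulVec y) ≤ hilbertDist x y := by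
  rw [hd_le_iff hn (mulVec_pos' hM hrow hx) (mulVec_pos' hM hrow hy)]
  intro i j
  have h := (hd_le_iff hn hx hy _).1 le_rfl
  simp only [Matrix.mulVec, dotProduct]
  rw [Finset.sum_mul_sum, Finset.sum_mul_sum, Finset.mul_sum]
  refine Finset.sum_le_sum fun k _ => ?_
  rw [Finset.mul_sum]
  refine Finset.sum_le_sum fun l _ => ?_
  have := mul_le_mul_of_nonneg_left (h k l) (mul_nonneg (hM i k) (hM j l))
  linarith

lemma hd_mulVec_le_factor {n : ℕ} (hn : 0 < n) {M : Matrix (Fin n) (Fin n) ℝ}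
    (hM : ∀ i j, 0 ≤ M i j)
    (hrow : ∀ i, ∃ j, 0 < M i j) {x y : Fin n → ℝ} (hx : ∀ i, 0 < x i) (hy : ∀ i, 0 < y i) :
    hilbertDist (M.mulVec x) (M.mulVec y) ≤ birkhoffFactor M * hilbertDist x y := by
  rcases (hd_nonneg hn hx hy).eq_or_lt with h0 | h0
  · have := hd_mulVec_le hn hM hrow hx hy
    rw [← h0] at this ⊢
    simpa using this
  · rw [← div_le_iff₀ h0]
    refine le_csSup ⟨1, ?_⟩ ⟨x, y, hx, hy, h0, rfl⟩
    rintro r ⟨u, v, hu, hv, huv, rfl⟩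
    rw [div_le_one huv]
    exact hd_mulVec_le hn hM hrow hu hv

/-- The ideal HOTS map is `((k(Aᵀ) + k(A))/2)`-contracting in Hilbert's projective metric. -/
theorem hotsMapMul_hilbert_contraction {n : ℕ} (hn : 0 < n)
    (A : Matrix (Fin n) (Fin n) ℝ) (hA : ∀ i j, 0 ≤ A i j)
    (hrow : ∀ i, ∃ j, 0 < A i j) (hcol : ∀ j, ∃ i, 0 < A i j) :
    ∀ x y : Fin n → ℝ, (∀ i, 0 < x i) → (∀ i, 0 < y i) →
      hilbertDist (hotsMapMul A x) (hotsMapMul A y) ≤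
        (birkhoffFactor Aᵀ + birkhoffFactor A) / 2 * hilbertDist x y := by
  intro x y hx hy
  have hxi : ∀ i, 0 < (fun k => (x k)⁻¹) i := fun i => inv_pos.2 (hx i)
  have hyi : ∀ i, 0 < (fun k => (y k)⁻¹) i := fun i => inv_pos.2 (hy i)
  have hAt : ∀ i j, 0 ≤ Aᵀ i j := fun i j => hA j i
  have hinv : hilbertDist (fun k => (y k)⁻¹) (fun k => (x k)⁻¹) = hilbertDist x y := by
    unfold hilbertDist
    congr 1
    refine iSup_congr fun i => iSup_congr fun j => ?_
    have := hx i
    have := hx j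
    have := hy i
    have := hy j
    field_simp
  have h1 := hd_mulVec_le_factor hn hAt hcol hx hy
  have h2 := hd_mulVec_le_factor hn hA hrow hyi hxi
  rw [hinv] at h2
  have pu := mulVec_pos' hAt hcol hx
  have pu' := mulVec_pos' hAt hcol hy
  have pv := mulVec_pos' hA hrow hxi
  have pv' := mulVec_pos' hA hrow hyi
  have ex : hotsMapMul A x = fun i => Real.sqrt
      ((Aᵀ.mulVec x) i / (A.mulVec (fun k => (x k)⁻¹)) i) := rfl
  have ey : hotsMapMul A y = fun i => Real.sqrt
      ((Aᵀ.mulVec y) i / (A.mulVec (fun k => (y k)⁻¹)) i) := rfl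
  rw [hd_le_iff hn pu pu'] at h1
  rw [hd_le_iff hn pv' pv] at h2
  rw [ex, ey]
  generalize Aᵀ.mulVec x = u at *
  generalize Aᵀ.mulVec y = u' at *
  generalize A.mulVec (fun k => (x k)⁻¹) = v at *
  generalize A.mulVec (fun k => (y k)⁻¹) = v' at *
  rw [hd_le_iff hn (fun i => Real.sqrt_pos.2 (div_pos (pu i) (pv i)))
    (fun i => Real.sqrt_pos.2 (div_pos (pu' i) (pv' i)))]
  intro i j
  have ha := h1 i j
  have hb := h2 i j
  have e : (birkhoffFactor Aᵀ + birkhoffFactor A) / 2 * hilbertDist x y =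
    (birkhoffFactor Aᵀ * hilbertDist x y + birkhoffFactor A * hilbertDist x y) / 2 := by ring
  rw [e, Real.exp_half, Real.exp_add]
  have a1 := pu i
  have a2 := pu j
  have a3 := pu' i
  have a4 := pu' j
  have b1 := pv i
  have b2 := pv j
  have b3 := pv' i
  have b4 := pv' j
  rw [← Real.sqrt_mul (by positivity), ← Real.sqrt_mul (by positivity),
    ← Real.sqrt_mul (by positivity)]
  apply Real.sqrt_le_sqrt
  rw [div_mul_div_comm, div_mul_div_comm, ← mul_div_assoc, div_le_div_iff₀ (by positivity)
    (by positivity)]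
  have := mul_le_mul ha hb (by positivity) (by positivity)
  linarith
end

section
/- For every p ∈ ℝⁿ, θ(f(p)) ≤ θ(p), where θ(q) = Σ_{i,j=1}^n A_{ij} e^{q_i − q_j}. In other words, θ is a Lyapunov function for the ideal HOTS iteration: each application of f does not increase the dual objective value. -/
open BigOperators

/-- The dual objective `θ(q) = Σ_{i,j} A_{ij} e^{q_i − q_j}` is a Lyapunov function for the
ideal HOTS iteration: `θ(f(p)) ≤ θ(p)`. -/
theorem hots_lyapunov {n : ℕ} (A : Matrix (Fin n) (Fin n) ℝ)
    (hA : ∀ i j, 0 ≤ A i j)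
    (hrow : ∀ i, ∃ j, 0 < A i j) (hcol : ∀ j, ∃ i, 0 < A i j) (p : Fin n → ℝ) :
    (∑ i, ∑ j, A i j * Real.exp (hotsMap A p i - hotsMap A p j)) ≤
      ∑ i, ∑ j, A i j * Real.exp (p i - p j) := by
  have hc : ∀ i, 0 < ∑ j, A j i * Real.exp (p j) := by
    intro i
    obtain ⟨j, hj⟩ := hcol i
    exact Finset.sum_pos' (fun k _ => mul_nonneg (hA k i) (Real.exp_pos _).le)
      ⟨j, Finset.mem_univ _, mul_pos hj (Real.exp_pos _)⟩
  have hr : ∀ i, 0 < ∑ j, A i j * Real.exp (-(p j)) := by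
    intro i
    obtain ⟨j, hj⟩ := hrow i
    exact Finset.sum_pos' (fun k _ => mul_nonneg (hA i k) (Real.exp_pos _).le)
      ⟨j, Finset.mem_univ _, mul_pos hj (Real.exp_pos _)⟩
  have hf : ∀ i, 2 * hotsMap A p i = Real.log (∑ j, A j i * Real.exp (p j))
      - Real.log (∑ j, A i j * Real.exp (-(p j))) := by
    intro i
    simp only [hotsMap]
    ring
  generalize hotsMap A p = f at hf ⊢
  have e1 : ∀ i, Real.exp (2 * f i) * (∑ j, A i j * Real.exp (-(p j)))
      = ∑ j, A j i * Real.exp (p j) := by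
    intro i
    rw [hf, Real.exp_sub, Real.exp_log (hc i), Real.exp_log (hr i)]
    exact div_mul_cancel₀ _ (hr i).ne'
  have e2 : ∀ i, Real.exp (-(2 * f i)) * (∑ j, A j i * Real.exp (p j))
      = ∑ j, A i j * Real.exp (-(p j)) := by
    intro i
    rw [← e1 i, ← mul_assoc, ← Real.exp_add]
    simp
  have key : ∀ i j, A i j * Real.exp (f i - f j) ≤
      (1 / 2) * (Real.exp (-(p i)) * (Real.exp (2 * f i) * (A i j * Real.exp (-(p j)))))
      + (1 / 2) * (Real.exp (p j) * (Real.exp (-(2 * f j)) * (A i j * Real.exp (p i)))) := by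
    intro i j
    have h1 : Real.exp (f i - f j) = Real.exp (f i - (p i + p j) / 2)
        * Real.exp ((p i + p j) / 2 - f j) := by
      rw [← Real.exp_add]; congr 1; ring
    have h2 : Real.exp (f i - (p i + p j) / 2) ^ 2
        = Real.exp (-(p i)) * Real.exp (2 * f i) * Real.exp (-(p j)) := by
      rw [← Real.exp_add, ← Real.exp_add, ← Real.exp_nat_mul]; congr 1; push_cast; ring
    have h3 : Real.exp ((p i + p j) / 2 - f j) ^ 2
        = Real.exp (p j) * Real.exp (-(2 * f j)) * Real.exp (p i) := by
      rw [← Real.exp_add, ← Real.exp_add, ← Real.exp_nat_mul]; congr 1; push_cast; ring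
    have h4 := mul_le_mul_of_nonneg_left (two_mul_le_add_sq
      (Real.exp (f i - (p i + p j) / 2)) (Real.exp ((p i + p j) / 2 - f j))) (hA i j)
    rw [h2, h3] at h4
    rw [h1]
    linarith
  have s1 : ∑ i, ∑ j, Real.exp (-(p i)) * (Real.exp (2 * f i) * (A i j * Real.exp (-(p j))))
      = ∑ i, ∑ j, A i j * Real.exp (p i - p j) := by
    simp only [← Finset.mul_sum, e1]
    simp only [Finset.mul_sum]
    rw [Finset.sum_comm]
    refine Finset.sum_congr rfl fun i _ => Finset.sum_congr rfl fun j _ => ?_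
    rw [sub_eq_add_neg, Real.exp_add]; ring
  have s2 : ∑ i, ∑ j, Real.exp (p j) * (Real.exp (-(2 * f j)) * (A i j * Real.exp (p i)))
      = ∑ i, ∑ j, A i j * Real.exp (p i - p j) := by
    rw [Finset.sum_comm]
    simp only [← Finset.mul_sum, e2]
    simp only [Finset.mul_sum]
    refine Finset.sum_congr rfl fun i _ => Finset.sum_congr rfl fun j _ => ?_
    rw [sub_eq_add_neg, Real.exp_add]; ring
  refine (Finset.sum_le_sum fun i _ => Finset.sum_le_sum fun j _ => key i j).trans ?_
  simp only [Finset.sum_add_distrib]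
  simp only [← Finset.mul_sum] at s1 s2 ⊢
  linarith
end

section
/- For every p ∈ ℝⁿ, with q = 2f(p) − p, the following identities hold: Σ_{i,j=1}^n A_{ij} e^{p_i − q_j} = Σ_{i,j=1}^n A_{ij} e^{p_i − p_j} = Σ_{i,j=1}^n A_{ij} e^{q_i − p_j}. -/
open BigOperators

/-- With `q = 2f(p) − p` one has
`Σ A_{ij} e^{p_i − q_j} = Σ A_{ij} e^{p_i − p_j} = Σ A_{ij} e^{q_i − p_j}`. -/
theorem hots_symmetry_identities {n : ℕ} (A : Matrix (Fin n) (Fin n) ℝ)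
    (hA : ∀ i j, 0 ≤ A i j)
    (hrow : ∀ i, ∃ j, 0 < A i j) (hcol : ∀ j, ∃ i, 0 < A i j) (p : Fin n → ℝ) :
    (∑ i, ∑ j, A i j * Real.exp (p i - (2 * hotsMap A p j - p j)) =
      ∑ i, ∑ j, A i j * Real.exp (p i - p j)) ∧
    (∑ i, ∑ j, A i j * Real.exp ((2 * hotsMap A p i - p i) - p j) =
      ∑ i, ∑ j, A i j * Real.exp (p i - p j)) := by
  have hC : ∀ j, 0 < ∑ i, A i j * Real.exp (p i) := fun j => by
    obtain ⟨i, hi⟩ := hcol j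
    exact Finset.sum_pos' (fun k _ => mul_nonneg (hA k j) (Real.exp_pos _).le)
      ⟨i, Finset.mem_univ _, mul_pos hi (Real.exp_pos _)⟩
  have hR : ∀ i, 0 < ∑ j, A i j * Real.exp (-(p j)) := fun i => by
    obtain ⟨j, hj⟩ := hrow i
    exact Finset.sum_pos' (fun k _ => mul_nonneg (hA i k) (Real.exp_pos _).le)
      ⟨j, Finset.mem_univ _, mul_pos hj (Real.exp_pos _)⟩
  have hq : ∀ i, Real.exp (2 * hotsMap A p i - p i) =
      (∑ j, A j i * Real.exp (p j)) / (∑ j, A i j * Real.exp (-(p j))) / Real.exp (p i) := by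
    intro i
    have h : 2 * hotsMap A p i - p i = Real.log (∑ j, A j i * Real.exp (p j))
        - Real.log (∑ j, A i j * Real.exp (-(p j))) - p i := by
      unfold hotsMap; ring
    rw [h, Real.exp_sub, Real.exp_sub, Real.exp_log (hC i), Real.exp_log (hR i)]
  constructor
  · rw [Finset.sum_comm]
    refine Finset.sum_congr rfl fun j _ => ?_
    have h1 : ∀ i, A i j * Real.exp (p i - (2 * hotsMap A p j - p j)) =
        (A i j * Real.exp (p i)) / Real.exp (2 * hotsMap A p j - p j) := fun i => by
      rw [Real.exp_sub (p i), mul_div_assoc]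
    have h2 : ∀ k, A j k * Real.exp (p j - p k) =
        Real.exp (p j) * (A j k * Real.exp (-(p k))) := fun k => by
      rw [sub_eq_add_neg, Real.exp_add]; ring
    simp only [h1, h2]
    rw [← Finset.sum_div, ← Finset.mul_sum, hq]
    have := (hC j).ne'
    have := (hR j).ne'
    have := (Real.exp_pos (p j)).ne'
    generalize (∑ i, A i j * Real.exp (p i)) = C at *
    generalize (∑ i, A j i * Real.exp (-(p i))) = R at *
    field_simp
  · rw [Finset.sum_comm (f := fun i j => A i j * Real.exp (p i - p j))]
    refine Finset.sum_congr rfl fun i _ => ?_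
    have h1 : ∀ j, A i j * Real.exp (2 * hotsMap A p i - p i - p j) =
        Real.exp (2 * hotsMap A p i - p i) * (A i j * Real.exp (-(p j))) := fun j => by
      rw [sub_eq_add_neg _ (p j), Real.exp_add]; ring
    have h2 : ∀ k, A k i * Real.exp (p k - p i) =
        (A k i * Real.exp (p k)) / Real.exp (p i) := fun k => by
      rw [Real.exp_sub, mul_div_assoc]
    simp only [h1, h2]
    rw [← Finset.sum_div, ← Finset.mul_sum, hq]
    have := (hR i).ne'
    have := (Real.exp_pos (p i)).ne'
    generalize (∑ j, A j i * Real.exp (p j)) = C at *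
    generalize (∑ j, A i j * Real.exp (-(p j))) = R at *
    field_simp
end

section
/- Let n = 3 and let A be the 3×3 matrix with A_{12} = A_{23} = 1 and all other entries 0. Then for every α ∈ (3/4, 1), the effective HOTS dual function θ is unbounded below: inf{ θ(p, μ, a, b) : p ∈ ℝ⁴, (μ, a, b) ∈ ℝ³ } = −∞. -/
open BigOperators

/-- The effective HOTS dual function. -/
noncomputable def effDual {n : ℕ} (A : Matrix (Fin n) (Fin n) ℝ) (α : ℝ)
    (p : Fin (n + 1) → ℝ) (μ a b : ℝ) : ℝ :=
  (∑ i : Fin n, ∑ j : Fin n, A i j * Real.exp (p i.castSucc - p j.castSucc + μ))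
    + (∑ i : Fin n, Real.exp (-b - p (Fin.last n) + p i.castSucc + μ))
    + (∑ j : Fin n, Real.exp (a + p (Fin.last n) - p j.castSucc + μ))
    - (1 - α) * a - μ + (1 - α) * b

/-- For the 3×3 matrix with `A₁₂ = A₂₃ = 1` and all other entries `0`, the effective HOTS
dual function is unbounded below whenever `3/4 < α < 1`. -/
theorem effDual_unbounded_counterexample (α : ℝ) (hα₁ : 3 / 4 < α) (hα₂ : α < 1) :
    ∀ C : ℝ, ∃ (p : Fin 4 → ℝ) (μ a b : ℝ),
      effDual (Matrix.of ![![0, 1, 0], ![0, 0, 1], ![0, 0, 0]]) α p μ a b < C := by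
  intro C
  have hd : 0 < 4 * α - 3 := by linarith
  obtain ⟨t, ht, htC⟩ : ∃ t : ℝ, 0 ≤ t ∧ t * (4 * α - 3) = |C| + 9 :=
    ⟨(|C| + 9) / (4 * α - 3), by positivity, by field_simp⟩
  refine ⟨![-t, 0, t, 0], t, -2 * t, 2 * t, ?_⟩
  have h1 : Real.exp (-t) ≤ 1 := Real.exp_le_one_iff.2 (by linarith)
  have h2 : Real.exp (-2 * t) ≤ 1 := Real.exp_le_one_iff.2 (by linarith)
  have hC := neg_abs_le C
  have key : effDual (Matrix.of ![![0, 1, 0], ![0, 0, 1], ![0, 0, 0]]) α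
      ![-t, 0, t, 0] t (-2 * t) (2 * t)
      = 4 + 2 * Real.exp (-t) + 2 * Real.exp (-2 * t) - t * (4 * α - 3) := by
    have e1 : -(2 * t) - 0 + -t + t = -2 * t := by ring
    have e2 : -(2 * t) - 0 + 0 + t = -t := by ring
    have e3 : -(2 * t) - 0 + t + t = 0 := by ring
    have e4 : -2 * t + 0 - -t + t = 0 := by ring
    have e5 : -2 * t + 0 - 0 + t = -t := by ring
    have e6 : -2 * t + 0 - t + t = -2 * t := by ring
    have e7 : -t - 0 + t = 0 := by ring
    have e8 : 0 - t + t = 0 := by ring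
    have p0 : (![-t, 0, t, 0] : Fin 4 → ℝ) (Fin.castSucc (0 : Fin 3)) = -t := rfl
    have p1 : (![-t, 0, t, 0] : Fin 4 → ℝ) (Fin.castSucc (1 : Fin 3)) = 0 := rfl
    have p2 : (![-t, 0, t, 0] : Fin 4 → ℝ) (Fin.castSucc (2 : Fin 3)) = t := rfl
    have p3 : (![-t, 0, t, 0] : Fin 4 → ℝ) (Fin.last 3) = 0 := rfl
    unfold effDual
    simp only [Fin.sum_univ_three, p0, p1, p2, p3, e1, e2, e3, e4, e5, e6, e7, e8]
    simp only [Matrix.of_apply, Matrix.cons_val, Real.exp_zero]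
    ring
  rw [key]
  linarith
end

section
/- For every fixed p ∈ ℝ^{n+1}, the function (μ, a, b) ↦ θ(p, μ, a, b) has a unique global minimizer over ℝ³, given by μ = log((2α−1)/σ(p)), a = log(γσ(p)/Σ_{j=1}^n e^{p_{n+1} − p_j}), b = −log(γσ(p)/Σ_{i=1}^n e^{p_i − p_{n+1}}), where σ(p) = Σ_{i,j=1}^n A_{ij} e^{p_i − p_j}. -/
open BigOperators

/-- `σ(p) = Σ_{i,j} A_{ij} e^{p_i − p_j}`. -/
noncomputable def sigmaP {n : ℕ} (A : Matrix (Fin n) (Fin n) ℝ) (p : Fin (n + 1) → ℝ) : ℝ :=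
  ∑ i : Fin n, ∑ j : Fin n, A i j * Real.exp (p i.castSucc - p j.castSucc)

theorem effDual_eq_aux {n : ℕ} (A : Matrix (Fin n) (Fin n) ℝ) (α : ℝ)
    (p : Fin (n + 1) → ℝ) (μ a b : ℝ) :
    effDual A α p μ a b = sigmaP A p * Real.exp μ
      + (∑ i : Fin n, Real.exp (p i.castSucc - p (Fin.last n))) * Real.exp (μ - b)
      + (∑ j : Fin n, Real.exp (p (Fin.last n) - p j.castSucc)) * Real.exp (a + μ)
      - (1 - α) * a - μ + (1 - α) * b := by
  unfold effDual sigmaP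
  simp only [Finset.sum_mul, mul_assoc, ← Real.exp_add]
  have hx : ∀ i : Fin n, -b - p (Fin.last n) + p i.castSucc + μ
      = p i.castSucc - p (Fin.last n) + (μ - b) := fun i => by ring
  have hy : ∀ j : Fin n, a + p (Fin.last n) - p j.castSucc + μ
      = p (Fin.last n) - p j.castSucc + (a + μ) := fun i => by ring
  simp only [hx, hy]

theorem exp_gap_aux (c x x₀ K : ℝ) (h : K * Real.exp x₀ = c) :
    K * Real.exp x = c * Real.exp (x - x₀) := by
  rw [← h, mul_assoc, ← Real.exp_add]
  congr 2
  ring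

theorem zero_of_gap_aux (x : ℝ) (h : Real.exp x - 1 - x ≤ 0) : x = 0 := by
  by_contra hx
  have := Real.add_one_lt_exp hx
  linarith

/-- For fixed `p`, the dual function `(μ, a, b) ↦ θ(p, μ, a, b)` has a unique global
minimizer, given in closed form. -/
theorem effDual_unique_multiplier_minimizer {n : ℕ} (A : Matrix (Fin n) (Fin n) ℝ)
    (hA : ∀ i j, 0 ≤ A i j) (hA0 : A ≠ 0) (α : ℝ) (hα₁ : 1 / 2 < α) (hα₂ : α < 1)
    (p : Fin (n + 1) → ℝ) :
    (∀ μ a b : ℝ,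
      effDual A α p (Real.log ((2 * α - 1) / sigmaP A p))
        (Real.log ((1 - α) / (2 * α - 1) * sigmaP A p /
          ∑ j : Fin n, Real.exp (p (Fin.last n) - p j.castSucc)))
        (-Real.log ((1 - α) / (2 * α - 1) * sigmaP A p /
          ∑ i : Fin n, Real.exp (p i.castSucc - p (Fin.last n)))) ≤
      effDual A α p μ a b) ∧
    ∀ μ a b : ℝ, (∀ μ' a' b' : ℝ, effDual A α p μ a b ≤ effDual A α p μ' a' b') →
      μ = Real.log ((2 * α - 1) / sigmaP A p) ∧
      a = Real.log ((1 - α) / (2 * α - 1) * sigmaP A p /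
            ∑ j : Fin n, Real.exp (p (Fin.last n) - p j.castSucc)) ∧
      b = -Real.log ((1 - α) / (2 * α - 1) * sigmaP A p /
            ∑ i : Fin n, Real.exp (p i.castSucc - p (Fin.last n))) := by
  have hn : ∃ i j, 0 < A i j := by
    by_contra hc
    push Not at hc
    exact hA0 (by ext i j; exact le_antisymm (hc i j) (hA i j))
  obtain ⟨i₀, j₀, hij⟩ := hn
  have hS : 0 < sigmaP A p := by
    unfold sigmaP
    refine Finset.sum_pos' (fun i _ => Finset.sum_nonneg fun j _ =>
      mul_nonneg (hA i j) (Real.exp_pos _).le) ⟨i₀, Finset.mem_univ _, ?_⟩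
    exact Finset.sum_pos' (fun j _ => mul_nonneg (hA i₀ j) (Real.exp_pos _).le)
      ⟨j₀, Finset.mem_univ _, mul_pos hij (Real.exp_pos _)⟩
  have hR : 0 < ∑ i : Fin n, Real.exp (p i.castSucc - p (Fin.last n)) :=
    Finset.sum_pos (fun _ _ => Real.exp_pos _) ⟨i₀, Finset.mem_univ _⟩
  have hC : 0 < ∑ j : Fin n, Real.exp (p (Fin.last n) - p j.castSucc) :=
    Finset.sum_pos (fun _ _ => Real.exp_pos _) ⟨i₀, Finset.mem_univ _⟩
  simp only [effDual_eq_aux]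
  generalize sigmaP A p = S at *
  generalize (∑ i : Fin n, Real.exp (p i.castSucc - p (Fin.last n))) = R at *
  generalize (∑ j : Fin n, Real.exp (p (Fin.last n) - p j.castSucc)) = C at *
  have h1 : 0 < 2 * α - 1 := by linarith
  have h2 : 0 < 1 - α := by linarith
  have e1 : S * Real.exp (Real.log ((2 * α - 1) / S)) = 2 * α - 1 := by
    rw [Real.exp_log (by positivity)]
    field_simp
  have e2 : R * Real.exp (Real.log ((2 * α - 1) / S)
      - -Real.log ((1 - α) / (2 * α - 1) * S / R)) = 1 - α := by
    rw [sub_neg_eq_add, Real.exp_add, Real.exp_log (by positivity), Real.exp_log (by positivity)]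
    field_simp
  have e3 : C * Real.exp (Real.log ((1 - α) / (2 * α - 1) * S / C)
      + Real.log ((2 * α - 1) / S)) = 1 - α := by
    rw [Real.exp_add, Real.exp_log (by positivity), Real.exp_log (by positivity)]
    field_simp
    exact div_self (by intro h; linarith)
  generalize Real.log ((2 * α - 1) / S) = μ₀ at *
  generalize Real.log ((1 - α) / (2 * α - 1) * S / C) = a₀ at *
  generalize -Real.log ((1 - α) / (2 * α - 1) * S / R) = b₀ at *
  have key : ∀ μ a b : ℝ,
      (S * Real.exp μ + R * Real.exp (μ - b) + C * Real.exp (a + μ)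
        - (1 - α) * a - μ + (1 - α) * b)
      - (S * Real.exp μ₀ + R * Real.exp (μ₀ - b₀) + C * Real.exp (a₀ + μ₀)
        - (1 - α) * a₀ - μ₀ + (1 - α) * b₀)
      = (2 * α - 1) * (Real.exp (μ - μ₀) - 1 - (μ - μ₀))
        + (1 - α) * (Real.exp (μ - b - (μ₀ - b₀)) - 1 - (μ - b - (μ₀ - b₀)))
        + (1 - α) * (Real.exp (a + μ - (a₀ + μ₀)) - 1 - (a + μ - (a₀ + μ₀))) := by
    intro μ a b
    rw [exp_gap_aux _ μ _ _ e1, exp_gap_aux _ (μ - b) _ _ e2, exp_gap_aux _ (a + μ) _ _ e3,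
      e1, e2, e3]
    ring
  have nn : ∀ c x : ℝ, 0 < c → 0 ≤ c * (Real.exp x - 1 - x) := fun c x hc =>
    mul_nonneg hc.le (by linarith [Real.add_one_le_exp x])
  refine ⟨fun μ a b => ?_, fun μ a b h => ?_⟩
  · linarith [key μ a b, nn _ (μ - μ₀) h1, nn _ (μ - b - (μ₀ - b₀)) h2,
      nn _ (a + μ - (a₀ + μ₀)) h2]
  · have k := key μ a b
    have h0 := h μ₀ a₀ b₀
    have n1 := nn _ (μ - μ₀) h1
    have n2 := nn _ (μ - b - (μ₀ - b₀)) h2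
    have n3 := nn _ (a + μ - (a₀ + μ₀)) h2
    have z1 := zero_of_gap_aux _ (nonpos_of_mul_nonpos_right
      (show (2 * α - 1) * (Real.exp (μ - μ₀) - 1 - (μ - μ₀)) ≤ 0 by linarith) h1)
    have z2 := zero_of_gap_aux _ (nonpos_of_mul_nonpos_right
      (show (1 - α) * (Real.exp (μ - b - (μ₀ - b₀)) - 1 - (μ - b - (μ₀ - b₀))) ≤ 0 by
        linarith) h2)
    have z3 := zero_of_gap_aux _ (nonpos_of_mul_nonpos_right
      (show (1 - α) * (Real.exp (a + μ - (a₀ + μ₀)) - 1 - (a + μ - (a₀ + μ₀))) ≤ 0 by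
        linarith) h2)
    refine ⟨by linarith, by linarith, by linarith⟩
end

section
/- For every p ∈ ℝⁿ and every value p_{n+1} ∈ ℝ of the artificial coordinate, min{ θ((p, p_{n+1}), μ, a, b) : (μ, a, b) ∈ ℝ³ } = θ̃(p), i.e. the partial minimization of the effective HOTS dual function over (μ, a, b) has the closed form θ̃(p) = C(α) + (1−α)·log(Σ_{i=1}^n e^{−p_i}) + (1−α)·log(Σ_{i=1}^n e^{p_i}) + (2α−1)·log(Σ_{i,j=1}^n A_{ij} e^{p_i − p_j}), where C(α) = 1 − 2(1−α)log(1−α) − (2α−1)log(2α−1); in particular this value does not depend on p_{n+1}. -/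
open BigOperators

/-- The partially minimized dual function
`θ̃(p) = C(α) + (1−α) log Σ e^{−p_i} + (1−α) log Σ e^{p_i} + (2α−1) log Σ A_{ij} e^{p_i−p_j}`,
where `C(α) = 1 − 2(1−α)log(1−α) − (2α−1)log(2α−1)`. -/
noncomputable def tildeTheta {n : ℕ} (A : Matrix (Fin n) (Fin n) ℝ) (α : ℝ)
    (p : Fin n → ℝ) : ℝ :=
  (1 - 2 * (1 - α) * Real.log (1 - α) - (2 * α - 1) * Real.log (2 * α - 1))
    + (1 - α) * Real.log (∑ i, Real.exp (-(p i)))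
    + (1 - α) * Real.log (∑ i, Real.exp (p i))
    + (2 * α - 1) * Real.log (∑ i, ∑ j, A i j * Real.exp (p i - p j))

lemma effDual_aux_eq {n : ℕ} (A : Matrix (Fin n) (Fin n) ℝ) (α : ℝ)
    (q : Fin n → ℝ) (t μ a b : ℝ) :
    effDual A α (Fin.snoc q t) μ a b =
      (∑ i, ∑ j, A i j * Real.exp (q i - q j)) * Real.exp μ
      + (∑ i, Real.exp (q i)) * Real.exp (-b - t + μ)
      + (∑ i, Real.exp (-(q i))) * Real.exp (a + t + μ)
      - (1 - α) * a - μ + (1 - α) * b := by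
  unfold effDual
  simp only [Fin.snoc_castSucc, Fin.snoc_last, Finset.sum_mul]
  congr 4
  · congr 1
    · refine Finset.sum_congr rfl fun i _ => Finset.sum_congr rfl fun j _ => ?_
      rw [Real.exp_add, mul_assoc]
    · refine Finset.sum_congr rfl fun i _ => ?_
      rw [← Real.exp_add]; congr 1; ring
  · refine Finset.sum_congr rfl fun i _ => ?_
    rw [← Real.exp_add]; congr 1; ring

lemma effDual_aux_ineq {S c : ℝ} (hS : 0 < S) (hc : 0 < c) (u : ℝ) :
    c - c * Real.log c + c * (u + Real.log S) ≤ S * Real.exp u := by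
  have h := Real.add_one_le_exp (u + Real.log S - Real.log c)
  rw [Real.exp_sub, Real.exp_add, Real.exp_log hS, Real.exp_log hc, le_div_iff₀ hc] at h
  nlinarith

lemma effDual_aux_val {S c : ℝ} (hS : 0 < S) (hc : 0 < c) :
    S * Real.exp (Real.log c - Real.log S) = c := by
  rw [Real.exp_sub, Real.exp_log hS, Real.exp_log hc]
  field_simp

/-- The minimum of `θ((p, p_{n+1}), μ, a, b)` over the multipliers `(μ, a, b)` is attained
and equals `θ̃(p)`; in particular it does not depend on `p_{n+1}`. -/
theorem effDual_partial_min_closed_form {n : ℕ} (A : Matrix (Fin n) (Fin n) ℝ)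
    (hA : ∀ i j, 0 ≤ A i j) (hA0 : A ≠ 0) (α : ℝ) (hα₁ : 1 / 2 < α) (hα₂ : α < 1)
    (q : Fin n → ℝ) (t : ℝ) :
    IsLeast
      (Set.range fun z : ℝ × ℝ × ℝ => effDual A α (Fin.snoc q t) z.1 z.2.1 z.2.2)
      (tildeTheta A α q) := by
  have hne : ∃ i j, 0 < A i j := by
    by_contra! h
    exact hA0 (by ext i j; exact le_antisymm (h i j) (hA i j))
  obtain ⟨i₀, j₀, h₀⟩ := hne
  have hS : 0 < ∑ i, ∑ j, A i j * Real.exp (q i - q j) := by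
    refine Finset.sum_pos' (fun i _ => Finset.sum_nonneg fun j _ =>
      mul_nonneg (hA i j) (Real.exp_pos _).le) ⟨i₀, Finset.mem_univ _, ?_⟩
    exact Finset.sum_pos' (fun j _ => mul_nonneg (hA i₀ j) (Real.exp_pos _).le)
      ⟨j₀, Finset.mem_univ _, mul_pos h₀ (Real.exp_pos _)⟩
  have hP : 0 < ∑ i, Real.exp (q i) :=
    Finset.sum_pos (fun i _ => Real.exp_pos _) ⟨i₀, Finset.mem_univ _⟩
  have hM : 0 < ∑ i, Real.exp (-(q i)) :=
    Finset.sum_pos (fun i _ => Real.exp_pos _) ⟨i₀, Finset.mem_univ _⟩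
  have hc : 0 < 1 - α := by linarith
  have hd : 0 < 2 * α - 1 := by linarith
  simp only [effDual_aux_eq]
  unfold tildeTheta
  generalize (∑ i, ∑ j, A i j * Real.exp (q i - q j)) = S at *
  generalize (∑ i, Real.exp (q i)) = P at *
  generalize (∑ i, Real.exp (-(q i))) = M at *
  constructor
  · refine ⟨(Real.log (2 * α - 1) - Real.log S,
      Real.log (1 - α) - Real.log M - t - (Real.log (2 * α - 1) - Real.log S),
      -(Real.log (1 - α) - Real.log P) - t + (Real.log (2 * α - 1) - Real.log S)), ?_⟩
    dsimp only
    have e1 : ∀ x y : ℝ, -(-x - t + y) - t + y = x := fun x y => by ring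
    have e2 : ∀ x y : ℝ, x - t - y + t + y = x := fun x y => by ring
    rw [e1, e2, effDual_aux_val hS hd, effDual_aux_val hP hc, effDual_aux_val hM hc]
    ring
  · rintro _ ⟨⟨μ, a, b⟩, rfl⟩
    dsimp only
    have h1 := effDual_aux_ineq hS hd μ
    have h2 := effDual_aux_ineq hP hc (-b - t + μ)
    have h3 := effDual_aux_ineq hM hc (a + t + μ)
    nlinarith
end

section
/- Let d ∈ ℝⁿ with d_i > 0 for every i. Then θ̃ is strictly convex on the hyperplane H = { x ∈ ℝⁿ : Σ_{i=1}^n d_i x_i = 0 }. In particular, θ̃ has at most one global minimizer on H, and hence at most one minimizer on ℝⁿ up to addition of a constant multiple of the all-ones vector. -/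
open BigOperators

lemma lse_aux {ι : Type*} [Fintype ι] (w u v : ι → ℝ) (hw : ∀ i, 0 ≤ w i)
    (hw0 : ∃ i, 0 < w i) (a b : ℝ) (ha : 0 < a) (hb : 0 < b) (hab : a + b = 1) :
    Real.log (∑ i, w i * Real.exp (a * u i + b * v i)) ≤
      a * Real.log (∑ i, w i * Real.exp (u i)) + b * Real.log (∑ i, w i * Real.exp (v i)) ∧
    ((∃ i j, 0 < w i ∧ 0 < w j ∧ u i - v i ≠ u j - v j) →
    Real.log (∑ i, w i * Real.exp (a * u i + b * v i)) <
      a * Real.log (∑ i, w i * Real.exp (u i)) + b * Real.log (∑ i, w i * Real.exp (v i))) := by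
  have pos : ∀ f : ι → ℝ, 0 < ∑ i, w i * Real.exp (f i) := by
    intro f
    obtain ⟨i, hi⟩ := hw0
    exact Finset.sum_pos' (fun j _ => mul_nonneg (hw j) (Real.exp_pos _).le)
      ⟨i, Finset.mem_univ _, mul_pos hi (Real.exp_pos _)⟩
  have norm1 : ∀ f : ι → ℝ,
      ∑ i, w i * Real.exp (f i - Real.log (∑ j, w j * Real.exp (f j))) = 1 := by
    intro f
    simp_rw [Real.exp_sub, Real.exp_log (pos f), ← mul_div_assoc]
    rw [← Finset.sum_div, div_self (pos f).ne']
  set U := Real.log (∑ i, w i * Real.exp (u i)) with hU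
  set V := Real.log (∑ i, w i * Real.exp (v i)) with hV
  have nu : ∑ i, w i * Real.exp (u i - U) = 1 := norm1 u
  have nv : ∑ i, w i * Real.exp (v i - V) = 1 := norm1 v
  have tot : ∑ i, w i * (a * Real.exp (u i - U) + b * Real.exp (v i - V)) = 1 := by
    have : ∀ i, w i * (a * Real.exp (u i - U) + b * Real.exp (v i - V)) =
        a * (w i * Real.exp (u i - U)) + b * (w i * Real.exp (v i - V)) := fun i => by ring
    simp_rw [this]
    rw [Finset.sum_add_distrib, ← Finset.mul_sum, ← Finset.mul_sum, nu, nv]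
    linarith
  have key : ∑ i, w i * Real.exp (a * u i + b * v i) =
      Real.exp (a * U + b * V) * ∑ i, w i * Real.exp (a * (u i - U) + b * (v i - V)) := by
    rw [Finset.mul_sum]
    refine Finset.sum_congr rfl fun i _ => ?_
    rw [mul_left_comm, ← Real.exp_add]
    congr 2
    ring
  have le_i : ∀ i, w i * Real.exp (a * (u i - U) + b * (v i - V)) ≤
      w i * (a * Real.exp (u i - U) + b * Real.exp (v i - V)) := by
    intro i
    have h := convexOn_exp.2 (Set.mem_univ (u i - U)) (Set.mem_univ (v i - V)) ha.le hb.le hab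
    simp only [smul_eq_mul] at h
    exact mul_le_mul_of_nonneg_left h (hw i)
  constructor
  · rw [Real.log_le_iff_le_exp (pos _), key]
    have := Finset.sum_le_sum (fun i (_ : i ∈ Finset.univ) => le_i i)
    rw [tot] at this
    exact mul_le_of_le_one_right (Real.exp_pos _).le this
  · rintro ⟨i, j, hi, hj, hij⟩
    rw [Real.log_lt_iff_lt_exp (pos _), key]
    have hk : ∃ k, 0 < w k ∧ u k - U ≠ v k - V := by
      by_cases h : u i - U = v i - V
      · refine ⟨j, hj, fun h' => hij ?_⟩
        linarith
      · exact ⟨i, hi, h⟩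
    obtain ⟨k, hk, hne⟩ := hk
    have h := strictConvexOn_exp.2 (Set.mem_univ (u k - U)) (Set.mem_univ (v k - V))
      hne ha hb hab
    simp only [smul_eq_mul] at h
    have := Finset.sum_lt_sum (fun i (_ : i ∈ Finset.univ) => le_i i)
      ⟨k, Finset.mem_univ _, mul_lt_mul_of_pos_left h hk⟩
    rw [tot] at this
    exact mul_lt_of_lt_one_right (Real.exp_pos _) this

lemma tildeTheta_core {n : ℕ} (A : Matrix (Fin n) (Fin n) ℝ)
    (hA : ∀ i j, 0 ≤ A i j) (hA0 : A ≠ 0) (α : ℝ) (hα₁ : 1 / 2 < α) (hα₂ : α < 1)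
    (x y : Fin n → ℝ) (hxy : ∃ i j, x i - y i ≠ x j - y j)
    (a b : ℝ) (ha : 0 < a) (hb : 0 < b) (hab : a + b = 1) :
    tildeTheta A α (a • x + b • y) < a * tildeTheta A α x + b * tildeTheta A α y := by
  obtain ⟨i, j, hij⟩ := hxy
  have h1 := (lse_aux (fun _ : Fin n => (1:ℝ)) (fun i => -(x i)) (fun i => -(y i))
    (fun _ => zero_le_one) ⟨i, one_pos⟩ a b ha hb hab).1
  have h2 := (lse_aux (fun _ : Fin n => (1:ℝ)) x y
    (fun _ => zero_le_one) ⟨i, one_pos⟩ a b ha hb hab).2 ⟨i, j, one_pos, one_pos, hij⟩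
  have hpos : ∃ k : Fin n × Fin n, 0 < A k.1 k.2 := by
    by_contra! h
    exact hA0 (Matrix.ext fun i j => le_antisymm (h (i, j)) (hA i j))
  have h3 := (lse_aux (fun k : Fin n × Fin n => A k.1 k.2) (fun k => x k.1 - x k.2)
    (fun k => y k.1 - y k.2) (fun k => hA _ _) hpos a b ha hb hab).1
  simp only [Fintype.sum_prod_type, one_mul] at h1 h2 h3
  have e1 : ∀ i, -((a • x + b • y) i) = a * -(x i) + b * -(y i) := fun i => by
    simp only [Pi.add_apply, Pi.smul_apply, smul_eq_mul]; ring
  have e2 : ∀ i, (a • x + b • y) i = a * x i + b * y i := fun i => by simp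
  have e3 : ∀ i j, (a • x + b • y) i - (a • x + b • y) j
      = a * (x i - x j) + b * (y i - y j) := fun i j => by
    simp only [Pi.add_apply, Pi.smul_apply, smul_eq_mul]; ring
  unfold tildeTheta
  simp_rw [e1, e3, e2]
  have g1 := mul_le_mul_of_nonneg_left h1 (by linarith : 0 ≤ 1 - α)
  have g2 := mul_lt_mul_of_pos_left h2 (by linarith : 0 < 1 - α)
  have g3 := mul_le_mul_of_nonneg_left h3 (by linarith : 0 ≤ 2 * α - 1)
  obtain rfl : b = 1 - a := by linarith
  linarith

/-- `θ̃` is strictly convex on the hyperplane `H = {x : Σ d_i x_i = 0}` (for any positive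
weights `d`); hence it has at most one minimizer on `H`, and at most one minimizer on `ℝⁿ`
up to addition of a constant multiple of the all-ones vector. -/
theorem tildeTheta_strictConvexOn_hyperplane {n : ℕ} (A : Matrix (Fin n) (Fin n) ℝ)
    (hA : ∀ i j, 0 ≤ A i j) (hA0 : A ≠ 0) (α : ℝ) (hα₁ : 1 / 2 < α) (hα₂ : α < 1)
    (d : Fin n → ℝ) (hd : ∀ i, 0 < d i) :
    StrictConvexOn ℝ {x : Fin n → ℝ | ∑ i, d i * x i = 0} (tildeTheta A α) ∧
    (∀ x y : Fin n → ℝ, (∑ i, d i * x i = 0) → (∑ i, d i * y i = 0) →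
      (∀ z : Fin n → ℝ, (∑ i, d i * z i = 0) → tildeTheta A α x ≤ tildeTheta A α z) →
      (∀ z : Fin n → ℝ, (∑ i, d i * z i = 0) → tildeTheta A α y ≤ tildeTheta A α z) →
      x = y) ∧
    (∀ x y : Fin n → ℝ,
      (∀ z : Fin n → ℝ, tildeTheta A α x ≤ tildeTheta A α z) →
      (∀ z : Fin n → ℝ, tildeTheta A α y ≤ tildeTheta A α z) →
      ∃ c : ℝ, y = x + fun _ => c) := by
  have hn : 0 < n := by
    rcases Nat.eq_zero_or_pos n with rfl | h
    · exact absurd (Matrix.ext fun i => i.elim0) hA0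
    · exact h
  have sc : StrictConvexOn ℝ {x : Fin n → ℝ | ∑ i, d i * x i = 0} (tildeTheta A α) := by
    refine ⟨?_, ?_⟩
    · intro x hx y hy a b _ _ _
      simp only [Set.mem_ofPred_eq] at *
      have : ∀ i, d i * (a • x + b • y) i = a * (d i * x i) + b * (d i * y i) := fun i => by
        simp only [Pi.add_apply, Pi.smul_apply, smul_eq_mul]; ring
      simp_rw [this]
      rw [Finset.sum_add_distrib, ← Finset.mul_sum, ← Finset.mul_sum, hx, hy]
      simp
    · intro x hx y hy hne a b ha hb hab
      refine tildeTheta_core A hA hA0 α hα₁ hα₂ x y ?_ a b ha hb hab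
      by_contra! h
      apply hne
      simp only [Set.mem_ofPred_eq] at hx hy
      have h0 : (∑ i, d i) * (x ⟨0, hn⟩ - y ⟨0, hn⟩) = 0 := by
        rw [Finset.sum_mul]
        calc ∑ i, d i * (x ⟨0, hn⟩ - y ⟨0, hn⟩) = ∑ i, (d i * x i - d i * y i) :=
              Finset.sum_congr rfl fun i _ => by rw [h ⟨0, hn⟩ i]; ring
          _ = 0 := by rw [Finset.sum_sub_distrib, hx, hy, sub_zero]
      have hD : 0 < ∑ i, d i :=
        Finset.sum_pos (fun i _ => hd i) ⟨⟨0, hn⟩, Finset.mem_univ _⟩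
      have hc := (mul_eq_zero.mp h0).resolve_left hD.ne'
      funext i
      have := h i ⟨0, hn⟩
      linarith
  refine ⟨sc, ?_, ?_⟩
  · intro x y hx hy mx my
    exact sc.eq_of_isMinOn (fun z hz => mx z hz) (fun z hz => my z hz) hx hy
  · intro x y mx my
    by_contra! hc
    have hxy : ∃ i j, x i - y i ≠ x j - y j := by
      by_contra! h
      apply hc (y ⟨0, hn⟩ - x ⟨0, hn⟩)
      funext i
      have := h i ⟨0, hn⟩
      simp only [Pi.add_apply]
      linarith
    have := tildeTheta_core A hA hA0 α hα₁ hα₂ x y hxy (1/2) (1/2) (by norm_num) (by norm_num)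
      (by norm_num)
    have h1 := mx ((1/2 : ℝ) • x + (1/2 : ℝ) • y)
    have h2 := my ((1/2 : ℝ) • x + (1/2 : ℝ) • y)
    linarith
end

section
/- Let d ∈ ℝⁿ with d_i > 0 for every i and let H = { x ∈ ℝⁿ : Σ_{i=1}^n d_i x_i = 0 }. Then θ̃ restricted to H is coercive (θ̃(x) → +∞ as ‖x‖ → ∞ with x ∈ H) if and only if there exists a feasible flow with the same pattern as A'. -/
open BigOperators

/-- The augmented `(n+1)×(n+1)` matrix `A'`: `A` in the upper-left block, `1` on the last
row and column (except the diagonal corner, which is `0`). -/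
def augMatrix {n : ℕ} (A : Matrix (Fin n) (Fin n) ℝ) :
    Matrix (Fin (n + 1)) (Fin (n + 1)) ℝ :=
  fun i j =>
    if hi : (i : ℕ) < n then
      if hj : (j : ℕ) < n then A ⟨i, hi⟩ ⟨j, hj⟩ else 1
    else
      if (j : ℕ) < n then 1 else 0

/-- A feasible flow with the same pattern as `A'`. -/
def FeasibleFlow {n : ℕ} (A : Matrix (Fin n) (Fin n) ℝ) (α : ℝ)
    (ρ : Matrix (Fin (n + 1)) (Fin (n + 1)) ℝ) : Prop :=
  (∀ i j, 0 < augMatrix A i j → 0 < ρ i j) ∧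
  (∀ i j, augMatrix A i j = 0 → ρ i j = 0) ∧
  (∑ i, ∑ j, ρ i j = 1) ∧
  (∀ i, ∑ j, ρ i j = ∑ j, ρ j i) ∧
  (∑ j : Fin n, ρ (Fin.last n) j.castSucc = 1 - α) ∧
  (∑ i : Fin n, ρ i.castSucc (Fin.last n) = 1 - α)


lemma aug_cc {n : ℕ} (A : Matrix (Fin n) (Fin n) ℝ) (i j : Fin n) :
    augMatrix A i.castSucc j.castSucc = A i j := by simp [augMatrix]
lemma aug_cl {n : ℕ} (A : Matrix (Fin n) (Fin n) ℝ) (i : Fin n) :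
    augMatrix A i.castSucc (Fin.last n) = 1 := by simp [augMatrix]
lemma aug_lc {n : ℕ} (A : Matrix (Fin n) (Fin n) ℝ) (i : Fin n) :
    augMatrix A (Fin.last n) i.castSucc = 1 := by simp [augMatrix]
lemma aug_ll {n : ℕ} (A : Matrix (Fin n) (Fin n) ℝ) :
    augMatrix A (Fin.last n) (Fin.last n) = 0 := by simp [augMatrix]

lemma flow_iff {n : ℕ} (A : Matrix (Fin n) (Fin n) ℝ) (α : ℝ) :
    (∃ ρ, FeasibleFlow A α ρ) ↔ ∃ (u v : Fin n → ℝ) (w : Fin n → Fin n → ℝ),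
      (∀ i, 0 < u i) ∧ (∀ i, 0 < v i) ∧ (∀ i j, 0 < A i j → 0 < w i j) ∧
      (∀ i j, A i j = 0 → w i j = 0) ∧ (∑ i, u i = 1 - α) ∧ (∑ i, v i = 1 - α) ∧
      (∑ i, ∑ j, w i j = 2 * α - 1) ∧ (∀ i, ∑ j, w i j + v i = ∑ j, w j i + u i) := by
  constructor
  · rintro ⟨ρ, h1, h2, h3, h4, h5, h6⟩
    refine ⟨fun j => ρ (Fin.last n) j.castSucc, fun i => ρ i.castSucc (Fin.last n),
      fun i j => ρ i.castSucc j.castSucc, ?_, ?_, ?_, ?_, h5, h6, ?_, ?_⟩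
    · intro i; apply h1; simp [aug_lc]
    · intro i; apply h1; simp [aug_cl]
    · intro i j h; apply h1; simpa [aug_cc] using h
    · intro i j h; apply h2; simpa [aug_cc] using h
    · have h0 := h2 _ _ (aug_ll A)
      simp only [Fin.sum_univ_castSucc, Finset.sum_add_distrib] at h3
      linarith
    · intro i
      have := h4 i.castSucc
      simpa only [Fin.sum_univ_castSucc] using this
  · rintro ⟨u, v, w, hu, hv, hw, hw0, su, sv, sw, hb⟩
    let ρ : Matrix (Fin (n + 1)) (Fin (n + 1)) ℝ := fun i j =>
      if hi : (i : ℕ) < n then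
        if hj : (j : ℕ) < n then w ⟨i, hi⟩ ⟨j, hj⟩ else v ⟨i, hi⟩
      else
        if hj : (j : ℕ) < n then u ⟨j, hj⟩ else 0
    have cc : ∀ i j : Fin n, ρ i.castSucc j.castSucc = w i j := by intro i j; simp [ρ]
    have cl : ∀ i : Fin n, ρ i.castSucc (Fin.last n) = v i := by intro i; simp [ρ]
    have lc : ∀ i : Fin n, ρ (Fin.last n) i.castSucc = u i := by intro i; simp [ρ]
    have ll : ρ (Fin.last n) (Fin.last n) = 0 := by simp [ρ]
    refine ⟨ρ, ?_, ?_, ?_, ?_, ?_, ?_⟩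
    · intro i j
      refine Fin.lastCases ?_ (fun i => ?_) i <;> refine Fin.lastCases ?_ (fun j => ?_) j
      · simp [aug_ll]
      · intro _; rw [lc]; exact hu j
      · intro _; rw [cl]; exact hv i
      · rw [aug_cc, cc]; exact hw i j
    · intro i j
      refine Fin.lastCases ?_ (fun i => ?_) i <;> refine Fin.lastCases ?_ (fun j => ?_) j
      · simp [ll]
      · simp [aug_lc]
      · simp [aug_cl]
      · rw [aug_cc, cc]; exact hw0 i j
    · simp only [Fin.sum_univ_castSucc, Finset.sum_add_distrib, cc, cl, lc, ll]
      linarith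
    · intro i
      refine Fin.lastCases ?_ (fun i => ?_) i
      · simp only [Fin.sum_univ_castSucc, cc, cl, lc, ll]; linarith
      · simp only [Fin.sum_univ_castSucc, cc, cl, lc, ll]; exact hb i
    · simp only [lc]; exact su
    · simp only [cl]; exact sv

lemma sumA_pos {n : ℕ} (A : Matrix (Fin n) (Fin n) ℝ)
    (hA : ∀ i j, 0 ≤ A i j) (hA0 : A ≠ 0) (p : Fin n → ℝ) :
    0 < ∑ i, ∑ j, A i j * Real.exp (p i - p j) := by
  obtain ⟨i, j, hij⟩ : ∃ i j, A i j ≠ 0 := by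
    by_contra! h
    exact hA0 (by ext i j; exact h i j)
  have h0 : ∀ i j, 0 ≤ A i j * Real.exp (p i - p j) := fun i j =>
    mul_nonneg (hA i j) (Real.exp_pos _).le
  refine Finset.sum_pos' (fun i _ => Finset.sum_nonneg fun j _ => h0 i j)
    ⟨i, Finset.mem_univ _, Finset.sum_pos' (fun j _ => h0 i j) ⟨j, Finset.mem_univ _, ?_⟩⟩
  exact mul_pos (lt_of_le_of_ne (hA i j) hij.symm) (Real.exp_pos _)

lemma theta_lower {n : ℕ} (A : Matrix (Fin n) (Fin n) ℝ)
    (hA : ∀ i j, 0 ≤ A i j) (hA0 : A ≠ 0) (α : ℝ)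
    (u v : Fin n → ℝ) (w : Fin n → Fin n → ℝ)
    (hu : ∀ i, 0 < u i) (hv : ∀ i, 0 < v i) (hw : ∀ i j, 0 < A i j → 0 < w i j)
    (hw0 : ∀ i j, A i j = 0 → w i j = 0) (su : ∑ i, u i = 1 - α) (sv : ∑ i, v i = 1 - α)
    (sw : ∑ i, ∑ j, w i j = 2 * α - 1) (hb : ∀ i, ∑ j, w i j + v i = ∑ j, w j i + u i) :
    ∃ K : ℝ, ∀ p k l, K + u k * (p k - p l) ≤ tildeTheta A α p := by
  refine ⟨(1 - 2 * (1 - α) * Real.log (1 - α) - (2 * α - 1) * Real.log (2 * α - 1))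
    + ∑ i, ∑ j, w i j * Real.log (A i j), fun p k l => ?_⟩
  unfold tildeTheta
  set L1 := Real.log (∑ i, Real.exp (-(p i))) with hL1
  set L2 := Real.log (∑ i, Real.exp (p i)) with hL2
  set L3 := Real.log (∑ i, ∑ j, A i j * Real.exp (p i - p j)) with hL3
  have b1 : ∀ i, -(p i) ≤ L1 := by
    intro i
    have := Finset.single_le_sum (f := fun i => Real.exp (-(p i)))
      (fun i _ => (Real.exp_pos _).le) (Finset.mem_univ i)
    exact (Real.le_log_iff_exp_le (lt_of_lt_of_le (Real.exp_pos _) this)).2 this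
  have b2 : ∀ i, p i ≤ L2 := by
    intro i
    have := Finset.single_le_sum (f := fun i => Real.exp (p i))
      (fun i _ => (Real.exp_pos _).le) (Finset.mem_univ i)
    exact (Real.le_log_iff_exp_le (lt_of_lt_of_le (Real.exp_pos _) this)).2 this
  have b3 : ∀ i j, w i j * (p i - p j + Real.log (A i j)) ≤ w i j * L3 := by
    intro i j
    rcases (hA i j).eq_or_lt with h | h
    · simp [hw0 i j h.symm]
    · refine mul_le_mul_of_nonneg_left ?_ (hw i j h).le
      rw [hL3, Real.le_log_iff_exp_le (sumA_pos A hA hA0 p), Real.exp_add, Real.exp_log h,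
        mul_comm]
      have h0 : ∀ i j, 0 ≤ A i j * Real.exp (p i - p j) := fun i j =>
        mul_nonneg (hA i j) (Real.exp_pos _).le
      exact (Finset.single_le_sum (f := fun j => A i j * Real.exp (p i - p j))
        (fun j _ => h0 i j) (Finset.mem_univ j)).trans
        (Finset.single_le_sum (f := fun i => ∑ j, A i j * Real.exp (p i - p j))
        (fun i _ => Finset.sum_nonneg fun j _ => h0 i j) (Finset.mem_univ i))
  have s3 : ∑ i, ∑ j, w i j * (p i - p j + Real.log (A i j)) ≤ (2 * α - 1) * L3 := by
    rw [← sw, Finset.sum_mul]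
    refine Finset.sum_le_sum fun i _ => ?_
    rw [Finset.sum_mul]
    exact Finset.sum_le_sum fun j _ => b3 i j
  have s1 : u k * (p k + L1) ≤ (1 - α) * L1 + ∑ i, u i * p i := by
    rw [← su, Finset.sum_mul, ← Finset.sum_add_distrib]
    have := Finset.single_le_sum (f := fun i => u i * (p i + L1))
      (fun i _ => mul_nonneg (hu i).le (by linarith [b1 i])) (Finset.mem_univ k)
    refine this.trans (le_of_eq (Finset.sum_congr rfl fun i _ => by ring))
  have s2 : 0 ≤ (1 - α) * L2 - ∑ i, v i * p i := by
    rw [← sv, Finset.sum_mul, ← Finset.sum_sub_distrib]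
    refine Finset.sum_nonneg fun i _ => ?_
    have := mul_nonneg (hv i).le (sub_nonneg.2 (b2 i))
    linarith
  have s4 : ∑ i, ∑ j, w i j * (p i - p j + Real.log (A i j))
      = ∑ i, u i * p i - ∑ i, v i * p i + ∑ i, ∑ j, w i j * Real.log (A i j) := by
    have e1 : ∑ i, ∑ j, w i j * p j = ∑ i, (∑ j, w j i) * p i := by
      rw [Finset.sum_comm]
      exact Finset.sum_congr rfl fun i _ => by rw [Finset.sum_mul]
    have e2 : ∑ i, ∑ j, w i j * p i = ∑ i, (∑ j, w i j) * p i :=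
      Finset.sum_congr rfl fun i _ => by rw [Finset.sum_mul]
    have e3 : ∑ i, (∑ j, w i j) * p i + ∑ i, v i * p i
        = ∑ i, (∑ j, w j i) * p i + ∑ i, u i * p i := by
      rw [← Finset.sum_add_distrib, ← Finset.sum_add_distrib]
      exact Finset.sum_congr rfl fun i _ => by rw [← add_mul, ← add_mul, hb i]
    simp only [mul_add, mul_sub, Finset.sum_add_distrib, Finset.sum_sub_distrib]
    linarith
  have s5 : u k * (p k - p l) ≤ u k * (p k + L1) :=
    mul_le_mul_of_nonneg_left (by linarith [b1 l]) (hu k).le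
  linarith

lemma theta_shift {n : ℕ} (A : Matrix (Fin n) (Fin n) ℝ) (hn : 0 < n)
    (α : ℝ) (p : Fin n → ℝ) (c : ℝ) :
    tildeTheta A α (fun i => p i - c) = tildeTheta A α p := by
  have : Nonempty (Fin n) := ⟨⟨0, hn⟩⟩
  have h1 : 0 < ∑ i, Real.exp (-(p i)) :=
    Finset.sum_pos (fun i _ => Real.exp_pos _) Finset.univ_nonempty
  have h2 : 0 < ∑ i, Real.exp (p i) :=
    Finset.sum_pos (fun i _ => Real.exp_pos _) Finset.univ_nonempty
  have e1 : ∑ i, Real.exp (-(p i - c)) = Real.exp c * ∑ i, Real.exp (-(p i)) := by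
    rw [Finset.mul_sum]
    exact Finset.sum_congr rfl fun i _ => by rw [← Real.exp_add]; congr 1; ring
  have e2 : ∑ i, Real.exp (p i - c) = Real.exp (-c) * ∑ i, Real.exp (p i) := by
    rw [Finset.mul_sum]
    exact Finset.sum_congr rfl fun i _ => by rw [← Real.exp_add]; congr 1; ring
  unfold tildeTheta
  simp only [e1, e2, sub_sub_sub_cancel_right]
  rw [Real.log_mul (Real.exp_pos _).ne' h1.ne', Real.log_mul (Real.exp_pos _).ne' h2.ne',
    Real.log_exp, Real.log_exp]
  ring

lemma flow_of_min {n : ℕ} (A : Matrix (Fin n) (Fin n) ℝ)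
    (hA : ∀ i j, 0 ≤ A i j) (hA0 : A ≠ 0) (hn : 0 < n) (α : ℝ) (hα₁ : 1 / 2 < α) (hα₂ : α < 1)
    (p : Fin n → ℝ) (hp : ∀ q, tildeTheta A α p ≤ tildeTheta A α q) :
    ∃ (u v : Fin n → ℝ) (w : Fin n → Fin n → ℝ),
      (∀ i, 0 < u i) ∧ (∀ i, 0 < v i) ∧ (∀ i j, 0 < A i j → 0 < w i j) ∧
      (∀ i j, A i j = 0 → w i j = 0) ∧ (∑ i, u i = 1 - α) ∧ (∑ i, v i = 1 - α) ∧
      (∑ i, ∑ j, w i j = 2 * α - 1) ∧ (∀ i, ∑ j, w i j + v i = ∑ j, w j i + u i) := by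
  have : Nonempty (Fin n) := ⟨⟨0, hn⟩⟩
  have h1 : 0 < ∑ i, Real.exp (-(p i)) :=
    Finset.sum_pos (fun i _ => Real.exp_pos _) Finset.univ_nonempty
  have h2 : 0 < ∑ i, Real.exp (p i) :=
    Finset.sum_pos (fun i _ => Real.exp_pos _) Finset.univ_nonempty
  have h3 := sumA_pos A hA hA0 p
  set S1 := ∑ i, Real.exp (-(p i)) with hS1
  set S2 := ∑ i, Real.exp (p i) with hS2
  set S3 := ∑ i, ∑ j, A i j * Real.exp (p i - p j) with hS3
  have a1 : 0 < 1 - α := by linarith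
  have a2 : 0 < 2 * α - 1 := by linarith
  refine ⟨fun i => (1 - α) * (Real.exp (-(p i)) / S1), fun i => (1 - α) * (Real.exp (p i) / S2),
    fun i j => (2 * α - 1) * (A i j * Real.exp (p i - p j) / S3), ?_, ?_, ?_, ?_, ?_, ?_, ?_, ?_⟩
  · intro i; positivity
  · intro i; positivity
  · intro i j h; positivity
  · intro i j h; simp [h]
  · rw [← Finset.mul_sum, ← Finset.sum_div, ← hS1, div_self h1.ne', mul_one]
  · rw [← Finset.mul_sum, ← Finset.sum_div, ← hS2, div_self h2.ne', mul_one]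
  · simp only [← Finset.mul_sum, ← Finset.sum_div]
    rw [← hS3, div_self h3.ne', mul_one]
  · intro k
    let δ : Fin n → ℝ := fun i => if i = k then 1 else 0
    have d0 : ∀ i, HasDerivAt (fun t : ℝ => p i + t * δ i) (δ i) 0 := fun i => by
      simpa using ((hasDerivAt_id (0:ℝ)).mul_const (δ i)).const_add (p i)
    have d1 : HasDerivAt (fun t : ℝ => ∑ i, Real.exp (-(p i + t * δ i)))
        (∑ i, Real.exp (-(p i)) * (-δ i)) 0 := by
      refine HasDerivAt.fun_sum fun i _ => ?_
      simpa using (d0 i).neg.exp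
    have d2 : HasDerivAt (fun t : ℝ => ∑ i, Real.exp (p i + t * δ i))
        (∑ i, Real.exp (p i) * δ i) 0 := by
      refine HasDerivAt.fun_sum fun i _ => ?_
      simpa using (d0 i).exp
    have d3 : HasDerivAt (fun t : ℝ => ∑ i, ∑ j, A i j * Real.exp ((p i + t * δ i) - (p j + t * δ j)))
        (∑ i, ∑ j, A i j * (Real.exp (p i - p j) * (δ i - δ j))) 0 := by
      refine HasDerivAt.fun_sum fun i _ => HasDerivAt.fun_sum fun j _ => ?_
      simpa using (((d0 i).sub (d0 j)).exp).const_mul (A i j)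
    have D := (((d1.log (by simpa using h1.ne')).const_mul (1 - α)).const_add
      (1 - 2 * (1 - α) * Real.log (1 - α) - (2 * α - 1) * Real.log (2 * α - 1))).add
      ((d2.log (by simpa using h2.ne')).const_mul (1 - α)) |>.add
      ((d3.log (by simpa using h3.ne')).const_mul (2 * α - 1))
    have M : IsLocalMin (fun t : ℝ => tildeTheta A α (fun i => p i + t * δ i)) 0 := by
      refine Filter.Eventually.of_forall fun t => ?_
      simpa using hp (fun i => p i + t * δ i)
    have Z := M.hasDerivAt_eq_zero D
    simp only [zero_mul, add_zero, ← hS1, ← hS2, ← hS3] at Z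
    have z1 : ∑ i, Real.exp (-(p i)) * (-δ i) = - Real.exp (-(p k)) := by simp [δ]
    have z2 : ∑ i, Real.exp (p i) * δ i = Real.exp (p k) := by simp [δ]
    have z3 : ∑ i, ∑ j, A i j * (Real.exp (p i - p j) * (δ i - δ j))
        = ∑ j, A k j * Real.exp (p k - p j) - ∑ j, A j k * Real.exp (p j - p k) := by
      simp only [mul_sub, Finset.sum_sub_distrib]
      congr 1
      · rw [Finset.sum_comm]; simp [δ]
      · simp [δ]
    rw [z1, z2, z3] at Z
    simp only [← Finset.mul_sum, ← Finset.sum_div]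
    rw [sub_div, neg_div] at Z
    linarith

lemma theta_cont {n : ℕ} (A : Matrix (Fin n) (Fin n) ℝ)
    (hA : ∀ i j, 0 ≤ A i j) (hA0 : A ≠ 0) (hn : 0 < n) (α : ℝ) :
    Continuous (tildeTheta A α) := by
  have : Nonempty (Fin n) := ⟨⟨0, hn⟩⟩
  have h1 : ∀ p : Fin n → ℝ, ∑ i, Real.exp (-(p i)) ≠ 0 := fun p =>
    (Finset.sum_pos (fun i _ => Real.exp_pos _) Finset.univ_nonempty).ne'
  have h2 : ∀ p : Fin n → ℝ, ∑ i, Real.exp (p i) ≠ 0 := fun p =>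
    (Finset.sum_pos (fun i _ => Real.exp_pos _) Finset.univ_nonempty).ne'
  have h3 := fun p => (sumA_pos A hA hA0 p).ne'
  have c1 := Continuous.log (f := fun p : Fin n → ℝ => ∑ i, Real.exp (-(p i))) (by fun_prop) h1
  have c2 := Continuous.log (f := fun p : Fin n → ℝ => ∑ i, Real.exp (p i)) (by fun_prop) h2
  have c3 := Continuous.log (f := fun p : Fin n → ℝ => ∑ i, ∑ j, A i j * Real.exp (p i - p j))
    (by fun_prop) h3
  unfold tildeTheta
  fun_prop

/-- `θ̃` is coercive on the hyperplane `{x : Σ d_i x_i = 0}` if and only if there exists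
a feasible flow with the same pattern as `A'`. -/
theorem tildeTheta_coercive_iff_feasibleFlow {n : ℕ} (A : Matrix (Fin n) (Fin n) ℝ)
    (hA : ∀ i j, 0 ≤ A i j) (hA0 : A ≠ 0) (α : ℝ) (hα₁ : 1 / 2 < α) (hα₂ : α < 1)
    (d : Fin n → ℝ) (hd : ∀ i, 0 < d i) :
    (∀ C : ℝ, ∃ R : ℝ, ∀ x : Fin n → ℝ, (∑ i, d i * x i = 0) → R ≤ ‖x‖ →
      C ≤ tildeTheta A α x) ↔
    ∃ ρ : Matrix (Fin (n + 1)) (Fin (n + 1)) ℝ, FeasibleFlow A α ρ := by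
  have hn : 0 < n := by
    rcases Nat.eq_zero_or_pos n with h | h
    · subst h; exact absurd (Subsingleton.elim A 0) hA0
    · exact h
  have : Nonempty (Fin n) := ⟨⟨0, hn⟩⟩
  rw [flow_iff]
  constructor
  · intro h
    obtain ⟨R, hR⟩ := h (tildeTheta A α 0)
    have hcl : IsClosed {x : Fin n → ℝ | ∑ i, d i * x i = 0} :=
      isClosed_eq (by fun_prop) continuous_const
    have hK : IsCompact (Metric.closedBall (0 : Fin n → ℝ) (max R 0) ∩
        {x : Fin n → ℝ | ∑ i, d i * x i = 0}) :=
      (isCompact_closedBall _ _).inter_right hcl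
    have hz : (0 : Fin n → ℝ) ∈ (Metric.closedBall (0 : Fin n → ℝ) (max R 0) ∩
        {x : Fin n → ℝ | ∑ i, d i * x i = 0}) := by simp
    obtain ⟨p, -, hp⟩ := hK.exists_isMinOn ⟨0, hz⟩ (theta_cont A hA hA0 hn α).continuousOn
    refine flow_of_min A hA hA0 hn α hα₁ hα₂ p fun q => ?_
    have hD : 0 < ∑ i, d i := Finset.sum_pos (fun i _ => hd i) Finset.univ_nonempty
    rw [← theta_shift A hn α q ((∑ i, d i * q i) / ∑ i, d i)]
    set x : Fin n → ℝ := fun i => q i - (∑ i, d i * q i) / ∑ i, d i with hx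
    have hxH : ∑ i, d i * x i = 0 := by
      simp only [hx, mul_sub, Finset.sum_sub_distrib, ← Finset.sum_mul]
      field_simp
      simp
    by_cases hxR : ‖x‖ ≤ max R 0
    · exact hp ⟨by simpa using hxR, hxH⟩
    · exact le_trans (hp hz) (hR x hxH ((le_max_left _ _).trans (not_le.1 hxR).le))
  · rintro ⟨u, v, w, hu, hv, hw, hw0, su, sv, sw, hb⟩ C
    obtain ⟨K, hK⟩ := theta_lower A hA hA0 α u v w hu hv hw hw0 su sv sw hb
    obtain ⟨m, hm⟩ := Finite.exists_min u
    refine ⟨(C - K) / u m, fun x hx hR => ?_⟩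
    have hpos : ∃ j, 0 ≤ x j := by
      by_contra! hc
      have : ∑ i, d i * x i < 0 := Finset.sum_neg
        (fun i _ => mul_neg_of_pos_of_neg (hd i) (hc i)) Finset.univ_nonempty
      linarith
    have hneg : ∃ j, x j ≤ 0 := by
      by_contra! hc
      have : 0 < ∑ i, d i * x i := Finset.sum_pos
        (fun i _ => mul_pos (hd i) (hc i)) Finset.univ_nonempty
      linarith
    obtain ⟨a, ha⟩ := hpos
    obtain ⟨b, hb'⟩ := hneg
    have key : ∀ k l, x l ≤ x k → u m * (x k - x l) ≤ tildeTheta A α x - K := fun k l hkl => by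
      have := hK x k l
      have := mul_le_mul_of_nonneg_right (hm k) (sub_nonneg.2 hkl)
      linarith
    have hnorm : ‖x‖ ≤ (tildeTheta A α x - K) / u m := by
      rw [pi_norm_le_iff_of_nonempty]
      intro k
      rw [le_div_iff₀ (hu m), mul_comm, Real.norm_eq_abs]
      rcases le_total 0 (x k) with h | h
      · rw [abs_of_nonneg h]
        have := key k b (by linarith)
        have := mul_le_mul_of_nonneg_left (show x k ≤ x k - x b by linarith) (hu m).le
        linarith
      · rw [abs_of_nonpos h]
        have := key a k (by linarith)
        have := mul_le_mul_of_nonneg_left (show -x k ≤ x a - x k by linarith) (hu m).le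
        linarith
    have := (div_le_div_iff_of_pos_right (hu m)).1 (hR.trans hnorm)
    linarith
end

section
/- Fix (μ, a, b) ∈ ℝ³ and define f^λ : ℝ^{n+1} → ℝ^{n+1} by f^λ_i(p) = (1/2)·(log(Σ_{j=1}^n A_{ji} e^{p_j} + e^{a + p_{n+1}}) − log(Σ_{k=1}^n A_{ik} e^{−p_k} + e^{−b − p_{n+1}})) for i ≤ n, and f^λ_{n+1}(p) = (1/2)·(log(Σ_{j=1}^n e^{−b + p_j}) − log(Σ_{k=1}^n e^{a − p_k})). If A ≠ 0, then for every initial point p⁰ ∈ ℝ^{n+1}, the iterates p^{k+1} = f^λ(p^k) converge to a global minimizer of the function p ↦ θ(p, μ, a, b); moreover the set of global minimizers of this function is nonempty and equals { p* + c𝟙 : c ∈ ℝ } for any one minimizer p*, where 𝟙 is the all-ones vector of ℝ^{n+1}. -/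
open BigOperators Filter

/-- The fixed-multiplier map `f^λ` for `λ = (μ, a, b)` (it only depends on `a`, `b`). -/
noncomputable def fLam {n : ℕ} (A : Matrix (Fin n) (Fin n) ℝ) (a b : ℝ)
    (p : Fin (n + 1) → ℝ) : Fin (n + 1) → ℝ :=
  Fin.lastCases
    ((1 / 2) * (Real.log (∑ j : Fin n, Real.exp (-b + p j.castSucc))
      - Real.log (∑ k : Fin n, Real.exp (a - p k.castSucc))))
    (fun i => (1 / 2) *
      (Real.log ((∑ j : Fin n, A j i * Real.exp (p j.castSucc))
          + Real.exp (a + p (Fin.last n)))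
        - Real.log ((∑ k : Fin n, A i k * Real.exp (-(p k.castSucc)))
          + Real.exp (-b - p (Fin.last n)))))

section gen
variable {ι : Type*} [Fintype ι]

noncomputable def GG (M : ι → ι → ℝ) (p : ι → ℝ) (i : ι) : ℝ :=
  (1 / 2) * (Real.log (∑ j, M j i * Real.exp (p j)) - Real.log (∑ k, M i k * Real.exp (-(p k))))

/-- positivity of rows and columns -/
def Good (M : ι → ι → ℝ) : Prop :=
  (∀ i j, 0 ≤ M i j) ∧ (∀ i, ∃ j, 0 < M i j) ∧ (∀ i, ∃ j, 0 < M j i)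

lemma wsum_pos (w : ι → ℝ) (hw : ∀ i, 0 ≤ w i) (hp : ∃ i, 0 < w i) (x : ι → ℝ) :
    0 < ∑ i, w i * Real.exp (x i) := by
  obtain ⟨i, hi⟩ := hp
  exact Finset.sum_pos' (fun j _ => mul_nonneg (hw j) (Real.exp_pos _).le)
    ⟨i, Finset.mem_univ _, mul_pos hi (Real.exp_pos _)⟩

lemma wlog_le (w : ι → ℝ) (hw : ∀ i, 0 ≤ w i) (hp : ∃ i, 0 < w i) (x y : ι → ℝ) (T : ℝ)
    (h : ∀ i, x i ≤ y i + T) :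
    Real.log (∑ i, w i * Real.exp (x i)) ≤ Real.log (∑ i, w i * Real.exp (y i)) + T ∧
    (Real.log (∑ i, w i * Real.exp (x i)) = Real.log (∑ i, w i * Real.exp (y i)) + T →
      ∀ i, 0 < w i → x i = y i + T) := by
  have hT : Real.log (∑ i, w i * Real.exp (y i)) + T
      = Real.log (∑ i, w i * Real.exp (y i + T)) := by
    have : ∑ i, w i * Real.exp (y i + T) = (∑ i, w i * Real.exp (y i)) * Real.exp T := by
      rw [Finset.sum_mul]
      exact Finset.sum_congr rfl fun i _ => by rw [Real.exp_add]; ring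
    rw [this, Real.log_mul (wsum_pos w hw hp y).ne' (Real.exp_pos _).ne', Real.log_exp]
  rw [hT]
  have hle : ∀ i ∈ Finset.univ, w i * Real.exp (x i) ≤ w i * Real.exp (y i + T) := fun i _ =>
    mul_le_mul_of_nonneg_left (Real.exp_le_exp.2 (h i)) (hw i)
  refine ⟨Real.log_le_log (wsum_pos w hw hp x) (Finset.sum_le_sum hle), fun he i hi => ?_⟩
  have he' := Real.log_injOn_pos (wsum_pos w hw hp x) (wsum_pos w hw hp fun i => y i + T) he
  have := (Finset.sum_eq_sum_iff_of_le hle).1 he' i (Finset.mem_univ _)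
  exact Real.exp_injective (mul_left_cancel₀ hi.ne' this)

lemma GG_step {M : ι → ι → ℝ} (hM : Good M) (p q : ι → ℝ) (T : ℝ) (h : ∀ j, p j ≤ q j + T)
    (i : ι) : GG M p i ≤ GG M q i + T ∧
      (GG M p i = GG M q i + T → ∀ j, (0 < M i j ∨ 0 < M j i) → p j = q j + T) := by
  have h1 := wlog_le (fun j => M j i) (fun j => hM.1 j i) (hM.2.2 i) p q T h
  have h2 := wlog_le (fun j => M i j) (fun j => hM.1 i j) (hM.2.1 i) (fun k => -(q k))
    (fun k => -(p k)) T (fun k => by linarith [h k])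
  unfold GG
  refine ⟨by linarith [h1.1, h2.1], fun he j hj => ?_⟩
  rcases hj with hj | hj
  · have := h2.2 (by linarith [h1.1, h2.1]) j hj
    linarith
  · exact h1.2 (by linarith [h1.1, h2.1]) j hj

lemma GG_cont {M : ι → ι → ℝ} (hM : Good M) : Continuous (GG M) := by
  refine continuous_pi fun i => ?_
  unfold GG
  refine continuous_const.mul (Continuous.sub ?_ ?_)
  · exact Continuous.log (by fun_prop) fun p =>
      (wsum_pos (fun j => M j i) (fun j => hM.1 j i) (hM.2.2 i) p).ne'
  · exact Continuous.log (by fun_prop) fun p =>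
      (wsum_pos (fun j => M i j) (fun j => hM.1 i j) (hM.2.1 i) fun k => -(p k)).ne'

def Prim (M : ι → ι → ℝ) : Prop :=
  ∀ i j, ∃ x y z, (0 < M i x ∨ 0 < M x i) ∧ (0 < M x y ∨ 0 < M y x) ∧
    (0 < M y z ∨ 0 < M z y) ∧ (0 < M z j ∨ 0 < M j z)

lemma four {M : ι → ι → ℝ} (hM : Good M) (hP : Prim M) (p q : ι → ℝ) (T : ℝ)
    (h : ∀ j, p j ≤ q j + T) (i : ι)
    (he : (GG M)^[4] p i = (GG M)^[4] q i + T) (j : ι) : p j = q j + T := by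
  obtain ⟨x, y, z, hx, hy, hz, hj⟩ := hP i j
  have h1 := fun i => (GG_step hM _ _ T h i).1
  have h2 := fun i => (GG_step hM _ _ T h1 i).1
  have h3 := fun i => (GG_step hM _ _ T h2 i).1
  have e3 := (GG_step hM _ _ T h3 i).2 he x hx
  have e2 := (GG_step hM _ _ T h2 x).2 e3 y hy
  have e1 := (GG_step hM _ _ T h1 y).2 e2 z hz
  exact (GG_step hM _ _ T h z).2 e1 j hj

lemma GG_fix_unique [Nonempty ι] {M : ι → ι → ℝ} (hM : Good M) (hP : Prim M) (p q : ι → ℝ)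
    (hp : GG M p = p) (hq : GG M q = q) : ∃ c : ℝ, p = q + fun _ => c := by
  obtain ⟨i, hi⟩ := Finite.exists_max (fun i => p i - q i)
  refine ⟨p i - q i, funext fun j => ?_⟩
  refine four hM hP p q _ (fun j => by linarith [hi j]) i ?_ j
  rw [Function.iterate_fixed hp, Function.iterate_fixed hq]; ring

lemma GG_fix_add {M : ι → ι → ℝ} (hM : Good M) (q : ι → ℝ) (hq : GG M q = q) (c : ℝ) :
    GG M (q + fun _ => c) = q + fun _ => c := by
  funext i
  have h1 := (GG_step hM (q + fun _ => c) q c (fun j => le_rfl) i).1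
  have h2 := (GG_step hM q (q + fun _ => c) (-c) (fun j => by simp) i).1
  rw [hq] at h1 h2
  simp only [Pi.add_apply]
  linarith

lemma GG_dist {M : ι → ι → ℝ} (hM : Good M) (p q : ι → ℝ) :
    dist (GG M p) (GG M q) ≤ dist p q := by
  refine (dist_pi_le_iff dist_nonneg).2 fun i => ?_
  have hd : ∀ j, |p j - q j| ≤ dist p q := fun j => dist_le_pi_dist p q j
  rw [Real.dist_eq, abs_le]
  have h1 := (GG_step hM p q (dist p q) (fun j => by linarith [(abs_le.1 (hd j)).2]) i).1
  have h2 := (GG_step hM q p (dist p q) (fun j => by linarith [(abs_le.1 (hd j)).1]) i).1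
  constructor <;> linarith

lemma GG_conv [Nonempty ι] {M : ι → ι → ℝ} (hM : Good M) (hP : Prim M) (q : ι → ℝ)
    (hq : GG M q = q) (p0 : ι → ℝ) :
    ∃ c : ℝ, Tendsto (fun k => (GG M)^[k] p0) atTop (nhds (q + fun _ => c)) := by
  set u : ℕ → ι → ℝ := fun k => (GG M)^[k] p0 with hu
  have hus : ∀ k, u (k + 1) = GG M (u k) := fun k => Function.iterate_succ_apply' _ _ _
  have hanti : ∀ r, GG M r = r → Antitone fun k => dist (u k) r := fun r hr =>
    antitone_nat_of_succ_le fun k => by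
      have := GG_dist hM (u k) r
      rw [hr] at this
      rw [hus]; exact this
  let h : (ι → ℝ) → ℝ := fun p => Finset.univ.sup' Finset.univ_nonempty fun i => p i - q i
  have hle : ∀ p i, p i ≤ q i + h p := fun p i => by
    have := Finset.le_sup' (fun i => p i - q i) (Finset.mem_univ i)
    change p i - q i ≤ h p at this
    linarith
  have hex : ∀ p, ∃ i, p i = q i + h p := fun p => by
    obtain ⟨i, -, hi⟩ := Finset.exists_mem_eq_sup' Finset.univ_nonempty fun i => p i - q i
    refine ⟨i, ?_⟩
    change h p = _ at hi
    linarith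
  have hc : Continuous h := by
    apply Continuous.finset_sup'_apply
    intro i _
    fun_prop
  have hstep : ∀ p, h (GG M p) ≤ h p := fun p => by
    obtain ⟨i, hi⟩ := hex (GG M p)
    have := (GG_step hM p q (h p) (hle p) i).1
    rw [hq] at this
    linarith
  have hanti2 : Antitone fun k => h (u k) := antitone_nat_of_succ_le fun k => by
    rw [hus]; exact hstep _
  have hbdd : BddBelow (Set.range fun k => h (u k)) := by
    refine ⟨-dist (u 0) q, ?_⟩
    rintro _ ⟨k, rfl⟩
    obtain ⟨i⟩ := ‹Nonempty ι›
    have h1 : |u k i - q i| ≤ dist (u k) q := dist_le_pi_dist (u k) q i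
    have h2 : dist (u k) q ≤ dist (u 0) q := hanti q hq (Nat.zero_le k)
    have h3 := hle (u k) i
    have := (abs_le.1 h1).1
    simp only
    linarith
  have hT := tendsto_atTop_ciInf hanti2 hbdd
  set T := ⨅ k, h (u k) with hTdef
  obtain ⟨r, -, φ, hφ, hr⟩ := (isCompact_closedBall q (dist (u 0) q)).tendsto_subseq
    (x := u) (fun k => hanti q hq (Nat.zero_le k))
  have e1 : h r = T := tendsto_nhds_unique ((hc.tendsto r).comp hr) (hT.comp hφ.tendsto_atTop)
  have hr4 : Tendsto (fun k => u (φ k + 4)) atTop (nhds ((GG M)^[4] r)) := by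
    have := (((GG_cont hM).iterate 4).tendsto r).comp hr
    refine this.congr fun k => ?_
    simp only [Function.comp, hu]
    rw [← Function.iterate_add_apply, Nat.add_comm]
  have e2 : h ((GG M)^[4] r) = T := tendsto_nhds_unique ((hc.tendsto _).comp hr4)
    (hT.comp ((tendsto_add_atTop_nat 4).comp hφ.tendsto_atTop))
  obtain ⟨i, hi⟩ := hex ((GG M)^[4] r)
  have hrT : r = q + fun _ => T := funext fun j => by
    refine four hM hP r q T (fun j => e1 ▸ hle r j) i ?_ j
    rw [hi, e2, Function.iterate_fixed hq]
  refine ⟨T, ?_⟩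
  rw [← hrT]
  have hfix : GG M r = r := by rw [hrT]; exact GG_fix_add hM q hq T
  have hd := tendsto_atTop_ciInf (hanti r hfix) ⟨0, by rintro _ ⟨k, rfl⟩; exact dist_nonneg⟩
  have h0 : Tendsto (fun k => dist (u (φ k)) r) atTop (nhds 0) := tendsto_iff_dist_tendsto_zero.1 hr
  rw [tendsto_nhds_unique (hd.comp hφ.tendsto_atTop) h0] at hd
  exact tendsto_iff_dist_tendsto_zero.2 hd

noncomputable def Phi (M : ι → ι → ℝ) (p : ι → ℝ) : ℝ := ∑ i, ∑ j, M i j * Real.exp (p i - p j)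

lemma Phi_min_fix {M : ι → ι → ℝ} (hM : Good M) (p : ι → ℝ)
    (hmin : ∀ q, Phi M p ≤ Phi M q) : GG M p = p := by
  classical
  funext k
  let e : ι → ℝ := fun i => if i = k then 1 else 0
  have hder : HasDerivAt (fun s : ℝ => Phi M (fun i => p i + s * e i))
      (∑ i, ∑ j, M i j * (Real.exp ((p i + 0 * e i) - (p j + 0 * e j)) * (e i - e j))) 0 := by
    unfold Phi
    refine HasDerivAt.fun_sum fun i _ => HasDerivAt.fun_sum fun j _ => ?_
    refine HasDerivAt.const_mul _ (HasDerivAt.exp ?_)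
    have h1 : ∀ i, HasDerivAt (fun s : ℝ => p i + s * e i) (e i) 0 := fun i => by
      simpa using ((hasDerivAt_id (0:ℝ)).mul_const (e i)).const_add (p i)
    exact (h1 i).sub (h1 j)
  have hloc : IsLocalMin (fun s : ℝ => Phi M (fun i => p i + s * e i)) 0 := by
    refine Filter.Eventually.of_forall fun s => ?_
    simpa using hmin _
  have h0 := hloc.hasDerivAt_eq_zero hder
  have h1 : ∑ i, ∑ j, M i j * (Real.exp ((p i + 0 * e i) - (p j + 0 * e j)) * (e i - e j))
      = (∑ j, M k j * Real.exp (-(p j))) * Real.exp (p k)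
        - (∑ j, M j k * Real.exp (p j)) * Real.exp (-(p k)) := by
    have : ∀ i j, M i j * (Real.exp ((p i + 0 * e i) - (p j + 0 * e j)) * (e i - e j))
      = (if i = k then M i j * Real.exp (p i - p j) else 0)
        - (if j = k then M i j * Real.exp (p i - p j) else 0) := by
      intro i j
      simp only [e]
      split_ifs <;> simp
    simp only [this, Finset.sum_sub_distrib]
    rw [Finset.sum_comm]
    simp only [Finset.sum_ite_eq', Finset.mem_univ, if_true, Finset.sum_mul]
    congr 1 <;> refine Finset.sum_congr rfl fun j _ => ?_ <;> rw [mul_assoc, ← Real.exp_add] <;>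
      ring_nf
  rw [h1, sub_eq_zero] at h0
  have hX := wsum_pos (fun j => M k j) (fun j => hM.1 k j) (hM.2.1 k) fun j => -(p j)
  have hY := wsum_pos (fun j => M j k) (fun j => hM.1 j k) (hM.2.2 k) p
  have h2 := congrArg Real.log h0
  rw [Real.log_mul hX.ne' (Real.exp_pos _).ne', Real.log_mul hY.ne' (Real.exp_pos _).ne',
    Real.log_exp, Real.log_exp] at h2
  unfold GG
  linarith

lemma Phi_add (M : ι → ι → ℝ) (p : ι → ℝ) (c : ℝ) : Phi M (p + fun _ => c) = Phi M p := by
  simp [Phi]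

lemma Phi_exists {M : ι → ι → ℝ} (hM : Good M) (l : ι)
    (hl : ∀ i, i ≠ l → 0 < M i l ∧ 0 < M l i) : ∃ p, ∀ q, Phi M p ≤ Phi M q := by
  classical
  -- pairwise bound
  have hterm : ∀ p i j, M i j * Real.exp (p i - p j) ≤ Phi M p := fun p i j => by
    have hn : ∀ i j, 0 ≤ M i j * Real.exp (p i - p j) := fun i j =>
      mul_nonneg (hM.1 i j) (Real.exp_pos _).le
    exact (Finset.single_le_sum (f := fun j => M i j * Real.exp (p i - p j))
      (fun j _ => hn i j) (Finset.mem_univ j)).trans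
      (Finset.single_le_sum (f := fun i => ∑ j, M i j * Real.exp (p i - p j))
        (fun i _ => Finset.sum_nonneg fun j _ => hn i j) (Finset.mem_univ i))
  let C := Phi M 0
  have hb : ∀ p : ι → ℝ, p l = 0 → Phi M p ≤ C →
      ∀ i, p i ∈ Set.Icc (-(|C / M l i|)) (|C / M i l|) := by
    intro p hp hC i
    by_cases hi : i = l
    · subst hi; rw [hp]; simp
    · obtain ⟨h1, h2⟩ := hl i hi
      have a1 := (hterm p i l).trans hC
      have a2 := (hterm p l i).trans hC
      rw [hp, sub_zero, mul_comm, ← le_div_iff₀ h1] at a1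
      rw [hp, zero_sub, mul_comm, ← le_div_iff₀ h2] at a2
      have b1 := Real.add_one_le_exp (p i)
      have b2 := Real.add_one_le_exp (-(p i))
      have c1 := le_abs_self (C / M i l)
      have c2 := le_abs_self (C / M l i)
      constructor <;> linarith
  let K : Set (ι → ℝ) := Set.univ.pi fun i => Set.Icc (-(|C / M l i|)) (|C / M i l|)
  have hK : IsCompact K := isCompact_univ_pi fun i => isCompact_Icc
  have h0K : (0 : ι → ℝ) ∈ K := fun i _ => hb 0 rfl le_rfl i
  have hcont : Continuous (Phi M) := by unfold Phi; fun_prop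
  obtain ⟨p, hpK, hp⟩ := hK.exists_isMinOn ⟨0, h0K⟩ hcont.continuousOn
  refine ⟨p, fun q => ?_⟩
  rw [← Phi_add M q (-(q l))]
  by_cases hq : Phi M (q + fun _ => -(q l)) ≤ C
  · exact hp fun i _ => hb _ (by simp) hq i
  · exact (hp h0K).trans (not_le.1 hq).le

end gen

noncomputable def MM {n : ℕ} (A : Matrix (Fin n) (Fin n) ℝ) (a b : ℝ)
    (i j : Fin (n + 1)) : ℝ :=
  Fin.lastCases (motive := fun _ => ℝ)
    (Fin.lastCases (motive := fun _ => ℝ) 0 (fun _ => Real.exp a) j)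
    (fun i => Fin.lastCases (motive := fun _ => ℝ) (Real.exp (-b)) (fun j => A i j) j) i

section
variable {n : ℕ} (A : Matrix (Fin n) (Fin n) ℝ) (a b : ℝ)

lemma MM_cc (i j : Fin n) : MM A a b i.castSucc j.castSucc = A i j := by simp [MM]
lemma MM_cl (i : Fin n) : MM A a b i.castSucc (Fin.last n) = Real.exp (-b) := by simp [MM]
lemma MM_lc (j : Fin n) : MM A a b (Fin.last n) j.castSucc = Real.exp a := by simp [MM]
lemma MM_ll : MM A a b (Fin.last n) (Fin.last n) = 0 := by simp [MM]

lemma fLam_eq : fLam A a b = GG (MM A a b) := by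
  funext p i
  unfold GG
  refine Fin.lastCases ?_ (fun i => ?_) i
  · simp [fLam, Fin.sum_univ_castSucc, MM_cl, MM_lc, MM_ll, ← Real.exp_add, sub_eq_add_neg]
  · simp [fLam, Fin.sum_univ_castSucc, MM_cl, MM_lc, MM_cc, ← Real.exp_add, sub_eq_add_neg]

lemma effDual_eq (α μ : ℝ) (p : Fin (n + 1) → ℝ) : effDual A α p μ a b =
    Real.exp μ * Phi (MM A a b) p - (1 - α) * a - μ + (1 - α) * b := by
  have : Real.exp μ * Phi (MM A a b) p =
      (∑ i : Fin n, ∑ j : Fin n, A i j * Real.exp (p i.castSucc - p j.castSucc + μ))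
    + (∑ i : Fin n, Real.exp (-b - p (Fin.last n) + p i.castSucc + μ))
    + (∑ j : Fin n, Real.exp (a + p (Fin.last n) - p j.castSucc + μ)) := by
    simp only [Phi, Fin.sum_univ_castSucc, MM_cc, MM_cl, MM_lc, MM_ll, Finset.sum_add_distrib,
      mul_add, Finset.mul_sum, zero_mul, add_zero]
    rw [add_right_comm]
    congr 1
    · congr 1
      · refine Finset.sum_congr rfl fun i _ => Finset.sum_congr rfl fun j _ => ?_
        rw [Real.exp_add]; ring
      · refine Finset.sum_congr rfl fun i _ => ?_
        rw [← Real.exp_add, ← Real.exp_add]; ring_nf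
    · refine Finset.sum_congr rfl fun i _ => ?_
      rw [← Real.exp_add, ← Real.exp_add]; ring_nf
  rw [this]; rfl

variable (hA : ∀ i j, 0 ≤ A i j)

lemma MM_good (hA : ∀ i j, 0 ≤ A i j) (u : Fin n) : Good (MM A a b) := by
  refine ⟨fun i j => ?_, fun i => ?_, fun i => ?_⟩
  · refine Fin.lastCases ?_ (fun i => ?_) i <;> refine Fin.lastCases ?_ (fun j => ?_) j
    · rw [MM_ll]
    · rw [MM_lc]; positivity
    · rw [MM_cl]; positivity
    · rw [MM_cc]; exact hA i j
  · refine Fin.lastCases ⟨u.castSucc, ?_⟩ (fun i => ⟨Fin.last n, ?_⟩) i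
    · rw [MM_lc]; positivity
    · rw [MM_cl]; positivity
  · refine Fin.lastCases ⟨u.castSucc, ?_⟩ (fun i => ⟨Fin.last n, ?_⟩) i
    · rw [MM_cl]; positivity
    · rw [MM_lc]; positivity

lemma MM_prim (u v : Fin n) (huv : 0 < A u v) : Prim (MM A a b) := by
  have h1 : ∀ i : Fin n, 0 < MM A a b i.castSucc (Fin.last n) := fun i => by
    rw [MM_cl]; positivity
  have h2 : 0 < MM A a b u.castSucc v.castSucc := by rwa [MM_cc]
  intro i j
  refine Fin.lastCases ?_ (fun i => ?_) i <;> refine Fin.lastCases ?_ (fun j => ?_) j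
  · exact ⟨u.castSucc, Fin.last n, u.castSucc, .inr (h1 _), .inl (h1 _), .inr (h1 _), .inl (h1 _)⟩
  · exact ⟨u.castSucc, v.castSucc, Fin.last n, .inr (h1 _), .inl h2, .inl (h1 _), .inr (h1 _)⟩
  · exact ⟨Fin.last n, u.castSucc, v.castSucc, .inl (h1 _), .inr (h1 _), .inl h2, .inl (h1 _)⟩
  · exact ⟨Fin.last n, u.castSucc, Fin.last n, .inl (h1 _), .inr (h1 _), .inl (h1 _), .inr (h1 _)⟩

end

/-- For any fixed multipliers `(μ, a, b)`, if `A ≠ 0` then the iterates of `f^λ` converge to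
a global minimizer of `p ↦ θ(p, μ, a, b)`; the set of minimizers is nonempty and consists
exactly of the translates `p* + c𝟙` of any one minimizer `p*`. -/
theorem fLam_iteration_converges {n : ℕ} (A : Matrix (Fin n) (Fin n) ℝ)
    (hA : ∀ i j, 0 ≤ A i j) (hA0 : A ≠ 0) (α : ℝ) (hα₁ : 1 / 2 < α) (hα₂ : α < 1)
    (μ a b : ℝ) :
    ∃ pstar : Fin (n + 1) → ℝ,
      (∀ q, effDual A α pstar μ a b ≤ effDual A α q μ a b) ∧
      (∀ q : Fin (n + 1) → ℝ,
        (∀ r, effDual A α q μ a b ≤ effDual A α r μ a b) ↔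
          ∃ c : ℝ, q = pstar + fun _ => c) ∧
      (∀ p0 : Fin (n + 1) → ℝ, ∃ plim : Fin (n + 1) → ℝ,
        (∀ r, effDual A α plim μ a b ≤ effDual A α r μ a b) ∧
        Tendsto (fun k => (fLam A a b)^[k] p0) atTop (nhds plim)) := by
  obtain ⟨u, v, huv⟩ : ∃ u v, 0 < A u v := by
    by_contra hcon
    push Not at hcon
    exact hA0 (Matrix.ext fun i j => le_antisymm (hcon i j) (hA i j))
  have hM := MM_good A a b hA u
  have hP := MM_prim A a b u v huv
  have hiff : ∀ p q, effDual A α p μ a b ≤ effDual A α q μ a b ↔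
      Phi (MM A a b) p ≤ Phi (MM A a b) q := fun p q => by
    rw [effDual_eq, effDual_eq, ← mul_le_mul_iff_right₀ (b := Phi (MM A a b) p) (Real.exp_pos μ)]
    constructor <;> intro h <;> linarith
  simp only [hiff, fLam_eq]
  obtain ⟨p, hp⟩ := Phi_exists hM (Fin.last n) fun i => by
    refine Fin.lastCases (fun h => absurd rfl h) (fun i _ => ?_) i
    rw [MM_cl, MM_lc]
    exact ⟨Real.exp_pos _, Real.exp_pos _⟩
  have hfix := Phi_min_fix hM p hp
  refine ⟨p, hp, fun q => ⟨fun hq => GG_fix_unique hM hP q p (Phi_min_fix hM q hq) hfix, ?_⟩,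
    fun p0 => ?_⟩
  · rintro ⟨c, rfl⟩ r
    rw [Phi_add]; exact hp r
  · obtain ⟨c, hc⟩ := GG_conv hM hP p hfix p0
    exact ⟨_, fun r => by rw [Phi_add]; exact hp r, hc⟩
end

section
/- Suppose p* ∈ ℝⁿ satisfies F(p*) = p*. Then F is differentiable at p*, every complex eigenvalue of the Jacobian matrix ∇F(p*) is real and lies in the interval (−1, 1], and 1 is a simple eigenvalue of ∇F(p*) (with eigenvector the all-ones vector). -/
open BigOperators Matrix

/-- `σ(p) = Σ_{i,j} A_{ij} e^{p_i − p_j}`. -/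
noncomputable def sigmaFun {n : ℕ} (A : Matrix (Fin n) (Fin n) ℝ) (p : Fin n → ℝ) : ℝ :=
  ∑ i, ∑ j, A i j * Real.exp (p i - p j)

/-- The reduced effective HOTS fixed-point map `F`, with `γ = (1−α)/(2α−1)`. -/
noncomputable def effHotsMap {n : ℕ} (A : Matrix (Fin n) (Fin n) ℝ) (α : ℝ)
    (p : Fin n → ℝ) : Fin n → ℝ :=
  fun k =>
    (1 / 2) * Real.log ((∑ i, A i k * Real.exp (p i))
      + (1 - α) / (2 * α - 1) * sigmaFun A p / ∑ j, Real.exp (-(p j)))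
    - (1 / 2) * Real.log ((∑ j, A k j * Real.exp (-(p j)))
      + (1 - α) / (2 * α - 1) * sigmaFun A p / ∑ i, Real.exp (p i))

theorem dirDeriv {n : ℕ} (A : Matrix (Fin n) (Fin n) ℝ)
    (g : ℝ) (p h : Fin n → ℝ) (k : Fin n)
    (hu : (∑ i, A i k * Real.exp (p i)) + g * sigmaFun A p / ∑ j, Real.exp (-(p j)) ≠ 0)
    (hv : (∑ j, A k j * Real.exp (-(p j))) + g * sigmaFun A p / ∑ i, Real.exp (p i) ≠ 0)
    (hP : ∑ i, Real.exp (p i) ≠ 0) (hQ : ∑ i, Real.exp (-(p i)) ≠ 0) :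
    HasDerivAt (fun t : ℝ => 
      (1 / 2) * Real.log ((∑ i, A i k * Real.exp (p i + t * h i))
      + g * (∑ i, ∑ j, A i j * Real.exp ((p i + t * h i) - (p j + t * h j))) / ∑ j, Real.exp (-(p j + t * h j)))
    - (1 / 2) * Real.log ((∑ j, A k j * Real.exp (-(p j + t * h j)))
      + g * (∑ i, ∑ j, A i j * Real.exp ((p i + t * h i) - (p j + t * h j))) / ∑ i, Real.exp (p i + t * h i)))
      ((1 / 2) * (((∑ i, A i k * (Real.exp (p i) * h i)) + (g * (∑ i, ∑ j, A i j * (Real.exp (p i - p j) * (h i - h j))) * (∑ j, Real.exp (-(p j))) - g * sigmaFun A p * (∑ j, Real.exp (-(p j)) * (- h j))) / (∑ j, Real.exp (-(p j)))^2) / ((∑ i, A i k * Real.exp (p i)) + g * sigmaFun A p / ∑ j, Real.exp (-(p j))))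
      - (1 / 2) * (((∑ j, A k j * (Real.exp (-(p j)) * (-h j))) + (g * (∑ i, ∑ j, A i j * (Real.exp (p i - p j) * (h i - h j))) * (∑ j, Real.exp ((p j))) - g * sigmaFun A p * (∑ j, Real.exp ((p j)) * (h j))) / (∑ j, Real.exp ((p j)))^2) / ((∑ j, A k j * Real.exp (-(p j))) + g * sigmaFun A p / ∑ i, Real.exp (p i)))) 0 := by
  have e0 : ∀ i, HasDerivAt (fun t : ℝ => p i + t * h i) (h i) 0 := fun i => by
    simpa using ((hasDerivAt_id (0:ℝ)).mul_const (h i)).const_add (p i)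
  have e1 : ∀ i, HasDerivAt (fun t : ℝ => Real.exp (p i + t * h i)) (Real.exp (p i) * h i) 0 := fun i => by
    simpa using (e0 i).exp
  have e2 : ∀ i, HasDerivAt (fun t : ℝ => Real.exp (-(p i + t * h i))) (Real.exp (-(p i)) * (-h i)) 0 := fun i => by
    simpa using (e0 i).fun_neg.exp
  have e3 : ∀ i j, HasDerivAt (fun t : ℝ => Real.exp ((p i + t * h i) - (p j + t * h j))) (Real.exp (p i - p j) * (h i - h j)) 0 := fun i j => by
    simpa using ((e0 i).fun_sub (e0 j)).exp
  have s1 := HasDerivAt.fun_sum (u := Finset.univ) (fun i _ => e1 i)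
  have s2 := HasDerivAt.fun_sum (u := Finset.univ) (fun i _ => e2 i)
  have s3 := HasDerivAt.fun_sum (u := Finset.univ) (fun i _ => HasDerivAt.fun_sum (u := Finset.univ) (fun j _ => (e3 i j).const_mul (A i j)))
  have s4 := HasDerivAt.fun_sum (u := Finset.univ) (fun i _ => (e1 i).const_mul (A i k))
  have s5 := HasDerivAt.fun_sum (u := Finset.univ) (fun i _ => (e2 i).const_mul (A k i))
  have U := s4.fun_add ((s3.const_mul g).fun_div s2 (by simpa using hQ))
  have V := s5.fun_add ((s3.const_mul g).fun_div s1 (by simpa using hP))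
  have R := ((U.log (by simpa [sigmaFun] using hu)).const_mul (1/2)).fun_sub ((V.log (by simpa [sigmaFun] using hv)).const_mul (1/2))
  refine R.congr_deriv ?_
  simp [sigmaFun]

theorem diffAt {n : ℕ} (A : Matrix (Fin n) (Fin n) ℝ)
    (α : ℝ) (p : Fin n → ℝ) 
    (hu : ∀ k, (∑ i, A i k * Real.exp (p i)) + (1 - α) / (2 * α - 1) * sigmaFun A p / ∑ j, Real.exp (-(p j)) ≠ 0)
    (hv : ∀ k, (∑ j, A k j * Real.exp (-(p j))) + (1 - α) / (2 * α - 1) * sigmaFun A p / ∑ i, Real.exp (p i) ≠ 0)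
    (hP : ∑ i, Real.exp (p i) ≠ 0) (hQ : ∑ i, Real.exp (-(p i)) ≠ 0) :
    DifferentiableAt ℝ (effHotsMap A α) p := by
  rw [differentiableAt_pi]
  intro k
  have h1 := hu k
  have h2 := hv k
  unfold effHotsMap
  have s : DifferentiableAt ℝ (sigmaFun A) p := by
    unfold sigmaFun; fun_prop
  apply DifferentiableAt.fun_sub
  · apply DifferentiableAt.const_mul
    refine DifferentiableAt.log (f := fun p => (∑ i, A i k * Real.exp (p i)) + (1 - α) / (2 * α - 1) * sigmaFun A p / ∑ j, Real.exp (-(p j))) ?_ h1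
    apply DifferentiableAt.fun_add (by fun_prop)
    simp only [div_eq_mul_inv]
    exact (s.const_mul _).fun_mul (DifferentiableAt.fun_inv (by fun_prop) hQ)
  · apply DifferentiableAt.const_mul
    refine DifferentiableAt.log (f := fun p => (∑ j, A k j * Real.exp (-(p j))) + (1 - α) / (2 * α - 1) * sigmaFun A p / ∑ i, Real.exp (p i)) ?_ h2
    apply DifferentiableAt.fun_add (by fun_prop)
    simp only [div_eq_mul_inv]
    exact (s.const_mul _).fun_mul (DifferentiableAt.fun_inv (by fun_prop) hP)

theorem eigen_basic {n : ℕ} (d : Fin n → ℝ)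
    (S J : Matrix (Fin n) (Fin n) ℝ)
    (hJ : ∀ k l, d k * J k l = S k l)
    (w : Fin n → ℝ) (lam : ℝ) (hw : J.mulVec w = lam • w) :
    ∑ k, ∑ l, w k * S k l * w l = lam * ∑ k, d k * w k ^ 2 := by
  rw [Finset.mul_sum]
  refine Finset.sum_congr rfl fun k _ => ?_
  have := congrFun hw k
  simp only [Matrix.mulVec, dotProduct, Pi.smul_apply, smul_eq_mul] at this
  calc _ = w k * d k * ∑ l, J k l * w l := by
        rw [Finset.mul_sum]; refine Finset.sum_congr rfl fun l _ => ?_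
        rw [← hJ]; ring
    _ = _ := by rw [this]; ring

theorem linAlg {n : ℕ} (d : Fin n → ℝ) (hd : ∀ k, 0 < d k)
    (S J : Matrix (Fin n) (Fin n) ℝ) (hS : ∀ k l, S k l = S l k)
    (hJ : ∀ k l, d k * J k l = S k l)
    (one : J.mulVec (fun _ => (1 : ℝ)) = fun _ => 1) (k0 : Fin n)
    (q1 : ∀ h : Fin n → ℝ, ∑ k, ∑ l, h k * S k l * h l ≤ ∑ k, d k * h k ^ 2)
    (q1' : ∀ h : Fin n → ℝ, ∑ k, ∑ l, h k * S k l * h l = ∑ k, d k * h k ^ 2 → ∀ k l, h k = h l)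
    (q2 : ∀ h : Fin n → ℝ, h ≠ 0 → - ∑ k, d k * h k ^ 2 < ∑ k, ∑ l, h k * S k l * h l) :
    (∀ μ : ℂ, μ ∈ spectrum ℂ (J.map (Complex.ofReal)) →
          μ.im = 0 ∧ -1 < μ.re ∧ μ.re ≤ 1) ∧
        (J.map (Complex.ofReal)).charpoly.rootMultiplicity 1 = 1 := by
  classical
  let r : Fin n → ℝ := fun k => Real.sqrt (d k)
  have hr : ∀ k, 0 < r k := fun k => Real.sqrt_pos.2 (hd k)
  have hrr : ∀ k, r k * r k = d k := fun k => Real.mul_self_sqrt (hd k).le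
  let H : Matrix (Fin n) (Fin n) ℝ := Matrix.of fun k l => S k l / (r k * r l)
  have hH : H.IsHermitian := by
    ext k l
    simp [H, hS k l, mul_comm]
  have hHJ : H = Matrix.diagonal r * (J * Matrix.diagonal (fun k => (r k)⁻¹)) := by
    ext k l
    have := (hr k).ne'
    have := (hr l).ne'
    simp only [H, Matrix.of_apply, Matrix.diagonal_mul, Matrix.mul_diagonal]
    rw [← hJ, ← hrr k]
    field_simp
  have hcp : J.charpoly = H.charpoly := by
    rw [hHJ, Matrix.charpoly_mul_comm, Matrix.mul_assoc, Matrix.diagonal_mul_diagonal]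
    congr 1
    have : (fun i => (r i)⁻¹ * r i) = fun _ => 1 := by
      ext i; exact inv_mul_cancel₀ (hr i).ne'
    rw [this]; simp
  set e := hH.eigenvalues with he
  have hcpJ : (J.map Complex.ofReal).charpoly = ∏ i, (Polynomial.X - Polynomial.C ((e i : ℝ) : ℂ)) := by
    have := Matrix.charpoly_map J (Complex.ofRealHom)
    have h2 : J.map Complex.ofReal = J.map Complex.ofRealHom := rfl
    rw [h2, this, hcp, hH.charpoly_eq, Polynomial.map_prod]
    simp [he]
  -- eigenvectors
  let v : Fin n → Fin n → ℝ := fun i => (hH.eigenvectorBasis i : EuclideanSpace ℝ (Fin n))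
  have hv0 : ∀ i, v i ≠ 0 := by
    intro i hi
    have h1 := hH.eigenvectorBasis.orthonormal.1 i
    have : hH.eigenvectorBasis i = 0 := by
      ext k; exact congrFun hi k
    rw [this] at h1; simp at h1
  have hve : ∀ i, H.mulVec (v i) = e i • v i := fun i => hH.mulVec_eigenvectorBasis i
  let w : Fin n → Fin n → ℝ := fun i k => v i k / r k
  have hw0 : ∀ i, w i ≠ 0 := by
    intro i hi
    apply hv0 i
    ext k
    have := congrFun hi k
    simp only [w, Pi.zero_apply, div_eq_zero_iff] at this
    exact this.resolve_right (hr k).ne'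
  have hwe : ∀ i, J.mulVec (w i) = e i • w i := by
    intro i
    ext k
    have := congrFun (hve i) k
    simp only [Matrix.mulVec, dotProduct, Pi.smul_apply, smul_eq_mul, H, Matrix.of_apply, w] at this ⊢
    rw [← mul_div_assoc, ← this, Finset.sum_div]
    refine Finset.sum_congr rfl fun l _ => ?_
    have := (hr k).ne'
    have := (hr l).ne'
    rw [← hJ, ← hrr k]
    field_simp
  have hb := fun i => eigen_basic d S J hJ (w i) (e i) (hwe i)
  have hpos : ∀ h : Fin n → ℝ, h ≠ 0 → 0 < ∑ k, d k * h k ^ 2 := by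
    intro h hh
    obtain ⟨k, hk⟩ := Function.ne_iff.1 hh
    refine Finset.sum_pos' (fun i _ => mul_nonneg (hd i).le (sq_nonneg _)) ⟨k, Finset.mem_univ _, ?_⟩
    have : h k ≠ 0 := hk
    have := hd k
    positivity
  have hle : ∀ i, e i ≤ 1 := by
    intro i
    have := q1 (w i); rw [hb i] at this
    have := hpos _ (hw0 i)
    nlinarith
  have hlt : ∀ i, -1 < e i := by
    intro i
    have := q2 (w i) (hw0 i); rw [hb i] at this
    have := hpos _ (hw0 i)
    nlinarith
  refine ⟨?_, ?_⟩
  · intro μ hμ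
    rw [Matrix.mem_spectrum_iff_isRoot_charpoly, hcpJ, Polynomial.IsRoot, Polynomial.eval_prod,
      Finset.prod_eq_zero_iff] at hμ
    obtain ⟨i, -, hi⟩ := hμ
    simp only [Polynomial.eval_sub, Polynomial.eval_X, Polynomial.eval_C, sub_eq_zero] at hi
    subst hi
    exact ⟨Complex.ofReal_im _, by simpa using hlt i, by simpa using hle i⟩
  · have hconst : ∀ i, e i = 1 → ∀ k l, w i k = w i l := by
      intro i hi
      apply q1'
      rw [hb i, hi, one_mul]
    have huniq : ∀ i j, e i = 1 → e j = 1 → i = j := by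
      intro i j hi hj
      by_contra hij
      have ho := hH.eigenvectorBasis.orthonormal.2 hij
      have hvk : ∀ i, e i = 1 → ∀ k, v i k = w i k0 * r k := by
        intro i hi k
        rw [hconst i hi k0 k]; simp only [w]; have := (hr k).ne'; field_simp
      have hwk : ∀ i, e i = 1 → w i k0 ≠ 0 := by
        intro i hi h0
        apply hw0 i; ext k; rw [hconst i hi k k0, h0]; rfl
      have ho' : ∑ k, v j k * v i k = 0 := by
        simpa [PiLp.inner_apply, v] using ho
      have : ∑ k, v j k * v i k = w j k0 * w i k0 * ∑ k, d k := by
        rw [Finset.mul_sum]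
        refine Finset.sum_congr rfl fun k _ => ?_
        rw [hvk i hi, hvk j hj, ← hrr k]; ring
      rw [this] at ho'
      have hs : 0 < ∑ k, d k := Finset.sum_pos (fun k _ => hd k) ⟨k0, Finset.mem_univ _⟩
      exact mul_ne_zero (mul_ne_zero (hwk j hj) (hwk i hi)) hs.ne' ho'
    have hex : ∃ i, e i = 1 := by
      have : (1:ℝ) ∈ spectrum ℝ J := by
        rw [← Matrix.spectrum_toLin', ← Module.End.hasEigenvalue_iff_mem_spectrum]
        refine Module.End.hasEigenvalue_of_hasEigenvector (x := fun _ => (1:ℝ)) ⟨?_, ?_⟩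
        · rw [Module.End.mem_eigenspace_iff]; simpa using one
        · intro h; simpa using congrFun h k0
      rw [Matrix.mem_spectrum_iff_isRoot_charpoly, hcp, hH.charpoly_eq, Polynomial.IsRoot, Polynomial.eval_prod,
        Finset.prod_eq_zero_iff] at this
      obtain ⟨i, -, hi⟩ := this
      refine ⟨i, ?_⟩
      simp [sub_eq_zero] at hi
      exact hi.symm
    obtain ⟨i, hi⟩ := hex
    have hroots : (∏ i, (Polynomial.X - Polynomial.C ((e i : ℝ) : ℂ))).roots
        = Finset.univ.val.map (fun i => ((e i : ℝ) : ℂ)) := by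
      have := Polynomial.roots_multiset_prod_X_sub_C (Finset.univ.val.map (fun i => ((e i : ℝ) : ℂ)))
      rw [Multiset.map_map] at this
      exact this
    rw [← Polynomial.count_roots, hcpJ, hroots, Multiset.count_map]
    have hf : Finset.univ.filter (fun j => (1:ℂ) = ((e j : ℝ) : ℂ)) = {i} := by
      ext j
      simp only [Finset.mem_filter, Finset.mem_univ, true_and, Finset.mem_singleton]
      constructor
      · intro h
        exact huniq j i (by exact_mod_cast h.symm) hi
      · rintro rfl; rw [hi]; simp
    have := congrArg Finset.card hf
    rw [Finset.card_singleton] at this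
    rw [← this]; rfl

theorem quad {n : ℕ} (M : Matrix (Fin n) (Fin n) ℝ) (hM : ∀ i j, 0 ≤ M i j)
    (x y d : Fin n → ℝ) (hx : ∀ k, 0 < x k) (hy : ∀ k, 0 < y k) (sx : ∑ k, x k = 1) (sy : ∑ k, y k = 1)
    (g s : ℝ) (hg : 0 < g) (hs : 0 < s) (hsM : ∑ i, ∑ j, M i j = s)
    (d1 : ∀ k, d k = ∑ i, M i k + g * s * y k) (d2 : ∀ k, d k = ∑ j, M k j + g * s * x k)
    (S : Matrix (Fin n) (Fin n) ℝ)
    (hS : ∀ k l, S k l = 1/2 * (M k l + M l k + g^2 * s * (y k - x k) * (y l - x l) + g * s * (y k * y l + x k * x l))) :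
    (∀ h : Fin n → ℝ, ∑ k, ∑ l, h k * S k l * h l ≤ ∑ k, d k * h k ^ 2) ∧
    (∀ h : Fin n → ℝ, ∑ k, ∑ l, h k * S k l * h l = ∑ k, d k * h k ^ 2 → ∀ k l, h k = h l) ∧
    (∀ h : Fin n → ℝ, h ≠ 0 → - ∑ k, d k * h k ^ 2 < ∑ k, ∑ l, h k * S k l * h l) ∧
    (∀ h : Fin n → ℝ, g * s * ∑ k, (y k - x k) * h k = ∑ k, ∑ l, M k l * (h k - h l)) := by
  have hgs : 0 < g * s := mul_pos hg hs
  have Q : ∀ h : Fin n → ℝ, 2 * ∑ k, ∑ l, h k * S k l * h l = 2 * ∑ k, ∑ l, M k l * (h k * h l)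
      + g^2 * s * (∑ k, (y k - x k) * h k)^2 + g * s * ((∑ k, y k * h k)^2 + (∑ k, x k * h k)^2) := by
    intro h
    have c : ∑ k, ∑ l, M l k * (h k * h l) = ∑ k, ∑ l, M k l * (h k * h l) := by
      rw [Finset.sum_comm]
      simp only [mul_comm]
    have e : 2 * ∑ k, ∑ l, h k * S k l * h l = ∑ k, ∑ l, M k l * (h k * h l) + ∑ k, ∑ l, M l k * (h k * h l)
      + g^2 * s * (∑ k, (y k - x k) * h k)^2 + g * s * ((∑ k, y k * h k)^2 + (∑ k, x k * h k)^2) := by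
      simp only [sq (∑ k, _), Finset.sum_mul_sum]
      simp only [Finset.mul_sum, ← Finset.sum_add_distrib]
      refine Finset.sum_congr rfl fun k _ => Finset.sum_congr rfl fun l _ => ?_
      rw [hS]; ring
    rw [e, c]; ring
  have D : ∀ h : Fin n → ℝ, 2 * ∑ k, d k * h k ^ 2 = ∑ k, ∑ l, M k l * (h k ^2 + h l ^2)
      + g * s * (∑ k, y k * h k ^ 2 + ∑ k, x k * h k ^ 2) := by
    intro h
    have a1 : ∑ k, d k * h k ^ 2 = ∑ k, ∑ l, M k l * h l ^ 2 + g * s * ∑ k, y k * h k ^ 2 := by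
      rw [Finset.sum_comm, Finset.mul_sum, ← Finset.sum_add_distrib]
      refine Finset.sum_congr rfl fun k _ => ?_
      rw [← Finset.sum_mul, d1]; ring
    have a2 : ∑ k, d k * h k ^ 2 = ∑ k, ∑ l, M k l * h k ^ 2 + g * s * ∑ k, x k * h k ^ 2 := by
      rw [Finset.mul_sum, ← Finset.sum_add_distrib]
      refine Finset.sum_congr rfl fun k _ => ?_
      rw [← Finset.sum_mul, d2]; ring
    simp only [mul_add, Finset.sum_add_distrib]
    linarith
  have hflow : ∀ h : Fin n → ℝ, g * s * ∑ k, (y k - x k) * h k = ∑ k, ∑ l, M k l * (h k - h l) := by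
    intro h
    have : ∑ k, ∑ l, M k l * (h k - h l) = ∑ k, (∑ l, M k l) * h k - ∑ k, (∑ l, M l k) * h k := by
      simp only [mul_sub, Finset.sum_sub_distrib]
      congr 1
      · simp only [Finset.sum_mul]
      · rw [Finset.sum_comm]; simp only [Finset.sum_mul]
    rw [this, Finset.mul_sum, ← Finset.sum_sub_distrib]
    refine Finset.sum_congr rfl fun k _ => ?_
    linear_combination h k * (d2 k - d1 k)
  have CS : ∀ h : Fin n → ℝ, g^2 * s * (∑ k, (y k - x k) * h k)^2 ≤ ∑ k, ∑ l, M k l * (h k - h l)^2 := by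
    intro h
    set T := ∑ k, (y k - x k) * h k with hT
    have f := hflow h
    have : 0 ≤ ∑ k, ∑ l, M k l * ((h k - h l) - g * T)^2 :=
      Finset.sum_nonneg fun k _ => Finset.sum_nonneg fun l _ => mul_nonneg (hM k l) (sq_nonneg _)
    have e : ∑ k, ∑ l, M k l * ((h k - h l) - g * T)^2 = ∑ k, ∑ l, M k l * (h k - h l)^2
        - 2 * (g * T) * (∑ k, ∑ l, M k l * (h k - h l)) + (g * T)^2 * ∑ k, ∑ l, M k l := by
      simp only [Finset.mul_sum, ← Finset.sum_add_distrib, ← Finset.sum_sub_distrib]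
      refine Finset.sum_congr rfl fun k _ => Finset.sum_congr rfl fun l _ => ?_
      ring
    rw [e, ← f, hsM] at this
    nlinarith
  have V : ∀ (z h : Fin n → ℝ), ∑ k, z k = 1 →
      ∑ k, z k * h k ^ 2 - (∑ k, z k * h k)^2 = ∑ k, z k * (h k - ∑ l, z l * h l)^2 := by
    intro z h hz
    set m := ∑ l, z l * h l with hm
    have : ∑ k, z k * (h k - m)^2 = ∑ k, z k * h k ^ 2 - 2 * m * ∑ k, z k * h k + m^2 * ∑ k, z k := by
      simp only [Finset.mul_sum, ← Finset.sum_add_distrib, ← Finset.sum_sub_distrib]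
      refine Finset.sum_congr rfl fun k _ => ?_
      ring
    rw [this, hz, ← hm]; ring
  have Vn : ∀ (z h : Fin n → ℝ), (∀ k, 0 < z k) → ∀ m : ℝ, 0 ≤ ∑ k, z k * (h k - m)^2 :=
    fun z h hz m => Finset.sum_nonneg fun k _ => mul_nonneg (hz k).le (sq_nonneg _)
  have E1 : ∀ h : Fin n → ℝ, ∑ k, ∑ l, M k l * (h k - h l)^2 = ∑ k, ∑ l, M k l * (h k ^2 + h l ^2) - 2 * ∑ k, ∑ l, M k l * (h k * h l) := by
    intro h
    simp only [Finset.mul_sum, ← Finset.sum_sub_distrib]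
    refine Finset.sum_congr rfl fun k _ => Finset.sum_congr rfl fun l _ => ?_
    ring
  have E2 : ∀ h : Fin n → ℝ, ∑ k, ∑ l, M k l * (h k + h l)^2 = ∑ k, ∑ l, M k l * (h k ^2 + h l ^2) + 2 * ∑ k, ∑ l, M k l * (h k * h l) := by
    intro h
    simp only [Finset.mul_sum, ← Finset.sum_add_distrib]
    refine Finset.sum_congr rfl fun k _ => Finset.sum_congr rfl fun l _ => ?_
    ring
  have key : ∀ h : Fin n → ℝ, g * s * (∑ k, y k * (h k - ∑ l, y l * h l)^2 + ∑ k, x k * (h k - ∑ l, x l * h l)^2) ≤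
      2 * (∑ k, d k * h k ^ 2 - ∑ k, ∑ l, h k * S k l * h l) := by
    intro h
    rw [← V y h sy, ← V x h sx]
    linarith [Q h, D h, CS h, E1 h]
  refine ⟨fun h => ?_, fun h heq => ?_, fun h hh => ?_, hflow⟩
  · have := key h
    have := Vn x h hx (∑ l, x l * h l)
    have := Vn y h hy (∑ l, y l * h l)
    nlinarith
  · have k1 := key h
    have h1 := Vn x h hx (∑ l, x l * h l)
    have h2 := Vn y h hy (∑ l, y l * h l)
    rw [heq, sub_self, mul_zero] at k1
    have h3 : ∑ k, x k * (h k - ∑ l, x l * h l)^2 = 0 := by nlinarith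
    rw [Finset.sum_eq_zero_iff_of_nonneg (fun k _ => mul_nonneg (hx k).le (sq_nonneg _))] at h3
    have h4 : ∀ k, h k = ∑ l, x l * h l := by
      intro k
      have := h3 k (Finset.mem_univ _)
      rcases mul_eq_zero.1 this with h | h
      · exact absurd h (hx k).ne'
      · exact sub_eq_zero.1 (pow_eq_zero_iff (two_ne_zero) |>.1 h)
    intro k l; rw [h4 k, h4 l]
  · have p1 : 0 < ∑ k, x k * h k ^ 2 := by
      obtain ⟨k, hk⟩ := Function.ne_iff.1 hh
      refine Finset.sum_pos' (fun i _ => mul_nonneg (hx i).le (sq_nonneg _)) ⟨k, Finset.mem_univ _, ?_⟩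
      have : h k ≠ 0 := hk
      have := hx k
      positivity
    have p2 : 0 ≤ ∑ k, y k * h k ^ 2 := Finset.sum_nonneg fun i _ => mul_nonneg (hy i).le (sq_nonneg _)
    have p3 : 0 ≤ ∑ k, ∑ l, M k l * (h k + h l)^2 :=
      Finset.sum_nonneg fun k _ => Finset.sum_nonneg fun l _ => mul_nonneg (hM k l) (sq_nonneg _)
    have p4 : 0 ≤ g^2 * s * (∑ k, (y k - x k) * h k)^2 := by positivity
    have p5 : 0 ≤ g * s * ((∑ k, y k * h k)^2 + (∑ k, x k * h k)^2) := by positivity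
    have p6 : 0 < g * s * (∑ k, y k * h k ^ 2 + ∑ k, x k * h k ^ 2) := by positivity
    linarith [Q h, D h, E2 h]


/-- At a fixed point `p*` of `F`, `F` is differentiable, every complex eigenvalue of the
Jacobian `∇F(p*)` is real and lies in `(−1, 1]`, and `1` is a simple eigenvalue with
eigenvector the all-ones vector. -/
theorem effHotsMap_jacobian_spectrum {n : ℕ} (A : Matrix (Fin n) (Fin n) ℝ)
    (hA : ∀ i j, 0 ≤ A i j) (hA0 : A ≠ 0) (α : ℝ) (hα₁ : 1 / 2 < α) (hα₂ : α < 1)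
    (pstar : Fin n → ℝ) (hfix : effHotsMap A α pstar = pstar) :
    DifferentiableAt ℝ (effHotsMap A α) pstar ∧
    ∀ (f' : (Fin n → ℝ) →L[ℝ] (Fin n → ℝ)), HasFDerivAt (effHotsMap A α) f' pstar →
      ∀ J : Matrix (Fin n) (Fin n) ℝ, (∀ x, f' x = J.mulVec x) →
        (∀ μ : ℂ, μ ∈ spectrum ℂ (J.map (Complex.ofReal)) →
          μ.im = 0 ∧ -1 < μ.re ∧ μ.re ≤ 1) ∧
        (J.map (Complex.ofReal)).charpoly.rootMultiplicity 1 = 1 ∧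
        J.mulVec (fun _ => (1 : ℝ)) = fun _ => 1 := by
  obtain ⟨i0, j0, hij⟩ : ∃ i j, A i j ≠ 0 := by
    by_contra! h
    exact hA0 (by ext i j; exact h i j)
  set g := (1 - α) / (2 * α - 1) with hgdef
  have hg : 0 < g := div_pos (by linarith) (by linarith)
  set P := ∑ i, Real.exp (pstar i) with hP
  set Q := ∑ i, Real.exp (-(pstar i)) with hQ
  have hPp : 0 < P := Finset.sum_pos (fun i _ => Real.exp_pos _) ⟨i0, Finset.mem_univ _⟩
  have hQp : 0 < Q := Finset.sum_pos (fun i _ => Real.exp_pos _) ⟨i0, Finset.mem_univ _⟩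
  set s := sigmaFun A pstar with hs
  have hsp : 0 < s := by
    refine Finset.sum_pos' (fun i _ => Finset.sum_nonneg fun j _ => mul_nonneg (hA i j) (Real.exp_pos _).le)
      ⟨i0, Finset.mem_univ _, ?_⟩
    refine Finset.sum_pos' (fun j _ => mul_nonneg (hA i0 j) (Real.exp_pos _).le) ⟨j0, Finset.mem_univ _, ?_⟩
    exact mul_pos (lt_of_le_of_ne (hA _ _) hij.symm) (Real.exp_pos _)
  set u : Fin n → ℝ := fun k => (∑ i, A i k * Real.exp (pstar i)) + g * s / Q with hu
  set v : Fin n → ℝ := fun k => (∑ j, A k j * Real.exp (-(pstar j))) + g * s / P with hv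
  have hup : ∀ k, 0 < u k := fun k =>
    add_pos_of_nonneg_of_pos (Finset.sum_nonneg fun i _ => mul_nonneg (hA _ _) (Real.exp_pos _).le) (by positivity)
  have hvp : ∀ k, 0 < v k := fun k =>
    add_pos_of_nonneg_of_pos (Finset.sum_nonneg fun i _ => mul_nonneg (hA _ _) (Real.exp_pos _).le) (by positivity)
  refine ⟨diffAt A α pstar (fun k => (hup k).ne') (fun k => (hvp k).ne') hPp.ne' hQp.ne', ?_⟩
  intro f' hf' J hJ
  have hfx : ∀ k, Real.exp (-(pstar k)) * u k = Real.exp (pstar k) * v k := by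
    intro k
    have h1 : (1/2) * Real.log (u k) - (1/2) * Real.log (v k) = pstar k := congrFun hfix k
    have h2 : Real.log (u k) = pstar k + (pstar k + Real.log (v k)) := by linarith
    have h3 : u k = Real.exp (pstar k) * (Real.exp (pstar k) * v k) := by
      rw [← Real.exp_log (hup k), h2, Real.exp_add, Real.exp_add, Real.exp_log (hvp k)]
    rw [h3, ← mul_assoc, ← Real.exp_add]; simp
  let M : Matrix (Fin n) (Fin n) ℝ := Matrix.of fun i j => A i j * Real.exp (pstar i - pstar j)
  let x : Fin n → ℝ := fun k => Real.exp (pstar k) / P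
  let y : Fin n → ℝ := fun k => Real.exp (-(pstar k)) / Q
  let d : Fin n → ℝ := fun k => Real.exp (pstar k) * v k
  let S : Matrix (Fin n) (Fin n) ℝ := Matrix.of fun k l => 1/2 * (M k l + M l k + g^2 * s * (y k - x k) * (y l - x l) + g * s * (y k * y l + x k * x l))
  have hd : ∀ k, 0 < d k := fun k => mul_pos (Real.exp_pos _) (hvp k)
  have sx : ∑ k, x k = 1 := by
    simp only [x]; rw [← Finset.sum_div]; exact div_self hPp.ne'
  have sy : ∑ k, y k = 1 := by
    simp only [y]; rw [← Finset.sum_div]; exact div_self hQp.ne'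
  have d1 : ∀ k, d k = ∑ i, M i k + g * s * y k := by
    intro k
    simp only [d, M, y, Matrix.of_apply]
    rw [← hfx k]
    simp only [hu, mul_add, Finset.mul_sum, sub_eq_add_neg, Real.exp_add]
    congr 1
    · exact Finset.sum_congr rfl fun i _ => by ring
    · ring
  have d2 : ∀ k, d k = ∑ j, M k j + g * s * x k := by
    intro k
    simp only [d, M, x, Matrix.of_apply]
    simp only [hv, mul_add, Finset.mul_sum, sub_eq_add_neg, Real.exp_add]
    congr 1
    · exact Finset.sum_congr rfl fun i _ => by ring
    · ring
  obtain ⟨q1, q1', q2, hflow⟩ := quad M (fun i j => mul_nonneg (hA i j) (Real.exp_pos _).le) x y d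
    (fun k => div_pos (Real.exp_pos _) hPp) (fun k => div_pos (Real.exp_pos _) hQp) sx sy g s hg hsp rfl d1 d2 S
    (fun k l => rfl)
  have main : ∀ (h : Fin n → ℝ) k, d k * (J.mulVec h) k = ∑ l, S k l * h l := by
    intro h k
    have D1 := dirDeriv A g pstar h k (hup k).ne' (hvp k).ne' hPp.ne' hQp.ne'
    have L : HasDerivAt (fun t : ℝ => pstar + t • h) h 0 := by
      simpa using ((hasDerivAt_id (0:ℝ)).smul_const h).const_add pstar
    have hf0 : HasFDerivAt (effHotsMap A α) f' (pstar + (0:ℝ) • h) := by simpa using hf'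
    have D2 := hasDerivAt_pi.1 (hf0.comp_hasDerivAt (0:ℝ) L) k
    have D3 := D2.unique D1
    rw [hJ] at D3
    rw [D3]
    have hσ : ∑ i, ∑ j, A i j * (Real.exp (pstar i - pstar j) * (h i - h j)) = g * s * ∑ k, (y k - x k) * h k := by
      rw [hflow]
      exact Finset.sum_congr rfl fun i _ => Finset.sum_congr rfl fun j _ => by
        simp only [M, Matrix.of_apply]; ring
    rw [hσ]
    set T := ∑ k, (y k - x k) * h k with hT
    have t1 : ∑ j, Real.exp (-(pstar j)) * (- h j) = - (Q * ∑ l, y l * h l) := by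
      rw [Finset.mul_sum, ← Finset.sum_neg_distrib]
      refine Finset.sum_congr rfl fun l _ => ?_
      simp only [y]; field_simp
    have t2 : ∑ j, Real.exp ((pstar j)) * (h j) = P * ∑ l, x l * h l := by
      rw [Finset.mul_sum]
      refine Finset.sum_congr rfl fun l _ => ?_
      simp only [x]; field_simp
    have t3 : Real.exp (-(pstar k)) * ∑ i, A i k * (Real.exp (pstar i) * h i) = ∑ l, M l k * h l := by
      rw [Finset.mul_sum]
      refine Finset.sum_congr rfl fun l _ => ?_
      simp only [M, Matrix.of_apply, sub_eq_add_neg, Real.exp_add]; ring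
    have t4 : Real.exp (pstar k) * ∑ j, A k j * (Real.exp (-(pstar j)) * (-h j)) = - ∑ l, M k l * h l := by
      rw [Finset.mul_sum, ← Finset.sum_neg_distrib]
      refine Finset.sum_congr rfl fun l _ => ?_
      simp only [M, Matrix.of_apply, sub_eq_add_neg, Real.exp_add]; ring
    have t5 : ∑ l, S k l * h l = 1/2 * (∑ l, M k l * h l + ∑ l, M l k * h l + g^2 * s * (y k - x k) * T
        + g * s * (y k * ∑ l, y l * h l + x k * ∑ l, x l * h l)) := by
      rw [hT]
      simp only [Finset.mul_sum, ← Finset.sum_add_distrib]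
      refine Finset.sum_congr rfl fun l _ => ?_
      simp only [S, Matrix.of_apply]; ring
    rw [t1, t2, t5, ← t3]
    have t4' : ∑ l, M k l * h l = - (Real.exp (pstar k) * ∑ j, A k j * (Real.exp (-(pstar j)) * (-h j))) := by
      rw [t4]; ring
    rw [t4']
    generalize (∑ j, A k j * (Real.exp (-(pstar j)) * (-h j))) = a
    generalize (∑ i, A i k * (Real.exp (pstar i) * h i)) = b
    generalize ∑ l, y l * h l = Y
    generalize ∑ l, x l * h l = X
    have hdu : d k = Real.exp (-(pstar k)) * u k := (hfx k).symm
    have hdv : d k = Real.exp (pstar k) * v k := rfl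
    change d k * (1 / 2 * ((b + (g * (g * s * T) * Q - g * s * -(Q * Y)) / Q ^ 2) / u k) -
      1 / 2 * ((a + (g * (g * s * T) * P - g * s * (P * X)) / P ^ 2) / v k)) = _
    have := (hup k).ne'
    have := (hvp k).ne'
    rw [mul_sub]
    nth_rewrite 1 [hdu]
    rw [hdv]
    simp only [x, y]
    field_simp
    ring
  have ent : ∀ k l, d k * J k l = S k l := by
    intro k l
    have := main (Pi.single l 1) k
    simpa [Matrix.mulVec_single, Pi.single_apply] using this
  have one : J.mulVec (fun _ => (1 : ℝ)) = fun _ => 1 := by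
    ext k
    have h1 := main (fun _ => 1) k
    have e : ∑ l, S k l * 1 = 1/2 * (∑ l, M k l + ∑ l, M l k + g^2 * s * (y k - x k) * (∑ l, y l - ∑ l, x l)
        + g * s * (y k * ∑ l, y l + x k * ∑ l, x l)) := by
      simp only [Finset.mul_sum, ← Finset.sum_add_distrib, ← Finset.sum_sub_distrib]
      refine Finset.sum_congr rfl fun l _ => ?_
      simp only [S, Matrix.of_apply]; ring
    rw [e, sx, sy] at h1
    have h2 : d k * (J.mulVec (fun _ => (1 : ℝ))) k = d k * 1 := by
      rw [h1]; linarith [d1 k, d2 k]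
    exact mul_left_cancel₀ (hd k).ne' h2
  obtain ⟨r1, r2⟩ := linAlg d hd S J (fun k l => by simp only [S, Matrix.of_apply]; ring) ent one i0 q1 q1' q2
  exact ⟨r1, r2, one⟩
end
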